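/- arXiv:1308.3181 — 5 statements merged into one kernel-verified Lean document; each statement's English description precedes it below -/
import Mathlib

section
/- Every Busemann surface is L1-embeddable: if (S,d) is a Busemann space whose underlying topological space is homeomorphic to ℝ², then there exists a measure space (Ω,𝒜,μ) and a map φ : S → L¹(Ω,𝒜,μ) such that ‖φ(x) − φ(y)‖₁ = d(x,y) for all x,y ∈ S. -/
open Metric Set MeasureTheory

/-- `γ` is a geodesic on the interval `[a, b]`. -/
def IsGeodesicOn {S : Type*} [MetricSpace S] (γ : ℝ → S) (a b : ℝ) : Prop :=
  ∀ s ∈ Set.Icc a b, ∀ t ∈ Set.Icc a b, dist (γ s) (γ t) = |s - t|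

/-- `γ` is a geodesic from `x` to `y`. -/
def IsGeodesicFromTo {S : Type*} [MetricSpace S] (γ : ℝ → S) (x y : S) : Prop :=
  IsGeodesicOn γ 0 (dist x y) ∧ γ 0 = x ∧ γ (dist x y) = y

/-- A geodesic metric space: every pair of points is joined by a geodesic. -/
def IsGeodesicMetricSpace (S : Type*) [MetricSpace S] : Prop :=
  ∀ x y : S, ∃ γ : ℝ → S, IsGeodesicFromTo γ x y

/-- A Busemann space: a geodesic metric space in which the distance function between
any two geodesics is convex. -/
def IsBusemannSpace (S : Type*) [MetricSpace S] : Prop :=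
  IsGeodesicMetricSpace S ∧
    ∀ (γ γ' : ℝ → S) (a b a' b' : ℝ), a ≤ b → a' ≤ b' →
      IsGeodesicOn γ a b → IsGeodesicOn γ' a' b' →
      ConvexOn ℝ (Set.Icc (0 : ℝ) 1)
        (fun t => dist (γ ((1 - t) * a + t * b)) (γ' ((1 - t) * a' + t * b')))

/-- A Busemann surface: a Busemann space homeomorphic to the plane `ℝ²`. -/
def IsBusemannSurface (S : Type*) [MetricSpace S] : Prop :=
  IsBusemannSpace S ∧ Nonempty (S ≃ₜ (ℝ × ℝ))

/-- `G` is the image of a geodesic from `x` to `y`. -/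
def IsGeodesicSegment {S : Type*} [MetricSpace S] (x y : S) (G : Set S) : Prop :=
  ∃ γ : ℝ → S, IsGeodesicFromTo γ x y ∧ G = γ '' Set.Icc 0 (dist x y)

/-- Convexity of a set with respect to a geodesic-segment assignment `seg`. -/
def SegConvex {S : Type*} (seg : S → S → Set S) (R : Set S) : Prop :=
  ∀ p ∈ R, ∀ q ∈ R, seg p q ⊆ R

/-- The convex hull: the smallest `seg`-convex set containing `Q`. -/
def segConvexHull {S : Type*} (seg : S → S → Set S) (Q : Set S) : Set S :=
  ⋂₀ {R : Set S | SegConvex seg R ∧ Q ⊆ R}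

/-- A line of `S`: the image of an isometric embedding of `ℝ` into `S`. -/
def IsLineSet {S : Type*} [MetricSpace S] (L : Set S) : Prop :=
  ∃ ℓ : ℝ → S, Isometry ℓ ∧ L = Set.range ℓ

/-- An open halfplane determined by a line `L`: a connected component of `S \ L`. -/
def IsOpenHalfplane {S : Type*} [MetricSpace S] (L H : Set S) : Prop :=
  ∃ x, x ∉ L ∧ H = connectedComponentIn Lᶜ x

/-- A closed halfplane determined by a line `L`: an open halfplane together with `L`. -/
def IsClosedHalfplane {S : Type*} [MetricSpace S] (L H : Set S) : Prop :=
  ∃ H', IsOpenHalfplane L H' ∧ H = H' ∪ L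

/-- `X` and `Y` are line-separable: they lie in different open halfplanes of some line. -/
def LineSeparable {S : Type*} [MetricSpace S] (X Y : Set S) : Prop :=
  ∃ L H₁ H₂ : Set S, IsLineSet L ∧ IsOpenHalfplane L H₁ ∧ IsOpenHalfplane L H₂ ∧
    H₁ ≠ H₂ ∧ X ⊆ H₁ ∧ Y ⊆ H₂

/-- `X` and `Y` are weakly line-separable: they lie in different closed halfplanes of
some line. -/
def WeaklyLineSeparable {S : Type*} [MetricSpace S] (X Y : Set S) : Prop :=
  ∃ L H₁ H₂ : Set S, IsLineSet L ∧ IsClosedHalfplane L H₁ ∧ IsClosedHalfplane L H₂ ∧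
    H₁ ≠ H₂ ∧ X ⊆ H₁ ∧ Y ⊆ H₂

/-- `Q` is in general position: no three distinct points of `Q` lie on a common line. -/
def InGeneralPosition {S : Type*} [MetricSpace S] (Q : Set S) : Prop :=
  ∀ x ∈ Q, ∀ y ∈ Q, ∀ z ∈ Q, x ≠ y → y ≠ z → x ≠ z →
    ∀ L : Set S, IsLineSet L → ¬(x ∈ L ∧ y ∈ L ∧ z ∈ L)

/-- `L` is a tangent line of the set `K`. -/
def IsTangentLine {S : Type*} [MetricSpace S] (L K : Set S) : Prop :=
  IsLineSet L ∧ (K ∩ L).Nonempty ∧ ∃ H, IsClosedHalfplane L H ∧ K ⊆ H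

/-- `L` is an inner bitangent of `K'` and `K''`. -/
def IsInnerBitangent {S : Type*} [MetricSpace S] (L K' K'' : Set S) : Prop :=
  IsTangentLine L K' ∧ IsTangentLine L K'' ∧
    ∃ H₁ H₂, IsClosedHalfplane L H₁ ∧ IsClosedHalfplane L H₂ ∧ H₁ ≠ H₂ ∧
      K' ⊆ H₁ ∧ K'' ⊆ H₂


lemma aux_exists_log (F : ℝ × ℝ → ℂ) (hF : Continuous F) (h0 : ∀ p, F p ≠ 0) :
    ∃ g : ℝ × ℝ → ℂ, Continuous g ∧ ∀ p, Complex.exp (g p) = F p := by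
  obtain ⟨G, ⟨-, hG⟩, -⟩ := Complex.isCoveringMapOn_exp.existsUnique_continuousMap_lifts
    (⟨F, hF⟩ : C(ℝ × ℝ, ℂ)) (a₀ := (0, 0)) (e₀ := Complex.log (F (0, 0)))
    (Complex.exp_log (h0 _)) (fun a => h0 a)
  exact ⟨G, G.continuous, fun p => congrFun hG p⟩

lemma aux_exp_const (k : ℝ → ℂ) (hk : Continuous k) (c : ℂ)
    (h : ∀ u, Complex.exp (k u) = c) (u v : ℝ) : k u = k v := by
  have hc : c ≠ 0 := by rw [← h 0]; exact Complex.exp_ne_zero _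
  obtain ⟨G, -, hG⟩ := Complex.isCoveringMapOn_exp.existsUnique_continuousMap_lifts
    (ContinuousMap.const ℝ c) (a₀ := u) (e₀ := k u) (h u) (fun a => hc)
  have h1 := hG ⟨k, hk⟩ ⟨rfl, by ext x; simp [h]⟩
  have h2 := hG (ContinuousMap.const ℝ (k u)) ⟨rfl, by ext x; simp [h]⟩
  have := congrArg (fun f : C(ℝ, ℂ) => f v) (h1.trans h2.symm)
  simpa using this.symm

lemma aux_edge (g G : ℝ → ℂ) (hg : Continuous g) (hG : Continuous G) (c : ℂ)
    (h : ∀ u, Complex.exp (g u) = c * G u) (hre : ∀ u, 0 < (G u).re) :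
    (g 1 - g 0).im = (G 1).arg - (G 0).arg := by
  have hk : Continuous fun u => g u - Complex.log (G u) :=
    hg.sub (hG.clog fun u => Or.inl (hre u))
  have := aux_exp_const _ hk c (fun u => by
    have h0 : G u ≠ 0 := fun h => by have := hre u; simp [h] at this
    rw [Complex.exp_sub, h, Complex.exp_log h0]; field_simp) 1 0
  have h2 : g 1 - g 0 = Complex.log (G 1) - Complex.log (G 0) := by linear_combination this
  rw [h2]; simp [Complex.log_im]

lemma aux_arg (δ : ℝ) (h0 : 0 < δ) (h1 : δ < 2 * Real.pi) :
    (1 - Complex.exp (δ * Complex.I)).arg = (δ - Real.pi) / 2 := by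
  have hs : 0 < Real.sin (δ / 2) := Real.sin_pos_of_pos_of_lt_pi (by linarith) (by linarith)
  have : 1 - Complex.exp (δ * Complex.I) = ((2 * Real.sin (δ / 2) : ℝ) : ℂ) *
      (Complex.cos (((δ - Real.pi) / 2 : ℝ)) + Complex.sin (((δ - Real.pi) / 2 : ℝ)) * Complex.I) := by
    have e1 : (δ - Real.pi) / 2 = δ / 2 - Real.pi / 2 := by ring
    rw [e1, ← Complex.ofReal_cos, ← Complex.ofReal_sin, Real.cos_sub_pi_div_two,
      Real.sin_sub_pi_div_two]
    have e2 : (δ : ℂ) = ((2 * (δ / 2) : ℝ) : ℂ) := by push_cast; ring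
    rw [e2, Complex.exp_mul_I, ← Complex.ofReal_cos, ← Complex.ofReal_sin, Real.cos_two_mul,
      Real.sin_two_mul]
    have := Real.sin_sq_add_cos_sq (δ / 2)
    generalize Real.sin (δ / 2) = σ at *
    generalize Real.cos (δ / 2) = κ at *
    apply Complex.ext
    · simp [-Complex.ofReal_pow]; nlinarith
    · simp [-Complex.ofReal_pow]
  rw [this, Complex.arg_mul_cos_add_sin_mul_I (by linarith)]
  constructor <;> linarith [Real.pi_pos]

lemma aux_arg' (δ : ℝ) (h0 : δ < 0) (h1 : -(2 * Real.pi) < δ) :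
    (1 - Complex.exp (δ * Complex.I)).arg = (δ + Real.pi) / 2 := by
  have := aux_arg (δ + 2 * Real.pi) (by linarith) (by linarith)
  have e : Complex.exp (((δ + 2 * Real.pi : ℝ) : ℂ) * Complex.I) = Complex.exp (δ * Complex.I) := by
    push_cast
    rw [add_mul, Complex.exp_periodic]
  rw [e] at this
  rw [this]; ring

noncomputable def auxPt (θ : ℝ) : ℂ := Complex.exp (θ * Complex.I)

lemma auxPt_norm (θ : ℝ) : ‖auxPt θ‖ = 1 := Complex.norm_exp_ofReal_mul_I θ

lemma aux_re_pos (z w : ℂ) (hz : ‖z‖ ≤ 1) (hw : ‖w‖ = 1) (h : z ≠ w) : 0 < (1 - z / w).re := by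
  have hw0 : w ≠ 0 := by rintro rfl; simp at hw
  have h1 : ‖z / w‖ ≤ 1 := by rw [norm_div, hw]; simpa
  have h2 : z / w ≠ 1 := fun h' => h (by field_simp at h'; exact h')
  have h3 : (z / w).re ≤ 1 := (Complex.re_le_norm _).trans h1
  rcases h3.lt_or_eq with h4 | h4
  · simp; simpa using h4
  · exfalso; apply h2
    have h5 : (z / w).re ^ 2 + (z / w).im ^ 2 ≤ 1 := by
      have := Complex.sq_norm (z / w)
      rw [Complex.normSq_apply] at this
      nlinarith [norm_nonneg (z / w)]
    apply Complex.ext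
    · simpa using h4
    · rw [h4] at h5
      have : (z / w).im ^ 2 = 0 := le_antisymm (by linarith) (sq_nonneg _)
      simpa using this

lemma auxPt_div (a b : ℝ) : auxPt a / auxPt b = Complex.exp (((a - b : ℝ) : ℂ) * Complex.I) := by
  rw [auxPt, auxPt, ← Complex.exp_sub]; congr 1; push_cast; ring

lemma aux_cross_strict (P Q : ℝ → ℂ) (hP : Continuous P) (hQ : Continuous Q)
    (hP1 : ∀ u, ‖P u‖ ≤ 1) (hQ1 : ∀ u, ‖Q u‖ ≤ 1) (a s t b : ℝ) (has : a < s) (hst : s < t)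
    (htb : t < b) (hba : b < a + 2 * Real.pi)
    (P0 : P 0 = auxPt a) (P1 : P 1 = auxPt t) (Q0 : Q 0 = auxPt s) (Q1 : Q 1 = auxPt b) :
    ∃ u v, P u = Q v := by
  by_contra! hne
  obtain ⟨g, hg, hgF⟩ := aux_exists_log (fun p => P p.1 - Q p.2) (by fun_prop)
    (fun p => sub_ne_zero.2 (hne _ _))
  have n0 : ∀ θ, auxPt θ ≠ 0 := fun θ => Complex.exp_ne_zero _
  have E1 := aux_edge (fun u => g (u, 0)) (fun u => 1 - P u / auxPt s) (by fun_prop)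
    (by fun_prop) (-auxPt s) (fun u => by rw [hgF]; simp only [Q0]; field_simp [n0 s]; ring)
    (fun u => aux_re_pos _ _ (hP1 u) (auxPt_norm _) (Q0 ▸ hne u 0))
  have E2 := aux_edge (fun u => g (u, 1)) (fun u => 1 - P u / auxPt b) (by fun_prop)
    (by fun_prop) (-auxPt b) (fun u => by rw [hgF]; simp only [Q1]; field_simp [n0 b]; ring)
    (fun u => aux_re_pos _ _ (hP1 u) (auxPt_norm _) (Q1 ▸ hne u 1))
  have E3 := aux_edge (fun u => g (0, u)) (fun u => 1 - Q u / auxPt a) (by fun_prop)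
    (by fun_prop) (auxPt a) (fun u => by rw [hgF]; simp only [P0]; field_simp [n0 a])
    (fun u => aux_re_pos _ _ (hQ1 u) (auxPt_norm _) (P0 ▸ (hne 0 u).symm))
  have E4 := aux_edge (fun u => g (1, u)) (fun u => 1 - Q u / auxPt t) (by fun_prop)
    (by fun_prop) (auxPt t) (fun u => by rw [hgF]; simp only [P1]; field_simp [n0 t])
    (fun u => aux_re_pos _ _ (hQ1 u) (auxPt_norm _) (P1 ▸ (hne 1 u).symm))
  simp only [P0, P1, Q0, Q1, auxPt_div, Complex.sub_im] at E1 E2 E3 E4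
  rw [aux_arg (t - s) (by linarith) (by linarith), aux_arg' (a - s) (by linarith) (by linarith)] at E1
  rw [aux_arg' (t - b) (by linarith) (by linarith), aux_arg' (a - b) (by linarith) (by linarith)] at E2
  rw [aux_arg (b - a) (by linarith) (by linarith), aux_arg (s - a) (by linarith) (by linarith)] at E3
  rw [aux_arg (b - t) (by linarith) (by linarith), aux_arg' (s - t) (by linarith) (by linarith)] at E4
  linarith [Real.pi_pos]

lemma aux_cross (A B : Set ℂ) (hA : A ⊆ closedBall 0 1) (hB : B ⊆ closedBall 0 1)
    (a s t b : ℝ) (has : a ≤ s) (hst : s ≤ t) (htb : t ≤ b) (hba : b ≤ a + 2 * Real.pi)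
    (h1 : JoinedIn A (auxPt a) (auxPt t)) (h2 : JoinedIn B (auxPt s) (auxPt b)) :
    ∃ w, w ∈ A ∧ w ∈ B := by
  rcases has.eq_or_lt with rfl | has
  · exact ⟨_, h1.source_mem, h2.source_mem⟩
  rcases hst.eq_or_lt with rfl | hst
  · exact ⟨_, h1.target_mem, h2.source_mem⟩
  rcases htb.eq_or_lt with rfl | htb
  · exact ⟨_, h1.target_mem, h2.target_mem⟩
  rcases hba.eq_or_lt with rfl | hba
  · refine ⟨_, h1.source_mem, ?_⟩
    have : auxPt a = auxPt (a + 2 * Real.pi) := by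
      simp only [auxPt]; push_cast; rw [add_mul, Complex.exp_periodic]
    rw [this]; exact h2.target_mem
  obtain ⟨p, hp⟩ := h1
  obtain ⟨q, hq⟩ := h2
  obtain ⟨u, v, huv⟩ := aux_cross_strict p.extend q.extend p.continuous_extend q.continuous_extend
    (fun u => mem_closedBall_zero_iff.1 (hA (hp (projIcc 0 1 zero_le_one u))))
    (fun u => mem_closedBall_zero_iff.1 (hB (hq (projIcc 0 1 zero_le_one u)))) a s t b has hst htb hba
    (by simp) (by simp) (by simp) (by simp)
  refine ⟨p.extend u, hp (projIcc 0 1 zero_le_one u), ?_⟩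
  rw [huv]; exact hq (projIcc 0 1 zero_le_one v)

/-- The punctured plane is not contractible. -/
lemma aux_not_contract (F : ℝ × ℝ → ℂ) (hF : Continuous F) (h0 : ∀ p, F p ≠ 0)
    (c : ℂ) (hc : ∀ u, F (u, 0) = c) (hper : ∀ v, F (0, v) = F (1, v))
    (h1 : ∀ u, F (u, 1) = auxPt (2 * Real.pi * u)) : False := by
  obtain ⟨g, hg, hgF⟩ := aux_exists_log F hF h0
  have A := aux_exp_const (fun u => g (u, 0)) (by fun_prop) c (fun u => by rw [hgF, hc]) 0 1
  have B := aux_exp_const (fun v => g (1, v) - g (0, v)) (by fun_prop) 1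
    (fun v => by rw [Complex.exp_sub, hgF, hgF, hper, div_self (h0 _)]) 0 1
  have C := aux_exp_const (fun u => g (u, 1) - 2 * Real.pi * u * Complex.I) (by fun_prop) 1
    (fun u => by
      rw [Complex.exp_sub, hgF, h1, auxPt]; push_cast; exact div_self (Complex.exp_ne_zero _)) 0 1
  beta_reduce at A B C
  rw [A] at B
  have : (2 * Real.pi * Complex.I : ℂ) = 0 := by
    push_cast at C
    linear_combination C - B
  simp [Real.pi_ne_zero] at this

section AuxBusemann

variable {S : Type} [MetricSpace S]

lemma auxConv {f : ℝ → ℝ} (h : ConvexOn ℝ (Icc (0:ℝ) 1) f) ⦃x : ℝ⦄ (hx : x ∈ Icc (0:ℝ) 1)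
    ⦃y : ℝ⦄ (hy : y ∈ Icc (0:ℝ) 1) ⦃a b : ℝ⦄ (ha : 0 ≤ a) (hb : 0 ≤ b) (hab : a + b = 1) :
    f (a * x + b * y) ≤ a * f x + b * f y := h.2 hx hy ha hb hab

lemma aux_geod_unique (hB : IsBusemannSpace S) (γ γ' : ℝ → S) (D : ℝ) (hD : 0 ≤ D)
    (h : IsGeodesicOn γ 0 D) (h' : IsGeodesicOn γ' 0 D) (h0 : γ 0 = γ' 0) (h1 : γ D = γ' D)
    (r : ℝ) (hr : r ∈ Icc 0 D) : γ r = γ' r := by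
  rcases hD.eq_or_lt with rfl | hD
  · have : r = 0 := le_antisymm hr.2 hr.1
    rw [this, h0]
  have hc := hB.2 γ γ' 0 D 0 D hD.le hD.le h h'
  have := auxConv hc (left_mem_Icc.2 zero_le_one) (right_mem_Icc.2 zero_le_one) (a := 1 - r / D) (b := r / D)
    (by rw [sub_nonneg, div_le_one hD]; exact hr.2) (div_nonneg hr.1 hD.le) (by ring)
  have e : r / D * D = r := by field_simp
  simp only [mul_zero, mul_one, zero_add, sub_zero, one_mul, zero_mul, sub_self, h0, h1,
    dist_self, e, add_zero] at this
  exact dist_le_zero.1 this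

lemma aux_concat (hB : IsBusemannSpace S) (p z w : S) (h : dist p z + dist z w = dist p w) :
    ∃ σ : ℝ → S, IsGeodesicFromTo σ p w ∧ σ (dist p z) = z := by
  obtain ⟨γ, hγ, γ0, γ1⟩ := hB.1 p z
  obtain ⟨η, hη, η0, η1⟩ := hB.1 z w
  set D := dist p z with hD
  have hD0 : 0 ≤ D := dist_nonneg
  have hE0 : 0 ≤ dist z w := dist_nonneg
  let σ : ℝ → S := fun r => if r ≤ D then γ r else η (r - D)
  have σ1 : ∀ r, r ≤ D → σ r = γ r := fun r hr => if_pos hr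
  have σ2 : ∀ r, D ≤ r → σ r = η (r - D) := fun r hr => by
    rcases hr.eq_or_lt with rfl | hr
    · rw [σ1 _ le_rfl, γ1, sub_self, η0]
    · exact if_neg (not_le.2 hr)
  have key : ∀ s ∈ Icc 0 (dist p w), ∀ t ∈ Icc 0 (dist p w), s ≤ t →
      dist (σ s) (σ t) = t - s := by
    intro s hs t ht hst
    rcases le_total t D with htD | htD
    · rw [σ1 _ htD, σ1 _ (hst.trans htD), hγ s ⟨hs.1, hst.trans htD⟩ t ⟨ht.1, htD⟩, abs_sub_comm,
        abs_of_nonneg (by linarith)]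
    rcases le_total s D with hsD | hsD
    · rw [σ1 _ hsD, σ2 _ htD]
      have a1 := hγ s ⟨hs.1, hsD⟩ D ⟨hD0, le_rfl⟩
      have a2 := hη 0 ⟨le_rfl, hE0⟩ (t - D) ⟨by linarith, by linarith [ht.2]⟩
      have a3 := hγ 0 ⟨le_rfl, hD0⟩ s ⟨hs.1, hsD⟩
      have a4 := hη (t - D) ⟨by linarith, by linarith [ht.2]⟩ (dist z w) ⟨hE0, le_rfl⟩
      rw [γ1, abs_sub_comm, abs_of_nonneg (by linarith)] at a1
      rw [η0, abs_sub_comm, abs_of_nonneg (by linarith)] at a2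
      rw [γ0, abs_sub_comm, abs_of_nonneg (by linarith [hs.1])] at a3
      rw [η1, abs_sub_comm, abs_of_nonneg (by linarith [ht.2])] at a4
      have t1 := dist_triangle (γ s) z (η (t - D))
      have t2 := dist_triangle4 p (γ s) (η (t - D)) w
      linarith
    · rw [σ2 _ htD, σ2 _ hsD, hη _ ⟨by linarith, by linarith [hs.2]⟩ _
        ⟨by linarith, by linarith [ht.2]⟩, abs_sub_comm, abs_of_nonneg (by linarith)]
      ring
  refine ⟨σ, ⟨fun s hs t ht => ?_, ?_, ?_⟩, ?_⟩
  · rcases le_total s t with hst | hst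
    · rw [key s hs t ht hst, abs_sub_comm, abs_of_nonneg (by linarith)]
    · rw [dist_comm, key t ht s hs hst, abs_of_nonneg (by linarith)]
  · rw [σ1 _ hD0, γ0]
  · rw [σ2 _ (by linarith), ← h, add_sub_cancel_left, η1]
  · rw [σ1 _ le_rfl, γ1]

/-- metric interval -/
def auxSeg (a b : S) : Set S := {z | dist a z + dist z b = dist a b}

lemma auxSeg_symm (a b : S) : auxSeg a b = auxSeg b a := by
  ext z; simp only [auxSeg, mem_ofPred_eq, dist_comm b, dist_comm _ a]; rw [add_comm]

lemma auxSeg_closed (a b : S) : IsClosed (auxSeg a b) :=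
  isClosed_eq (by fun_prop) (by fun_prop)

lemma auxSeg_left (a b : S) : a ∈ auxSeg a b := by simp [auxSeg]
lemma auxSeg_right (a b : S) : b ∈ auxSeg a b := by simp [auxSeg]

lemma aux_geod_mem_seg {γ : ℝ → S} {a b : S} (h : IsGeodesicFromTo γ a b) {r : ℝ}
    (hr : r ∈ Icc 0 (dist a b)) : γ r ∈ auxSeg a b ∧ dist a (γ r) = r := by
  obtain ⟨h, h0, h1⟩ := h
  have a1 := h 0 ⟨le_rfl, dist_nonneg⟩ r hr
  have a2 := h r hr (dist a b) ⟨dist_nonneg, le_rfl⟩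
  rw [h0, abs_sub_comm, sub_zero, abs_of_nonneg hr.1] at a1
  rw [h1, abs_sub_comm, abs_of_nonneg (by linarith [hr.2])] at a2
  refine ⟨?_, a1⟩
  simp only [auxSeg, mem_ofPred_eq]; linarith

lemma aux_seg_le {a b z : S} (hz : z ∈ auxSeg a b) : dist a z ∈ Icc 0 (dist a b) := by
  simp only [auxSeg, mem_ofPred_eq] at hz
  exact ⟨dist_nonneg, by linarith [dist_nonneg (x := z) (y := b)]⟩

lemma aux_seg_eq (hB : IsBusemannSpace S) {γ : ℝ → S} {a b z : S} (h : IsGeodesicFromTo γ a b)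
    (hz : z ∈ auxSeg a b) : γ (dist a z) = z := by
  obtain ⟨σ, ⟨hσ, σ0, σ1⟩, hσz⟩ := aux_concat hB a z b hz
  rw [← hσz]
  obtain ⟨h, h0, h1⟩ := h
  have := aux_geod_unique hB γ σ (dist a b) dist_nonneg h hσ (h0.trans σ0.symm) (h1.trans σ1.symm)
    (dist a z) (aux_seg_le hz)
  rw [hσz]; rw [this, hσz]

lemma aux_seg_dist (hB : IsBusemannSpace S) {a b z z' : S} (hz : z ∈ auxSeg a b)
    (hz' : z' ∈ auxSeg a b) : dist z z' = |dist a z - dist a z'| := by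
  obtain ⟨γ, h⟩ := hB.1 a b
  have := h.1 _ (aux_seg_le hz) _ (aux_seg_le hz')
  rwa [aux_seg_eq hB h hz, aux_seg_eq hB h hz'] at this

lemma aux_seg_split (hB : IsBusemannSpace S) {a b x z : S} (hx : x ∈ auxSeg a b)
    (hz : z ∈ auxSeg a b) : z ∈ auxSeg a x ∨ z ∈ auxSeg x b := by
  have h := aux_seg_dist hB hz hx
  have h' := aux_seg_dist hB hx hz
  simp only [auxSeg, mem_ofPred_eq] at *
  rcases le_total (dist a z) (dist a x) with h1 | h1
  · left; rw [h, abs_sub_comm, abs_of_nonneg (by linarith)]; ring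
  · right; rw [h', abs_sub_comm, abs_of_nonneg (by linarith)]; linarith

/-- clamp -/
noncomputable def auxC (t : ℝ) : ℝ := max 0 (min t 1)
lemma auxC_mem (t : ℝ) : auxC t ∈ Icc (0:ℝ) 1 := ⟨le_max_left _ _, by simp [auxC]⟩
lemma auxC_cont : Continuous auxC := by unfold auxC; fun_prop
lemma auxC_eq {t : ℝ} (h : t ∈ Icc (0:ℝ) 1) : auxC t = t := by simp [auxC, h.1, h.2]

/-- point on the geodesic at given ratio -/
noncomputable def auxGp (hB : IsBusemannSpace S) (p w : S) (t : ℝ) : S :=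
  (hB.1 p w).choose (auxC t * dist p w)

lemma auxGp_spec (hB : IsBusemannSpace S) (p w : S) (t : ℝ) :
    auxGp hB p w t ∈ auxSeg p w ∧ dist p (auxGp hB p w t) = auxC t * dist p w :=
  aux_geod_mem_seg (hB.1 p w).choose_spec
    ⟨mul_nonneg (auxC_mem t).1 dist_nonneg, mul_le_of_le_one_left dist_nonneg (auxC_mem t).2⟩

lemma auxGp_contr (hB : IsBusemannSpace S) (p w w' : S) (t : ℝ) :
    dist (auxGp hB p w t) (auxGp hB p w' t) ≤ dist w w' := by
  have h1 := (hB.1 p w).choose_spec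
  have h2 := (hB.1 p w').choose_spec
  have hc := hB.2 _ _ 0 (dist p w) 0 (dist p w') dist_nonneg dist_nonneg h1.1 h2.1
  have ht := auxC_mem t
  have := auxConv hc (left_mem_Icc.2 zero_le_one) (right_mem_Icc.2 zero_le_one) (a := 1 - auxC t) (b := auxC t)
    (by linarith [ht.2]) ht.1 (by ring)
  simp only [mul_zero, mul_one, zero_add, sub_zero, one_mul, zero_mul, sub_self,
    h1.2.1, h2.2.1, h1.2.2, h2.2.2, dist_self] at this
  exact this.trans (mul_le_of_le_one_left dist_nonneg ht.2)

lemma auxGp_cont (hB : IsBusemannSpace S) (p : S) :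
    Continuous fun x : S × ℝ => auxGp hB p x.1 x.2 := by
  rw [continuous_iff_continuousAt]
  rintro ⟨w, t⟩
  rw [ContinuousAt, tendsto_iff_dist_tendsto_zero]
  have hb : ∀ x : S × ℝ, dist (auxGp hB p x.1 x.2) (auxGp hB p w t) ≤
      dist x.1 w + |auxC x.2 - auxC t| * dist p w := by
    intro x
    refine (dist_triangle _ (auxGp hB p w x.2) _).trans (add_le_add (auxGp_contr hB p _ _ _) ?_)
    rw [aux_seg_dist hB (auxGp_spec hB p w x.2).1 (auxGp_spec hB p w t).1,
      (auxGp_spec hB p w x.2).2, (auxGp_spec hB p w t).2, ← sub_mul, abs_mul,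
      abs_of_nonneg (dist_nonneg (x := p) (y := w))]
  refine squeeze_zero (fun _ => dist_nonneg) hb ?_
  have hc : Continuous fun x : S × ℝ => dist x.1 w + |auxC x.2 - auxC t| * dist p w := by
    have := auxC_cont
    fun_prop
  have := hc.tendsto (w, t)
  simpa using this

lemma aux_gp_of_seg (hB : IsBusemannSpace S) {p w z : S} (hz : z ∈ auxSeg p w) :
    ∃ t, auxGp hB p w t = z := by
  have hl := aux_seg_le hz
  rcases (dist_nonneg (x := p) (y := w)).eq_or_lt with h0 | h0
  · refine ⟨0, ?_⟩
    have h1 := (auxGp_spec hB p w 0).2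
    rw [← h0, mul_zero] at h1
    have h2 : dist p z = 0 := le_antisymm (h0 ▸ hl.2) hl.1
    rw [← dist_eq_zero.1 h1, ← dist_eq_zero.1 h2]
  · refine ⟨dist p z / dist p w, ?_⟩
    have hm : dist p z / dist p w ∈ Icc (0:ℝ) 1 :=
      ⟨div_nonneg hl.1 h0.le, (div_le_one h0).2 hl.2⟩
    have h1 := (auxGp_spec hB p w (dist p z / dist p w))
    rw [auxC_eq hm, div_mul_cancel₀ _ h0.ne'] at h1
    rw [← dist_eq_zero, aux_seg_dist hB h1.1 hz, h1.2]; simp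

/-- geodesics can be extended -/
lemma aux_extend (hB : IsBusemannSpace S) (e : S ≃ₜ ℂ) (p q : S) :
    ∃ w, w ≠ q ∧ dist p w = dist p q + dist q w := by
  by_contra! hne
  have hper : auxPt (2 * Real.pi * 1) = auxPt (2 * Real.pi * 0) := by
    simp [auxPt, Complex.exp_two_pi_mul_I]
  have hcont : Continuous auxPt := by unfold auxPt; fun_prop
  have hw : ∀ u, e.symm (e q + auxPt u) ≠ q := by
    intro u h
    have := congrArg e h
    simp only [Homeomorph.apply_symm_apply, add_eq_left] at this
    have h2 := auxPt_norm u
    rw [this] at h2; simp at h2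
  refine aux_not_contract
    (fun x => e (auxGp hB p (e.symm (e q + auxPt (2 * Real.pi * x.1))) x.2) - e q)
    ?_ ?_ (e p - e q) ?_ ?_ ?_
  · refine (e.continuous.comp ((auxGp_cont hB p).comp
      (Continuous.prodMk (e.symm.continuous.comp ?_) continuous_snd))).sub continuous_const
    fun_prop
  · intro x h
    have h1 := e.injective (sub_eq_zero.1 h)
    have h2 := (auxGp_spec hB p (e.symm (e q + auxPt (2 * Real.pi * x.1))) x.2).1
    rw [h1] at h2
    exact hne _ (hw _) h2.symm
  · intro u
    have h2 := (auxGp_spec hB p (e.symm (e q + auxPt (2 * Real.pi * u))) 0).2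
    rw [auxC_eq ⟨le_rfl, zero_le_one⟩, zero_mul] at h2
    simp only; rw [← dist_eq_zero.1 h2]
  · intro v
    simp only [hper]
  · intro u
    have h2 := (auxGp_spec hB p (e.symm (e q + auxPt (2 * Real.pi * u))) 1)
    rw [auxC_eq ⟨zero_le_one, le_rfl⟩, one_mul] at h2
    have h3 := h2.1
    simp only [auxSeg, mem_ofPred_eq, h2.2, add_eq_left] at h3
    simp only; rw [dist_eq_zero.1 h3]; simp

def auxK (e : S ≃ₜ ℂ) : Set S := {z | ‖e z‖ ≤ 1}

lemma auxK_compact (e : S ≃ₜ ℂ) : IsCompact (auxK e) := by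
  have : auxK e = e ⁻¹' (closedBall 0 1) := by ext z; simp [auxK]
  rw [this]; exact e.isCompact_preimage.2 (isCompact_closedBall _ _)

lemma aux_extend_bdry (hB : IsBusemannSpace S) (e : S ≃ₜ ℂ) (p q : S) (hq : q ∈ auxK e) :
    ∃ b, ‖e b‖ = 1 ∧ dist p b = dist p q + dist q b ∧ auxSeg q b ⊆ auxK e := by
  let W : Set S := {w | w ∈ auxK e ∧ dist p w = dist p q + dist q w ∧
    ∀ t, auxGp hB q w t ∈ auxK e}
  have hKc := (auxK_compact e).isClosed
  have hWseg : ∀ w ∈ W, auxSeg q w ⊆ auxK e := by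
    intro w hw z hz
    obtain ⟨t, rfl⟩ := aux_gp_of_seg hB hz
    exact hw.2.2 t
  have hWc : IsCompact W := by
    refine (auxK_compact e).of_isClosed_subset ?_ (fun w hw => hw.1)
    refine hKc.inter ((isClosed_eq (by fun_prop) (by fun_prop)).inter ?_)
    have : {w : S | ∀ t, auxGp hB q w t ∈ auxK e} =
        ⋂ t, (fun w => auxGp hB q w t) ⁻¹' auxK e := by ext; simp
    change IsClosed {w : S | ∀ t, auxGp hB q w t ∈ auxK e}
    rw [this]
    exact isClosed_iInter fun t => hKc.preimage
      ((auxGp_cont hB q).comp (Continuous.prodMk continuous_id continuous_const))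
  have hWq : q ∈ W := ⟨hq, by simp, fun t => by
    have := (auxGp_spec hB q q t).2
    rw [dist_self, mul_zero] at this
    rwa [← dist_eq_zero.1 this]⟩
  obtain ⟨w, hw, hmax⟩ := hWc.exists_isMaxOn ⟨q, hWq⟩ (f := fun w => dist q w)
    (by fun_prop : Continuous fun w => dist q w).continuousOn
  refine ⟨w, ?_, hw.2.1, hWseg w hw⟩
  by_contra hn
  have hlt : ‖e w‖ < 1 := lt_of_le_of_ne hw.1 hn
  have hopen : IsOpen {z | ‖e z‖ < 1} := isOpen_lt (by fun_prop) continuous_const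
  obtain ⟨r, hr, hball⟩ := Metric.isOpen_iff.1 hopen w hlt
  obtain ⟨w1, hw1, hd1⟩ := aux_extend hB e p w
  have hpos : 0 < dist w w1 := dist_pos.2 hw1.symm
  obtain ⟨γ, hγ⟩ := hB.1 w w1
  set ρ := min (r / 2) (dist w w1) with hρ
  have hρ0 : 0 < ρ := lt_min (by linarith) hpos
  obtain ⟨hs, hds⟩ := aux_geod_mem_seg hγ (r := ρ) ⟨hρ0.le, min_le_right _ _⟩
  set w' := γ ρ
  have hs' : dist w w' + dist w' w1 = dist w w1 := hs
  have h1 : dist p w' = dist p w + dist w w' := by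
    have t1 := dist_triangle p w' w1
    have t2 := dist_triangle p w w'
    linarith
  have h2 := hw.2.1
  have h3 : dist q w' = dist q w + dist w w' := by
    have t1 := dist_triangle p q w'
    have t2 := dist_triangle q w w'
    linarith
  have hsmall : auxSeg w w' ⊆ auxK e := by
    intro z hz
    have : dist z w < r := by
      rw [dist_comm]
      have := (aux_seg_le hz).2
      have := min_le_left (r / 2) (dist w w1)
      linarith
    have h9 : ‖e z‖ < 1 := hball this
    exact h9.le
  have hw' : w' ∈ W := by
    refine ⟨hsmall (auxSeg_right _ _), ?_, fun t => ?_⟩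
    · rw [h1, h3, h2]; ring
    · have hz := (auxGp_spec hB q w' t).1
      rcases aux_seg_split hB (x := w) (h3.symm : w ∈ auxSeg q w') hz with h | h
      · exact hWseg w hw h
      · exact hsmall h
  have := hmax hw'
  simp only [mem_ofPred_eq] at this
  linarith

lemma aux_seg_path (hB : IsBusemannSpace S) (a b : S) :
    IsPathConnected (auxSeg a b) ∧ IsCompact (auxSeg a b) := by
  obtain ⟨γ, h⟩ := hB.1 a b
  have he : auxSeg a b = γ '' Icc 0 (dist a b) := by
    ext z; constructor
    · intro hz; exact ⟨_, aux_seg_le hz, aux_seg_eq hB h hz⟩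
    · rintro ⟨r, hr, rfl⟩; exact (aux_geod_mem_seg h hr).1
  have hc : ContinuousOn γ (Icc 0 (dist a b)) := by
    have : LipschitzOnWith 1 γ (Icc 0 (dist a b)) := LipschitzOnWith.of_dist_le_mul
      fun s hs t ht => by rw [h.1 s hs t ht, NNReal.coe_one, one_mul, Real.dist_eq]
    exact this.continuousOn
  rw [he]
  exact ⟨((convex_Icc _ _).isPathConnected ⟨0, le_rfl, dist_nonneg⟩).image' hc,
    isCompact_Icc.image_of_continuousOn hc⟩

lemma aux_seg_sub_left {a b x : S} (hx : x ∈ auxSeg a b) : auxSeg a x ⊆ auxSeg a b := by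
  intro z hz
  simp only [auxSeg, mem_ofPred_eq] at *
  linarith [dist_triangle z x b, dist_triangle a z b]

lemma aux_seg_sub_right {a b x : S} (hx : x ∈ auxSeg a b) : auxSeg x b ⊆ auxSeg a b := by
  rw [auxSeg_symm a b, auxSeg_symm x b]
  exact aux_seg_sub_left (by rwa [auxSeg_symm])

lemma aux_seg_convex (hB : IsBusemannSpace S) {a b x y : S} (hx : x ∈ auxSeg a b)
    (hy : y ∈ auxSeg a b) : auxSeg x y ⊆ auxSeg a b := by
  rcases aux_seg_split hB hx hy with h | h
  · rw [auxSeg_symm x y]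
    exact (aux_seg_sub_right h).trans (aux_seg_sub_left hx)
  · exact (aux_seg_sub_left h).trans (aux_seg_sub_right hx)

def auxIsPath (e : S ≃ₜ ℂ) (γ : ℝ → S) (ℓ : ℝ) (p q : S) : Prop :=
  0 ≤ ℓ ∧ (∀ s ∈ Icc 0 ℓ, ∀ t ∈ Icc 0 ℓ, dist (γ s) (γ t) ≤ |s - t|) ∧ γ 0 = p ∧ γ ℓ = q ∧
    ∀ s ∈ Icc 0 ℓ, γ s ∈ auxK e

def auxLen (e : S ≃ₜ ℂ) (p q : S) : Set ℝ := {ℓ | ∃ γ : ℝ → S, auxIsPath e γ ℓ p q}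

lemma auxIsPath.cont {e : S ≃ₜ ℂ} {γ : ℝ → S} {ℓ : ℝ} {p q : S} (h : auxIsPath e γ ℓ p q) :
    ContinuousOn γ (Icc 0 ℓ) := by
  have : LipschitzOnWith 1 γ (Icc 0 ℓ) := LipschitzOnWith.of_dist_le_mul
    fun s hs t ht => by rw [NNReal.coe_one, one_mul, Real.dist_eq]; exact h.2.1 s hs t ht
  exact this.continuousOn

lemma auxIsPath.sub {e : S ≃ₜ ℂ} {γ : ℝ → S} {ℓ : ℝ} {p q : S} (h : auxIsPath e γ ℓ p q)
    {σ τ : ℝ} (h0 : 0 ≤ σ) (h1 : σ ≤ τ) (h2 : τ ≤ ℓ) : τ - σ ∈ auxLen e (γ σ) (γ τ) := by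
  refine ⟨fun r => γ (r + σ), by linarith, ?_, by simp, by simp, ?_⟩
  · intro s hs t ht
    have := h.2.1 (s + σ) ⟨by linarith [hs.1], by linarith [hs.2]⟩ (t + σ)
      ⟨by linarith [ht.1], by linarith [ht.2]⟩
    simpa using this
  · intro s hs
    exact h.2.2.2.2 _ ⟨by linarith [hs.1], by linarith [hs.2]⟩

lemma auxLen_le {e : S ≃ₜ ℂ} {p q : S} {ℓ : ℝ} (h : ℓ ∈ auxLen e p q) : dist p q ≤ ℓ := by
  obtain ⟨γ, h0, h1, rfl, rfl, -⟩ := h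
  have := h1 0 ⟨le_rfl, h0⟩ ℓ ⟨h0, le_rfl⟩
  rwa [zero_sub, abs_neg, abs_of_nonneg h0] at this

lemma auxLen_concat {e : S ≃ₜ ℂ} {p q r : S} {ℓ m : ℝ} (h : ℓ ∈ auxLen e p q)
    (h' : m ∈ auxLen e q r) : ℓ + m ∈ auxLen e p r := by
  obtain ⟨γ, g0, g1, g2, g3, g4⟩ := h
  obtain ⟨η, k0, k1, k2, k3, k4⟩ := h'
  let σ : ℝ → S := fun r => if r ≤ ℓ then γ r else η (r - ℓ)
  have σ1 : ∀ r, r ≤ ℓ → σ r = γ r := fun r hr => if_pos hr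
  have σ2 : ∀ r, ℓ ≤ r → σ r = η (r - ℓ) := fun r hr => by
    rcases hr.eq_or_lt with rfl | hr
    · rw [σ1 _ le_rfl, g3, sub_self, k2]
    · exact if_neg (not_le.2 hr)
  have key : ∀ s ∈ Icc 0 (ℓ + m), ∀ t ∈ Icc 0 (ℓ + m), s ≤ t → dist (σ s) (σ t) ≤ t - s := by
    intro s hs t ht hst
    rcases le_total t ℓ with htD | htD
    · have := g1 s ⟨hs.1, hst.trans htD⟩ t ⟨ht.1, htD⟩
      rwa [abs_sub_comm, abs_of_nonneg (by linarith), ← σ1 _ htD, ← σ1 _ (hst.trans htD)] at this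
    rcases le_total s ℓ with hsD | hsD
    · rw [σ1 _ hsD, σ2 _ htD]
      have a1 := g1 s ⟨hs.1, hsD⟩ ℓ ⟨g0, le_rfl⟩
      have a2 := k1 0 ⟨le_rfl, k0⟩ (t - ℓ) ⟨by linarith, by linarith [ht.2]⟩
      rw [g3, abs_sub_comm, abs_of_nonneg (by linarith)] at a1
      rw [k2, abs_sub_comm, abs_of_nonneg (by linarith)] at a2
      linarith [dist_triangle (γ s) q (η (t - ℓ))]
    · have := k1 (s - ℓ) ⟨by linarith, by linarith [hs.2]⟩ (t - ℓ) ⟨by linarith, by linarith [ht.2]⟩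
      rw [abs_sub_comm, abs_of_nonneg (by linarith)] at this
      rw [σ2 _ htD, σ2 _ hsD]; linarith
  refine ⟨σ, by linarith, fun s hs t ht => ?_, ?_, ?_, fun s hs => ?_⟩
  · rcases le_total s t with hst | hst
    · rw [abs_sub_comm, abs_of_nonneg (by linarith)]; exact key s hs t ht hst
    · rw [dist_comm, abs_of_nonneg (by linarith)]; exact key t ht s hs hst
  · rw [σ1 _ g0, g2]
  · rw [σ2 _ (by linarith), add_sub_cancel_left, k3]
  · rcases le_total s ℓ with h | h
    · rw [σ1 _ h]; exact g4 _ ⟨hs.1, h⟩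
    · rw [σ2 _ h]; exact k4 _ ⟨by linarith, by linarith [hs.2]⟩

lemma auxLen_seg (hB : IsBusemannSpace S) {e : S ≃ₜ ℂ} {p q : S} (h : auxSeg p q ⊆ auxK e) :
    dist p q ∈ auxLen e p q := by
  obtain ⟨γ, hγ⟩ := hB.1 p q
  exact ⟨γ, dist_nonneg, fun s hs t ht => (hγ.1 s hs t ht).le, hγ.2.1, hγ.2.2,
    fun s hs => h (aux_geod_mem_seg hγ hs).1⟩

lemma aux_first_hit {e : S ≃ₜ ℂ} {γ : ℝ → S} {ℓ : ℝ} {p q : S} (h : auxIsPath e γ ℓ p q)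
    {L : Set S} (hL : IsClosed L) (hq : q ∈ L) :
    ∃ τ, 0 ≤ τ ∧ τ ≤ ℓ ∧ γ τ ∈ L ∧ ∀ u, 0 ≤ u → u ≤ τ → γ u ∈ L → u = τ := by
  have hc : IsCompact (Icc 0 ℓ ∩ γ ⁻¹' L) :=
    isCompact_Icc.of_isClosed_subset (h.cont.preimage_isClosed_of_isClosed isClosed_Icc hL)
      inter_subset_left
  obtain ⟨τ, hτ, hmin⟩ := hc.exists_isLeast ⟨ℓ, ⟨h.1, le_rfl⟩, by
    rw [mem_preimage, h.2.2.2.1]; exact hq⟩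
  exact ⟨τ, hτ.1.1, hτ.1.2, hτ.2, fun u hu huτ hul =>
    le_antisymm huτ (hmin ⟨⟨hu, huτ.trans hτ.1.2⟩, hul⟩)⟩

lemma aux_monge (hB : IsBusemannSpace S) (e : S ≃ₜ ℂ) {a b s t x y : S} {α β σ τ : ℝ}
    (ha : e a = auxPt α) (hb : e b = auxPt β) (hs : e s = auxPt σ) (ht : e t = auxPt τ)
    (h1 : α ≤ σ) (h2 : σ ≤ τ) (h3 : τ ≤ β) (h4 : β ≤ α + 2 * Real.pi)
    (hK : auxSeg a b ⊆ auxK e) (hx : x ∈ auxSeg a b) (hy : y ∈ auxSeg a b)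
    (hxy : dist a x ≤ dist a y) {ℓ₁ ℓ₂ : ℝ} (hl1 : ℓ₁ ∈ auxLen e t x) (hl2 : ℓ₂ ∈ auxLen e s y) :
    ∃ m₁ ∈ auxLen e s x, ∃ m₂ ∈ auxLen e t y, m₁ + m₂ ≤ ℓ₁ + ℓ₂ := by
  obtain ⟨γ, hγ⟩ := hl1
  obtain ⟨η, hη⟩ := hl2
  obtain ⟨u, u0, u1, uL, umin⟩ := aux_first_hit hγ (auxSeg_closed a b) hx
  obtain ⟨v, v0, v1, vL, vmin⟩ := aux_first_hit hη (auxSeg_closed a b) hy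
  rcases le_or_gt (dist a (γ u)) (dist a (η v)) with hle | hlt
  · -- crossing
    have hcr : ∃ u' v', 0 ≤ u' ∧ u' ≤ u ∧ 0 ≤ v' ∧ v' ≤ v ∧ γ u' = η v' := by
      have pc1 : IsPathConnected (γ '' Icc 0 u) :=
        ((convex_Icc _ _).isPathConnected ⟨0, le_rfl, u0⟩).image'
          (hγ.cont.mono (Icc_subset_Icc le_rfl u1))
      have pc2 : IsPathConnected (η '' Icc 0 v) :=
        ((convex_Icc _ _).isPathConnected ⟨0, le_rfl, v0⟩).image'
          (hη.cont.mono (Icc_subset_Icc le_rfl v1))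
      have pc3 := (pc1.union (aux_seg_path hB a (γ u)).1
        ⟨γ u, ⟨u, ⟨u0, le_rfl⟩, rfl⟩, auxSeg_right _ _⟩).image e.continuous
      have pc4 := (pc2.union (aux_seg_path hB (η v) b).1
        ⟨η v, ⟨v, ⟨v0, le_rfl⟩, rfl⟩, auxSeg_left _ _⟩).image e.continuous
      have j1 := pc3.joinedIn (e a) ⟨a, Or.inr (auxSeg_left _ _), rfl⟩ (e t)
        ⟨t, Or.inl ⟨0, ⟨le_rfl, u0⟩, hγ.2.2.1⟩, rfl⟩
      have j2 := pc4.joinedIn (e s) ⟨s, Or.inl ⟨0, ⟨le_rfl, v0⟩, hη.2.2.1⟩, rfl⟩ (e b)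
        ⟨b, Or.inr (auxSeg_right _ _), rfl⟩
      rw [ha, ht] at j1
      rw [hs, hb] at j2
      obtain ⟨w, ⟨w1, hw1, rfl⟩, ⟨w2, hw2, h12⟩⟩ := aux_cross _ _ (by
        rintro _ ⟨z, hz, rfl⟩
        rw [mem_closedBall_zero_iff]
        rcases hz with ⟨r, hr, rfl⟩ | hz
        · exact hγ.2.2.2.2 r ⟨hr.1, hr.2.trans u1⟩
        · exact hK (aux_seg_sub_left uL hz)) (by
        rintro _ ⟨z, hz, rfl⟩
        rw [mem_closedBall_zero_iff]
        rcases hz with ⟨r, hr, rfl⟩ | hz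
        · exact hη.2.2.2.2 r ⟨hr.1, hr.2.trans v1⟩
        · exact hK (aux_seg_sub_right vL hz)) α σ τ β h1 h2 h3 h4 j1 j2
      have := e.injective h12
      subst this
      by_cases hwL : w2 ∈ auxSeg a b
      · have q1 : dist a w2 ≤ dist a (γ u) := by
          rcases hw1 with ⟨r, hr, rfl⟩ | hz
          · rw [umin r hr.1 hr.2 hwL]
          · exact (aux_seg_le hz).2
        have q2 : dist a (η v) ≤ dist a w2 := by
          rcases hw2 with ⟨r, hr, rfl⟩ | hz
          · rw [vmin r hr.1 hr.2 hwL]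
          · have z1 : dist (η v) w2 + dist w2 b = dist (η v) b := hz
            have z2 : dist a (η v) + dist (η v) b = dist a b := vL
            have z3 : dist a w2 + dist w2 b = dist a b := hwL
            linarith [dist_nonneg (x := η v) (y := w2)]
        refine ⟨u, v, u0, le_rfl, v0, le_rfl, ?_⟩
        rw [← dist_eq_zero, aux_seg_dist hB uL vL, abs_eq_zero]
        linarith
      · rcases hw1 with ⟨r, hr, h5⟩ | hz
        · rcases hw2 with ⟨r', hr', h6⟩ | hz
          · exact ⟨r, r', hr.1, hr.2, hr'.1, hr'.2, h5.trans h6.symm⟩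
          · exact absurd (aux_seg_sub_right vL hz) hwL
        · exact absurd (aux_seg_sub_left uL hz) hwL
    obtain ⟨u', v', hu0, huu, hv0, hvv, heq⟩ := hcr
    have p1 := hγ.sub hu0 (huu.trans u1) le_rfl
    have p2 := hγ.sub le_rfl hu0 (huu.trans u1)
    have p3 := hη.sub hv0 (hvv.trans v1) le_rfl
    have p4 := hη.sub le_rfl hv0 (hvv.trans v1)
    rw [hγ.2.2.2.1] at p1
    rw [hγ.2.2.1] at p2
    rw [hη.2.2.2.1] at p3
    rw [hη.2.2.1] at p4
    rw [heq] at p1 p2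
    exact ⟨_, auxLen_concat p4 p1, _, auxLen_concat p2 p3, by linarith⟩
  · have p2 := hγ.sub le_rfl u0 u1
    have p4 := hη.sub le_rfl v0 v1
    rw [hγ.2.2.1] at p2
    rw [hη.2.2.1] at p4
    have q1 := auxLen_seg hB ((aux_seg_convex hB vL hx).trans hK)
    have q2 := auxLen_seg hB ((aux_seg_convex hB uL hy).trans hK)
    refine ⟨_, auxLen_concat p4 q1, _, auxLen_concat p2 q2, ?_⟩
    have p1 := auxLen_le (hγ.sub u0 u1 le_rfl)
    have p3 := auxLen_le (hη.sub v0 v1 le_rfl)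
    rw [hγ.2.2.2.1, aux_seg_dist hB uL hx] at p1
    rw [hη.2.2.2.1, aux_seg_dist hB vL hy] at p3
    rw [aux_seg_dist hB vL hx, aux_seg_dist hB uL hy]
    have : |dist a (η v) - dist a x| + |dist a (γ u) - dist a y| ≤
        |dist a (γ u) - dist a x| + |dist a (η v) - dist a y| := by
      rcases abs_cases (dist a (η v) - dist a x) with ⟨r1, _⟩ | ⟨r1, _⟩ <;>
      rcases abs_cases (dist a (γ u) - dist a y) with ⟨r2, _⟩ | ⟨r2, _⟩ <;>
      rcases abs_cases (dist a (γ u) - dist a x) with ⟨r3, _⟩ | ⟨r3, _⟩ <;>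
      rcases abs_cases (dist a (η v) - dist a y) with ⟨r4, _⟩ | ⟨r4, _⟩ <;>
      rw [r1, r2, r3, r4] <;> linarith
    linarith

noncomputable def auxD (e : S ≃ₜ ℂ) (p q : S) : ℝ := sInf (auxLen e p q)

lemma auxLen_bdd (e : S ≃ₜ ℂ) (p q : S) : BddBelow (auxLen e p q) :=
  ⟨dist p q, fun _ h => auxLen_le h⟩

lemma auxD_seg (hB : IsBusemannSpace S) {e : S ≃ₜ ℂ} {p q : S} (h : auxSeg p q ⊆ auxK e) :
    auxD e p q = dist p q :=
  le_antisymm (csInf_le (auxLen_bdd e p q) (auxLen_seg hB h))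
    (le_csInf ⟨_, auxLen_seg hB h⟩ fun _ h => auxLen_le h)

lemma auxD_monge (hB : IsBusemannSpace S) (e : S ≃ₜ ℂ) {a b s t x y : S} {α β σ τ : ℝ}
    (ha : e a = auxPt α) (hb : e b = auxPt β) (hs : e s = auxPt σ) (ht : e t = auxPt τ)
    (h1 : α ≤ σ) (h2 : σ ≤ τ) (h3 : τ ≤ β) (h4 : β ≤ α + 2 * Real.pi)
    (hK : auxSeg a b ⊆ auxK e) (hx : x ∈ auxSeg a b) (hy : y ∈ auxSeg a b)
    (hxy : dist a x ≤ dist a y) (n1 : (auxLen e t x).Nonempty) (n2 : (auxLen e s y).Nonempty) :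
    auxD e s x - auxD e s y ≤ auxD e t x - auxD e t y := by
  have key : ∀ ℓ₁ ∈ auxLen e t x, ∀ ℓ₂ ∈ auxLen e s y,
      auxD e s x + auxD e t y ≤ ℓ₁ + ℓ₂ := by
    intro ℓ₁ hl1 ℓ₂ hl2
    obtain ⟨m1, k1, m2, k2, h⟩ := aux_monge hB e ha hb hs ht h1 h2 h3 h4 hK hx hy hxy hl1 hl2
    exact (add_le_add (csInf_le (auxLen_bdd _ _ _) k1) (csInf_le (auxLen_bdd _ _ _) k2)).trans h
  have k2 : ∀ ℓ₁ ∈ auxLen e t x, auxD e s x + auxD e t y - ℓ₁ ≤ auxD e s y := fun ℓ₁ h =>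
    le_csInf n2 fun ℓ₂ h' => by linarith [key ℓ₁ h ℓ₂ h']
  have k3 : auxD e s x + auxD e t y - auxD e s y ≤ auxD e t x :=
    le_csInf n1 fun ℓ₁ h' => by linarith [k2 ℓ₁ h']
  linarith

lemma aux_sum_cyc (n : ℕ) (h : ℕ → ℝ) (hper : ∀ i, h (i + n) = h i) (j k : ℕ) (hjk : j ≤ k)
    (hkn : k ≤ j + n) (hm : ∀ i, j ≤ i → i < k → h i ≤ h (i + 1))
    (ha : ∀ i, k ≤ i → i < j + n → h (i + 1) ≤ h i) :
    ∑ i ∈ Finset.range n, |h (i + 1) - h i| = 2 * (h k - h j) := by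
  have hshift : ∀ j, ∑ i ∈ Finset.Ico j (j + n), |h (i + 1) - h i| =
      ∑ i ∈ Finset.range n, |h (i + 1) - h i| := by
    intro j
    induction j with
    | zero => rw [Finset.range_eq_Ico, zero_add]
    | succ j ih =>
      rw [← ih]
      rcases Nat.eq_zero_or_pos n with rfl | hn
      · simp
      rw [Finset.sum_eq_sum_Ico_succ_bot (by omega : j < j + n),
        show j + 1 + n = (j + n) + 1 by ring, Finset.sum_Ico_succ_top (by omega : j + 1 ≤ j + n)]
      have e1 := hper j
      have e2 := hper (j + 1)
      rw [show j + 1 + n = j + n + 1 by ring] at e2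
      rw [e1, e2]; ring
  rw [← hshift j, ← Finset.sum_Ico_consecutive _ hjk hkn]
  have s1 : ∑ i ∈ Finset.Ico j k, |h (i + 1) - h i| = h k - h j := by
    rw [← Finset.sum_Ico_sub h hjk]
    refine Finset.sum_congr rfl fun i hi => ?_
    rw [Finset.mem_Ico] at hi
    exact abs_of_nonneg (by linarith [hm i hi.1 hi.2])
  have s2 : ∑ i ∈ Finset.Ico k (j + n), |h (i + 1) - h i| = h k - h j := by
    have := Finset.sum_Ico_sub h hkn
    rw [← hper j, ← neg_sub (h (j + n)), ← this, ← Finset.sum_neg_distrib]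
    refine Finset.sum_congr rfl fun i hi => ?_
    rw [Finset.mem_Ico] at hi
    exact abs_of_nonpos (by linarith [ha i hi.1 hi.2])
  rw [s1, s2]; ring

lemma aux_cyc_enum (Θ : Finset ℝ) (hne : Θ.Nonempty)
    (hΘ : ∀ θ ∈ Θ, -Real.pi < θ ∧ θ ≤ Real.pi) :
    ∃ (n : ℕ) (c : ℕ → ℝ), Monotone c ∧ (∀ i, c (i + n) = c i + 2 * Real.pi) ∧
      (∀ θ ∈ Θ, ∃ j < n, c j = θ) ∧ ∀ i, ∃ θ ∈ Θ, ∃ m : ℕ, c i = θ + m * (2 * Real.pi) := by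
  set n := Θ.card with hn
  have hpos : 0 < n := Finset.card_pos.2 hne
  let o := Θ.orderEmbOfFin hn.symm
  have ho : ∀ i, o i ∈ Θ := fun i => Finset.orderEmbOfFin_mem _ _ _
  let c : ℕ → ℝ := fun i => o ⟨i % n, Nat.mod_lt _ hpos⟩ + ((i / n : ℕ) : ℝ) * (2 * Real.pi)
  refine ⟨n, c, ?_, ?_, ?_, ?_⟩
  · intro i j hij
    have hd : i / n ≤ j / n := Nat.div_le_div_right hij
    rcases hd.eq_or_lt with h | h
    · have h3 : i % n ≤ j % n := by
        have e1 := Nat.div_add_mod i n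
        have e2 := Nat.div_add_mod j n
        rw [h] at e1
        omega
      simp only [c, h]
      have := o.monotone (show (⟨i % n, Nat.mod_lt _ hpos⟩ : Fin n) ≤ ⟨j % n, Nat.mod_lt _ hpos⟩ from h3)
      linarith
    · have h1 : ((i / n : ℕ) : ℝ) + 1 ≤ ((j / n : ℕ) : ℝ) := by exact_mod_cast h
      have h2 := hΘ _ (ho ⟨i % n, Nat.mod_lt _ hpos⟩)
      have h3 := hΘ _ (ho ⟨j % n, Nat.mod_lt _ hpos⟩)
      simp only [c]
      nlinarith [Real.pi_pos]
  · intro i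
    simp only [c, Nat.add_mod_right, Nat.add_div_right i hpos]
    push_cast; ring
  · intro θ hθ
    have : θ ∈ Set.range o := by rw [Finset.range_orderEmbOfFin]; exact hθ
    obtain ⟨j, rfl⟩ := this
    refine ⟨j, j.2, ?_⟩
    simp only [c, Nat.mod_eq_of_lt j.2, Nat.div_eq_of_lt j.2]
    simp
  · intro i
    exact ⟨_, ho _, _, rfl⟩

lemma auxPt_arg {z : ℂ} (h : ‖z‖ = 1) (m : ℕ) : auxPt (z.arg + m * (2 * Real.pi)) = z := by
  have := Complex.norm_mul_exp_arg_mul_I z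
  rw [h] at this
  have h2 : auxPt (z.arg + m * (2 * Real.pi)) = auxPt z.arg := by
    simp only [auxPt]
    have := Complex.exp_periodic.nat_mul m (z.arg * Complex.I)
    rw [← this]; push_cast; ring_nf
  rw [h2, auxPt]; simpa using this

/-- One pair of points. -/
lemma aux_pair (hB : IsBusemannSpace S) (e : S ≃ₜ ℂ) (n : ℕ) (c : ℕ → ℝ) (hmono : Monotone c)
    (hper : ∀ i, c (i + n) = c i + 2 * Real.pi) (s : ℕ → S) (hs : ∀ i, e (s i) = auxPt (c i))
    (x y : S) (hnx : ∀ i, (auxLen e (s i) x).Nonempty) (hny : ∀ i, (auxLen e (s i) y).Nonempty)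
    (j k : ℕ) (hjk : j ≤ k) (hkn : k ≤ j + n)
    (hK : auxSeg (s j) (s k) ⊆ auxK e) (hx : x ∈ auxSeg (s j) (s k))
    (hy : y ∈ auxSeg (s j) (s k)) (hxy : dist (s j) y = dist (s j) x + dist x y) :
    ∑ i ∈ Finset.range n, |(auxD e (s (i + 1)) x - auxD e (s (i + 1)) y) -
      (auxD e (s i) x - auxD e (s i) y)| = 4 * dist x y := by
  have sper : ∀ i, s (i + n) = s i := fun i => e.injective (by
    rw [hs, hs, hper, auxPt, auxPt]; push_cast; rw [add_mul, Complex.exp_periodic])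
  have hle : dist (s j) x ≤ dist (s j) y := by linarith [dist_nonneg (x := x) (y := y)]
  have hx' : dist (s j) x + dist x (s k) = dist (s j) (s k) := hx
  have hy' : dist (s j) y + dist y (s k) = dist (s j) (s k) := hy
  rw [aux_sum_cyc n (fun i => auxD e (s i) x - auxD e (s i) y) (fun i => by simp only [sper]) j k
    hjk hkn]
  · have d1 := auxD_seg hB ((aux_seg_sub_left hx).trans hK)
    have d2 := auxD_seg hB ((aux_seg_sub_left hy).trans hK)
    have d3 := auxD_seg hB (p := s k) (q := x)
      (by rw [auxSeg_symm]; exact (aux_seg_sub_right hx).trans hK)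
    have d4 := auxD_seg hB (p := s k) (q := y)
      (by rw [auxSeg_symm]; exact (aux_seg_sub_right hy).trans hK)
    simp only [d1, d2, d3, d4]
    rw [dist_comm (s k) x, dist_comm (s k) y]
    linarith
  · intro i h1 h2
    exact auxD_monge hB e (hs j) (hs k) (hs i) (hs (i + 1)) (hmono h1) (hmono (Nat.le_succ i))
      (hmono h2) (by rw [← hper]; exact hmono hkn) hK hx hy hle (hnx _) (hny _)
  · intro i h1 h2
    have hle' : dist (s k) y ≤ dist (s k) x := by
      rw [dist_comm (s k) x, dist_comm (s k) y]; linarith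
    have hea : e (s j) = auxPt (c (j + n)) := by rw [← sper]; exact hs _
    rw [auxSeg_symm] at hx hy hK
    have := auxD_monge hB e (hs k) hea (hs i) (hs (i + 1)) (hmono h1) (hmono (Nat.le_succ i))
      (hmono h2) (by rw [hper]; linarith [hmono hjk]) hK hy hx hle' (hny _) (hnx _)
    linarith

lemma aux_homeo (hS : IsBusemannSurface S) (C : Set S) (hC : IsCompact C) :
    ∃ e : S ≃ₜ ℂ, C ⊆ auxK e := by
  obtain ⟨e0⟩ := hS.2
  let e1 : S ≃ₜ ℂ := e0.trans Complex.equivRealProdCLM.symm.toHomeomorph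
  obtain ⟨R, hR⟩ := (hC.image e1.continuous).isBounded.exists_norm_le
  let R' : ℝ := max R 1
  have hR' : 0 < R' := lt_of_lt_of_le one_pos (le_max_right _ _)
  have hne : ((R' : ℂ))⁻¹ ≠ 0 := by simp [hR'.ne']
  refine ⟨e1.trans (Homeomorph.mulLeft₀ _ hne), fun z hz => ?_⟩
  have := hR _ ⟨z, hz, rfl⟩
  simp only [auxK, mem_ofPred_eq, Homeomorph.trans_apply, Homeomorph.coe_mulLeft₀, norm_mul,
    norm_inv, Complex.norm_real, Real.norm_eq_abs, abs_of_pos hR']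
  rw [inv_mul_le_iff₀ hR', mul_one]
  exact this.trans (le_max_left _ _)

lemma aux_line (hB : IsBusemannSpace S) (e : S ≃ₜ ℂ) (x y : S) (h : auxSeg x y ⊆ auxK e) :
    ∃ a b, ‖e a‖ = 1 ∧ ‖e b‖ = 1 ∧ auxSeg a b ⊆ auxK e ∧ x ∈ auxSeg a b ∧ y ∈ auxSeg a b ∧
      dist a y = dist a x + dist x y := by
  obtain ⟨b, hb, hxb, hyb⟩ := aux_extend_bdry hB e x y (h (auxSeg_right _ _))
  obtain ⟨a, ha, hba, hxa⟩ := aux_extend_bdry hB e b x (h (auxSeg_left _ _))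
  have hx : x ∈ auxSeg a b := by
    rw [auxSeg_symm]; exact hba.symm
  have hy : y ∈ auxSeg x b := hxb.symm
  have hy2 := aux_seg_sub_right hx hy
  refine ⟨a, b, ha, hb, fun z hz => ?_, hx, hy2, ?_⟩
  · rcases aux_seg_split hB hx hz with h1 | h1
    · rw [auxSeg_symm] at h1; exact hxa h1
    · rcases aux_seg_split hB hy h1 with h2 | h2
      · exact h h2
      · exact hyb h2
  · have h1 : dist a x + dist x b = dist a b := hx
    have h2 : dist x y + dist y b = dist x b := hy
    have h3 : dist a y + dist y b = dist a b := hy2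
    linarith

lemma aux_finite_embed (hS : IsBusemannSurface S) (X : Finset S) :
    ∃ (n : ℕ) (φ : S → ℕ → ℝ), ∀ x ∈ X, ∀ y ∈ X,
      ∑ i ∈ Finset.range n, |φ x i - φ y i| = dist x y := by
  classical
  have hB := hS.1
  obtain ⟨e, he⟩ := aux_homeo hS (⋃ x ∈ X, ⋃ y ∈ X, auxSeg x y)
    (X.isCompact_biUnion fun x _ => X.isCompact_biUnion fun y _ => (aux_seg_path hB x y).2)
  have hseg : ∀ x ∈ X, ∀ y ∈ X, auxSeg x y ⊆ auxK e := fun x hx y hy z hz =>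
    he (mem_iUnion₂.2 ⟨x, hx, mem_iUnion₂.2 ⟨y, hy, hz⟩⟩)
  have hline : ∀ p : S × S, ∃ ab : S × S, p ∈ X ×ˢ X → ‖e ab.1‖ = 1 ∧ ‖e ab.2‖ = 1 ∧
      auxSeg ab.1 ab.2 ⊆ auxK e ∧ p.1 ∈ auxSeg ab.1 ab.2 ∧ p.2 ∈ auxSeg ab.1 ab.2 ∧
      dist ab.1 p.2 = dist ab.1 p.1 + dist p.1 p.2 := by
    intro p
    by_cases hp : p ∈ X ×ˢ X
    · have := Finset.mem_product.1 hp
      obtain ⟨a, b, h⟩ := aux_line hB e p.1 p.2 (hseg _ this.1 _ this.2)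
      exact ⟨(a, b), fun _ => h⟩
    · exact ⟨p, fun h => absurd h hp⟩
  choose ab hab using hline
  rcases X.eq_empty_or_nonempty with rfl | hXne
  · exact ⟨0, fun _ _ => 0, by simp⟩
  let T : Finset S := (X ×ˢ X).image (fun p => (ab p).1) ∪ (X ×ˢ X).image (fun p => (ab p).2)
  have hT1 : ∀ s ∈ T, ‖e s‖ = 1 := by
    intro s hs
    rcases Finset.mem_union.1 hs with h | h <;> obtain ⟨p, hp, rfl⟩ := Finset.mem_image.1 h
    · exact (hab p hp).1
    · exact (hab p hp).2.1
  have hTn : ∀ s ∈ T, ∀ z ∈ X, (auxLen e s z).Nonempty := by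
    intro s hs z hz
    rcases Finset.mem_union.1 hs with h | h <;> obtain ⟨p, hp, rfl⟩ := Finset.mem_image.1 h
    · obtain ⟨h1, h2, h3, h4, h5, h6⟩ := hab p hp
      exact ⟨_, auxLen_concat (auxLen_seg hB ((aux_seg_sub_left h4).trans h3))
        (auxLen_seg hB (hseg p.1 (Finset.mem_product.1 hp).1 z hz))⟩
    · obtain ⟨h1, h2, h3, h4, h5, h6⟩ := hab p hp
      exact ⟨_, auxLen_concat (auxLen_seg hB
        (by rw [auxSeg_symm]; exact (aux_seg_sub_right h4).trans h3))
        (auxLen_seg hB (hseg p.1 (Finset.mem_product.1 hp).1 z hz))⟩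
  have hTne : T.Nonempty := by
    obtain ⟨x, hx⟩ := hXne
    exact ⟨(ab (x, x)).1, Finset.mem_union_left _
      (Finset.mem_image.2 ⟨(x, x), Finset.mem_product.2 ⟨hx, hx⟩, rfl⟩)⟩
  obtain ⟨n, c, hmono, hper, hc1, hc2⟩ := aux_cyc_enum (T.image fun s => (e s).arg)
    (hTne.image _) (by
      intro θ hθ
      obtain ⟨s, -, rfl⟩ := Finset.mem_image.1 hθ
      exact ⟨Complex.neg_pi_lt_arg _, Complex.arg_le_pi _⟩)
  let s : ℕ → S := fun i => e.symm (auxPt (c i))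
  have hs : ∀ i, e (s i) = auxPt (c i) := fun i => by simp [s]
  have hsT : ∀ i, s i ∈ T := by
    intro i
    obtain ⟨θ, hθ, m, hm⟩ := hc2 i
    obtain ⟨r, hr, rfl⟩ := Finset.mem_image.1 hθ
    simp only [s, hm, auxPt_arg (hT1 r hr)]
    simpa using hr
  have hidx : ∀ r ∈ T, ∃ j < n, s j = r := by
    intro r hr
    obtain ⟨j, hj, hcj⟩ := hc1 _ (Finset.mem_image_of_mem _ hr)
    refine ⟨j, hj, ?_⟩
    have := auxPt_arg (hT1 r hr) 0
    simp only [s, hcj]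
    simp only [Nat.cast_zero, zero_mul, add_zero] at this
    rw [this]; simp
  refine ⟨n, fun x i => (auxD e (s (i + 1)) x - auxD e (s i) x) / 4, fun x hx y hy => ?_⟩
  have hp : (x, y) ∈ X ×ˢ X := Finset.mem_product.2 ⟨hx, hy⟩
  obtain ⟨h1, h2, h3, h4, h5, h6⟩ := hab _ hp
  obtain ⟨j, hj, hja⟩ := hidx (ab (x, y)).1
    (Finset.mem_union_left _ (Finset.mem_image.2 ⟨_, hp, rfl⟩))
  obtain ⟨k, hk, hkb⟩ := hidx (ab (x, y)).2
    (Finset.mem_union_right _ (Finset.mem_image.2 ⟨_, hp, rfl⟩))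
  rw [← hja, ← hkb] at h3 h4 h5
  rw [← hja] at h6
  simp only at h4 h5 h6
  have hfin : ∑ i ∈ Finset.range n, |(auxD e (s (i + 1)) x - auxD e (s (i + 1)) y) -
      (auxD e (s i) x - auxD e (s i) y)| = 4 * dist x y := by
    rcases le_total j k with hjk | hkj
    · exact aux_pair hB e n c hmono hper s hs x y (fun i => hTn _ (hsT i) _ hx)
        (fun i => hTn _ (hsT i) _ hy) j k hjk (by omega) h3 h4 h5 h6
    · have h7 : dist (s k) x = dist (s k) y + dist y x := by
        have a1 : dist (s j) x + dist x (s k) = dist (s j) (s k) := h4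
        have a2 : dist (s j) y + dist y (s k) = dist (s j) (s k) := h5
        rw [dist_comm (s k) x, dist_comm (s k) y, dist_comm y x]; linarith
      have := aux_pair hB e n c hmono hper s hs y x (fun i => hTn _ (hsT i) _ hy)
        (fun i => hTn _ (hsT i) _ hx) k j hkj (by omega) (by rwa [auxSeg_symm])
        (by rwa [auxSeg_symm]) (by rwa [auxSeg_symm]) h7
      rw [dist_comm x y, ← this]
      refine Finset.sum_congr rfl fun i _ => ?_
      rw [← abs_neg]; congr 1; ring
  have : dist x y = (4 * dist x y) / 4 := by ring
  rw [this, ← hfin, Finset.sum_div]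
  refine Finset.sum_congr rfl fun i _ => ?_
  rw [← sub_div, abs_div, abs_of_pos (by norm_num : (0:ℝ) < 4)]
  congr 2; ring

end AuxBusemann

section AuxFinal

variable {S : Type} [MetricSpace S]

lemma aux_meas (hS : IsBusemannSurface S) (u : ℕ → S) (c : ℕ → ℝ) (hc : ∀ n, 0 < c n) (N : ℕ)
    (hsum : ∑ n ∈ Finset.range N, c n * dist (u n) (u 0) ≤ 1) :
    ∃ μ : FiniteMeasure (ℕ → Set.Icc (-1 : ℝ) 1), μ.mass ≤ 1 ∧ ∀ n < N, ∀ m < N,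
      ∫ z, |((z n : Set.Icc (-1 : ℝ) 1) : ℝ) / c n - ((z m : Set.Icc (-1 : ℝ) 1) : ℝ) / c m|
        ∂(μ : Measure (ℕ → Set.Icc (-1 : ℝ) 1)) = dist (u n) (u m) := by
  classical
  rcases Nat.eq_zero_or_pos N with rfl | hN
  · exact ⟨0, by simp, by simp⟩
  obtain ⟨k, φ, hφ⟩ := aux_finite_embed hS ((Finset.range N).image u)
  have hφ' : ∀ n < N, ∀ m < N, ∑ i ∈ Finset.range k, |φ (u n) i - φ (u m) i| =
      dist (u n) (u m) := fun n hn m hm =>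
    hφ _ (Finset.mem_image_of_mem _ (Finset.mem_range.2 hn)) _
      (Finset.mem_image_of_mem _ (Finset.mem_range.2 hm))
  set v : ℕ → ℕ → ℝ := fun i n => φ (u n) i - φ (u 0) i with hv
  set w : ℕ → ℝ := fun i => ∑ n ∈ Finset.range N, c n * |v i n| with hw
  have hw0 : ∀ i, 0 ≤ w i := fun i =>
    Finset.sum_nonneg fun n _ => mul_nonneg (hc n).le (abs_nonneg _)
  have hvw : ∀ i, ∀ n < N, c n * |v i n| ≤ w i := fun i n hn =>
    Finset.single_le_sum (f := fun n => c n * |v i n|)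
      (fun n _ => mul_nonneg (hc n).le (abs_nonneg _)) (Finset.mem_range.2 hn)
  have hwsum : ∑ i ∈ Finset.range k, w i ≤ 1 := by
    refine le_trans (le_of_eq ?_) hsum
    simp only [hw]
    rw [Finset.sum_comm]
    refine Finset.sum_congr rfl fun n hn => ?_
    rw [← Finset.mul_sum, hφ' n (Finset.mem_range.1 hn) 0 hN]
  let p : ℕ → ℕ → Set.Icc (-1 : ℝ) 1 := fun i n =>
    Set.projIcc (-1 : ℝ) 1 (by norm_num) (c n * v i n / w i)
  have hp : ∀ i, ∀ n < N, w i * ((p i n : ℝ) / c n) = v i n := by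
    intro i n hn
    have h1 := hvw i n hn
    rcases (hw0 i).eq_or_lt with h0 | h0
    · rw [← h0] at h1 ⊢
      have : |v i n| ≤ 0 := by
        by_contra hcon
        have := mul_pos (hc n) (not_le.1 hcon)
        linarith
      rw [zero_mul, abs_nonpos_iff.1 this]
    · have hmem : c n * v i n / w i ∈ Set.Icc (-1 : ℝ) 1 := by
        rw [Set.mem_Icc, ← abs_le, abs_div, abs_mul, abs_of_pos (hc n), abs_of_pos h0]
        exact (div_le_one h0).2 h1
      have : (p i n : ℝ) = c n * v i n / w i := by
        simp only [p]
        rw [Set.projIcc_of_mem _ hmem]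
      rw [this]
      have := (hc n).ne'
      field_simp
  let μ : Measure (ℕ → Set.Icc (-1 : ℝ) 1) :=
    ∑ i ∈ Finset.range k, ENNReal.ofReal (w i) • Measure.dirac (p i)
  have hmass : μ Set.univ ≤ 1 := by
    simp only [μ, Measure.coe_finset_sum, Finset.sum_apply, Measure.smul_apply, measure_univ,
      smul_eq_mul, mul_one]
    rw [← ENNReal.ofReal_sum_of_nonneg fun i _ => hw0 i]
    exact ENNReal.ofReal_le_one.2 hwsum
  have hfin : IsFiniteMeasure μ := ⟨hmass.trans_lt ENNReal.one_lt_top⟩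
  refine ⟨⟨μ, hfin⟩, ?_, ?_⟩
  · have : (μ Set.univ).toNNReal ≤ (1 : ENNReal).toNNReal :=
      ENNReal.toNNReal_mono ENNReal.one_ne_top hmass
    exact this.trans (by simp)
  · intro n hn m hm
    change ∫ z, |((z n : Set.Icc (-1 : ℝ) 1) : ℝ) / c n -
      ((z m : Set.Icc (-1 : ℝ) 1) : ℝ) / c m| ∂μ = _
    simp only [μ]
    rw [integral_finsetSum_measure]
    · rw [← hφ' n hn m hm]
      refine Finset.sum_congr rfl fun i _ => ?_
      rw [integral_smul_measure, integral_dirac, ENNReal.toReal_ofReal (hw0 i), smul_eq_mul]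
      nth_rewrite 1 [← abs_of_nonneg (hw0 i)]
      rw [← abs_mul, mul_sub, hp i n hn, hp i m hm]
      simp [hv]
    · intro i _
      exact (integrable_dirac (by simp)).smul_measure ENNReal.ofReal_ne_top

lemma aux_meas_lim (hS : IsBusemannSurface S) (u : ℕ → S) :
    ∃ (μ : Measure (ℕ → Set.Icc (-1 : ℝ) 1)) (φ : ℕ → Lp ℝ 1 μ),
      ∀ n m, ‖φ n - φ m‖ = dist (u n) (u m) := by
  let c : ℕ → ℝ := fun n => (1 / 2) ^ (n + 1) / (1 + dist (u n) (u 0))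
  have hd : ∀ n, 0 < 1 + dist (u n) (u 0) := fun n => by positivity
  have hc : ∀ n, 0 < c n := fun n => by have := hd n; positivity
  have hsum : ∀ N, ∑ n ∈ Finset.range N, c n * dist (u n) (u 0) ≤ 1 := by
    intro N
    have h1 : ∀ n, c n * dist (u n) (u 0) ≤ (1 / 2) ^ (n + 1) := by
      intro n
      simp only [c]
      rw [div_mul_eq_mul_div, div_le_iff₀ (hd n)]
      have : (0 : ℝ) < (1 / 2) ^ (n + 1) := by positivity
      nlinarith
    have h2 : ∑ n ∈ Finset.range N, ((1 : ℝ) / 2) ^ (n + 1) = 1 - (1 / 2) ^ N := by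
      induction N with
      | zero => simp
      | succ N ih => rw [Finset.sum_range_succ, ih]; ring
    have h3 : (0 : ℝ) < (1 / 2) ^ N := by positivity
    exact (Finset.sum_le_sum fun n _ => h1 n).trans (by linarith)
  choose ν hν1 hν2 using fun N => aux_meas hS u c hc N (hsum N)
  obtain ⟨μ, -, hμ⟩ := (isCompact_setOfPred_finiteMeasure_le_of_compactSpace
    (ℕ → Set.Icc (-1 : ℝ) 1) 1).exists_mapClusterPt (f := Filter.atTop) (u := ν)
      (Filter.tendsto_principal.2 (Filter.Eventually.of_forall hν1))
  have hcont : ∀ n, Continuous fun z : ℕ → Set.Icc (-1 : ℝ) 1 => (z n : ℝ) / c n :=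
    fun n => by fun_prop
  have key : ∀ n m, ∫ z, |((z n : Set.Icc (-1 : ℝ) 1) : ℝ) / c n -
      ((z m : Set.Icc (-1 : ℝ) 1) : ℝ) / c m|
        ∂(μ : Measure (ℕ → Set.Icc (-1 : ℝ) 1)) = dist (u n) (u m) := by
    intro n m
    let f : BoundedContinuousFunction (ℕ → Set.Icc (-1 : ℝ) 1) ℝ :=
      BoundedContinuousFunction.mkOfCompact
        ⟨fun z => |(z n : ℝ) / c n - (z m : ℝ) / c m|, ((hcont n).sub (hcont m)).abs⟩
    have hf : Continuous fun ρ : FiniteMeasure (ℕ → Set.Icc (-1 : ℝ) 1) =>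
        ∫ z, f z ∂(ρ : Measure (ℕ → Set.Icc (-1 : ℝ) 1)) :=
      FiniteMeasure.continuous_integral_boundedContinuousFunction f
    have h1 := hμ.continuousAt_comp hf.continuousAt
    have h2 : Filter.Tendsto ((fun ρ : FiniteMeasure (ℕ → Set.Icc (-1 : ℝ) 1) =>
        ∫ z, f z ∂(ρ : Measure (ℕ → Set.Icc (-1 : ℝ) 1))) ∘ ν) Filter.atTop
        (nhds (dist (u n) (u m))) := by
      refine tendsto_const_nhds.congr' ?_
      filter_upwards [Filter.eventually_gt_atTop n, Filter.eventually_gt_atTop m] with N h1 h2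
      exact (hν2 N n h1 m h2).symm
    have h3 : ClusterPt (∫ z, f z ∂(μ : Measure (ℕ → Set.Icc (-1 : ℝ) 1)))
        (nhds (dist (u n) (u m))) := h1.clusterPt.mono h2
    exact eq_of_nhds_neBot h3
  have hmem : ∀ n, MemLp (fun z : ℕ → Set.Icc (-1 : ℝ) 1 => (z n : ℝ) / c n) 1
      (μ : Measure (ℕ → Set.Icc (-1 : ℝ) 1)) := by
    intro n
    rw [memLp_one_iff_integrable]
    exact (BoundedContinuousFunction.mkOfCompact ⟨_, hcont n⟩).integrable _
  refine ⟨μ, fun n => (hmem n).toLp, fun n m => ?_⟩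
  rw [← MemLp.toLp_sub, L1.norm_eq_integral_norm, ← key n m]
  refine integral_congr_ae ?_
  filter_upwards [((hmem n).sub (hmem m)).coeFn_toLp] with z hz
  rw [hz]
  simp [Real.norm_eq_abs]

lemma aux_extend_dense {F : Type*} [NormedAddCommGroup F] [CompleteSpace F] (u : ℕ → S)
    (hu : DenseRange u) (φ : ℕ → F) (h : ∀ n m, ‖φ n - φ m‖ = dist (u n) (u m)) :
    ∃ ψ : S → F, ∀ x y, ‖ψ x - ψ y‖ = dist x y := by
  have h1 : ∀ x : S, ∃ (σ : ℕ → ℕ) (l : F), Filter.Tendsto (u ∘ σ) Filter.atTop (nhds x) ∧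
      Filter.Tendsto (φ ∘ σ) Filter.atTop (nhds l) := by
    intro x
    have hx : x ∈ closure (Set.range u) := hu x
    obtain ⟨s, hs, hsx⟩ := mem_closure_iff_seq_limit.1 hx
    choose σ hσ using hs
    have hus : u ∘ σ = s := funext hσ
    have hcau : CauchySeq (φ ∘ σ) := by
      have h2 := hsx.cauchySeq
      rw [← hus] at h2
      rw [Metric.cauchySeq_iff] at h2 ⊢
      intro ε hε
      obtain ⟨N, hN⟩ := h2 ε hε
      refine ⟨N, fun a ha b hb => ?_⟩
      have := hN a ha b hb
      rwa [dist_eq_norm, Function.comp, Function.comp, h]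
    obtain ⟨l, hl⟩ := cauchySeq_tendsto_of_complete hcau
    exact ⟨σ, l, hus ▸ hsx, hl⟩
  choose σ ψ hσ hψ using h1
  refine ⟨ψ, fun x y => ?_⟩
  have a := ((hψ x).sub (hψ y)).norm
  have b := (hσ x).dist (hσ y)
  refine tendsto_nhds_unique a (b.congr fun n => ?_)
  exact (h _ _).symm

end AuxFinal

/-- Every Busemann surface is `L₁`-embeddable. -/
theorem busemann_surface_L1_embeddable {S : Type} [MetricSpace S]
    (hS : IsBusemannSurface S) :
    ∃ (Ω : Type) (m : MeasurableSpace Ω) (μ : @MeasureTheory.Measure Ω m)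
      (φ : S → MeasureTheory.Lp ℝ 1 μ),
      ∀ x y : S, ‖φ x - φ y‖ = dist x y := by
  obtain ⟨e⟩ := hS.2
  have : Nonempty S := ⟨e.symm (0, 0)⟩
  have : TopologicalSpace.SeparableSpace S := e.symm.surjective.denseRange.separableSpace
    e.symm.continuous
  obtain ⟨μ, φ, hφ⟩ := aux_meas_lim hS (TopologicalSpace.denseSeq S)
  obtain ⟨ψ, hψ⟩ := aux_extend_dense (TopologicalSpace.denseSeq S)
    (TopologicalSpace.denseRange_denseSeq S) φ hφ
  exact ⟨_, _, μ, ψ, hψ⟩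
end

section
/- Let (S,d) be a Busemann surface and let ℓ be a line of S. Then S \ ℓ has exactly two connected components. -/
open Metric Set MeasureTheory

section JordanLine

open Filter Topology

lemma jl_log_ex {A : Type*} [TopologicalSpace A] [SimplyConnectedSpace A]
    [LocallyPathConnectedSpace A] (f : A → ℂ) (hf : Continuous f) (h0 : ∀ a, f a ≠ 0) :
    ∃ M : A → ℂ, Continuous M ∧ ∀ a, Complex.exp (M a) = f a := by
  obtain ⟨a0⟩ : Nonempty A := inferInstance
  obtain ⟨F, ⟨_, hF⟩, _⟩ := Complex.isCoveringMap_exp.existsUnique_continuousMap_lifts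
    (⟨fun a => ⟨f a, h0 a⟩, hf.subtype_mk _⟩ : C(A, {z : ℂ // z ≠ 0})) a0 (Complex.log (f a0))
    (Subtype.ext (Complex.exp_log (h0 a0)))
  exact ⟨F, F.continuous, fun a => congrArg Subtype.val (congrFun hF a)⟩

lemma jl_int_const {A : Type*} [TopologicalSpace A] {s : Set A} (hs : IsPreconnected s)
    {u v : A → ℂ} (hu : ContinuousOn u s) (hv : ContinuousOn v s)
    (h : ∀ x ∈ s, Complex.exp (u x) = Complex.exp (v x)) :
    ∃ n : ℤ, ∀ x ∈ s, u x = v x + n * (2 * Real.pi * Complex.I) := by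
  rcases s.eq_empty_or_nonempty with rfl | ⟨x0, hx0⟩
  · exact ⟨0, by simp⟩
  obtain ⟨n, hn⟩ := Complex.exp_eq_exp_iff_exists_int.1 (h x0 hx0)
  refine ⟨n, ?_⟩
  have := Complex.isCoveringMap_exp.eqOn_of_comp_eqOn hs hu
    (g₂ := fun x => v x + n * (2 * Real.pi * Complex.I)) (hv.add continuousOn_const)
    (fun x hx => Subtype.ext (by
      simp only [Function.comp]
      rw [h x hx, Complex.exp_add, Complex.exp_int_mul_two_pi_mul_I, mul_one])) hx0 hn
  exact this

lemma jl_no_log (α : ℤ) (p : ℂ) (ρ : ℝ) (M : ℂ → ℂ) (hM : ContinuousOn M {z | ρ < ‖z‖})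
    (h : ∀ z, ρ < ‖z‖ → Complex.exp (M z) = (z - p) ^ α) : α = 0 := by
  set R : ℝ := |ρ| + ‖p‖ + 1 with hR
  have hRpos : 0 < R := by positivity
  set c : ℝ → ℂ := fun θ => p + R * Complex.exp (θ * Complex.I) with hc
  have hcc : Continuous c := by fun_prop
  have hcn : ∀ θ, ρ < ‖c θ‖ := by
    intro θ
    have h1 : ‖(R : ℂ) * Complex.exp (θ * Complex.I)‖ = R := by
      rw [norm_mul, Complex.norm_exp_ofReal_mul_I, Complex.norm_real, mul_one,
        Real.norm_of_nonneg hRpos.le]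
    have h2 : ‖(R : ℂ) * Complex.exp (θ * Complex.I)‖ ≤ ‖c θ‖ + ‖p‖ := by
      have : (R : ℂ) * Complex.exp (θ * Complex.I) = c θ - p := by simp [hc]
      rw [this]; exact norm_sub_le _ _
    have := le_abs_self ρ
    linarith
  have hR0 : (R : ℂ) ≠ 0 := by exact_mod_cast hRpos.ne'
  obtain ⟨n, hn⟩ := jl_int_const (A := ℝ) isPreconnected_univ
    (u := fun θ => M (c θ)) (v := fun θ => α * (Complex.log R + θ * Complex.I))
    (hM.comp hcc.continuousOn (fun θ _ => hcn θ)) (by fun_prop) (by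
      intro θ _
      rw [h _ (hcn θ), Complex.exp_int_mul, Complex.exp_add, Complex.exp_log hR0]
      simp [hc])
  have e0 := hn 0 trivial
  have e1 := hn (2 * Real.pi) trivial
  have : c (2 * Real.pi) = c 0 := by
    simp [hc, Complex.exp_two_pi_mul_I]
  rw [this, e0] at e1
  have h3 : (α : ℂ) * (2 * Real.pi * Complex.I) = 0 := by
    push_cast at e1
    linear_combination -e1
  have h4 : (2 * Real.pi * Complex.I : ℂ) ≠ 0 := Complex.two_pi_I_ne_zero
  exact_mod_cast (mul_eq_zero.1 h3).resolve_right h4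

lemma jl_ray (r : ℝ → ℂ) (hr : Continuous r) (hinf : Tendsto r atTop (cocompact ℂ)) :
    ∃ M : ℂ → ℂ, ContinuousOn M {z | ∀ t, 0 ≤ t → r t ≠ z} ∧
      ∀ z ∈ {z | ∀ t, 0 ≤ t → r t ≠ z}, Complex.exp (M z) = z - r 0 := by
  set A : Set ℂ := {z | ∀ t, 0 ≤ t → r t ≠ z} with hA
  rcases A.eq_empty_or_nonempty with h | ⟨z0, hz0⟩
  · rw [h]; exact ⟨fun _ => 0, by simp, by simp⟩
  set τ : ℝ → ℝ := fun s => max 0 (|s|⁻¹ - 1) with hτ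
  have hτ0 : ∀ s, 0 ≤ τ s := fun s => le_max_left _ _
  have hne : ∀ z ∈ A, ∀ s, z - r (τ s) ≠ 0 := fun z hz s =>
    sub_ne_zero.2 (Ne.symm (hz _ (hτ0 s)))
  set K : ℝ → ℂ := Function.update (fun s => (z0 - r (τ s))⁻¹) 0 0 with hK
  have hKc : Continuous K := by
    rw [continuous_iff_continuousAt]
    intro s
    by_cases hs : s = 0
    · subst hs
      rw [hK, continuousAt_update_same]
      have h1 : Tendsto τ (𝓝[≠] 0) atTop := by
        refine tendsto_atTop_mono (fun s => le_max_right _ _) ?_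
        refine tendsto_atTop_add_const_right _ _ ?_
        refine tendsto_inv_nhdsGT_zero.comp ?_
        refine tendsto_nhdsWithin_iff.2 ⟨?_, ?_⟩
        · have : Tendsto (fun s : ℝ => |s|) (𝓝 0) (𝓝 |0|) := continuous_abs.tendsto 0
          rw [abs_zero] at this
          exact this.mono_left nhdsWithin_le_nhds
        · filter_upwards [self_mem_nhdsWithin] with s hs
          exact abs_pos.2 hs
      have h2 := hinf.comp h1
      have h3 : Tendsto (fun s => z0 - r (τ s)) (𝓝[≠] 0) (cocompact ℂ) :=
        (Homeomorph.subLeft z0).isClosedEmbedding.tendsto_cocompact.comp h2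
      exact (tendsto_inv₀_cobounded (α := ℂ)).comp
        (by rw [Metric.cobounded_eq_cocompact]; exact h3)
    · rw [hK, continuousAt_update_of_ne hs]
      have : ContinuousAt τ s := by
        refine ContinuousAt.sup continuousAt_const ?_
        exact (continuous_abs.continuousAt.inv₀ (abs_ne_zero.2 hs)).sub continuousAt_const
      exact ContinuousAt.inv₀ (continuousAt_const.sub (hr.continuousAt.comp this)) (hne z0 hz0 s)
  have hKne : ∀ z ∈ A, ∀ s, 1 + (z - z0) * K s ≠ 0 := by
    intro z hz s
    by_cases hs : s = 0
    · subst hs; simp [hK]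
    · have h1 := hne z hz s
      have h2 := hne z0 hz0 s
      have : 1 + (z - z0) * K s = (z - r (τ s)) / (z0 - r (τ s)) := by
        rw [hK, Function.update_of_ne hs]
        field_simp
        ring
      rw [this]; exact div_ne_zero h1 h2
  let H : C(unitInterval × A, {z : ℂ // z ≠ 0}) :=
    ⟨fun x => ⟨1 + ((x.2 : ℂ) - z0) * K x.1, hKne _ x.2.2 _⟩, by
      refine Continuous.subtype_mk ?_ _
      fun_prop⟩
  have hH0 : ∀ a : A, H (0, a) = ⟨Complex.exp ((0 : C(A, ℂ)) a), Complex.exp_ne_zero _⟩ := by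
    intro a
    apply Subtype.ext
    simp [H, hK]
  let Φ := Complex.isCoveringMap_exp.liftHomotopy H 0 hH0
  have hΦ : ∀ a : A, Complex.exp (Φ (1, a)) = 1 + ((a : ℂ) - z0) * K 1 := fun a =>
    congrArg Subtype.val
      (congrFun (Complex.isCoveringMap_exp.liftHomotopy_lifts H 0 hH0) (1, a))
  classical
  refine ⟨fun z => if hz : z ∈ A then Φ (1, ⟨z, hz⟩) + Complex.log (z0 - r 0) else 0, ?_, ?_⟩
  · rw [continuousOn_iff_continuous_domRestrict]
    have : A.domRestrict (fun z => if hz : z ∈ A then Φ (1, ⟨z, hz⟩) + Complex.log (z0 - r 0) else 0)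
      = fun a : A => Φ (1, a) + Complex.log (z0 - r 0) := by
      ext a; simp [Set.domRestrict]
    rw [this]
    fun_prop
  · intro z hz
    have h0 : z0 - r 0 ≠ 0 := sub_ne_zero.2 (Ne.symm (hz0 0 le_rfl))
    simp only [hz, dif_pos]
    rw [Complex.exp_add, Complex.exp_log h0, hΦ]
    have : K 1 = (z0 - r 0)⁻¹ := by simp [hK, hτ]
    rw [this]
    field_simp
    ring

lemma jl_tendsto {J : ℝ → ℂ} (hJ : IsClosedEmbedding J) :
    Tendsto J atTop (cocompact ℂ) ∧ Tendsto J atBot (cocompact ℂ) := by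
  have := hJ.tendsto_cocompact
  rw [cocompact_eq_atBot_atTop, tendsto_sup] at this
  exact ⟨this.2, this.1⟩

lemma jl_A {J : ℝ → ℂ} (hJ : IsClosedEmbedding J) : ¬ IsPreconnected (range J)ᶜ := by
  intro hcon
  obtain ⟨M₁, hc₁, he₁⟩ := jl_ray J hJ.continuous (jl_tendsto hJ).1
  obtain ⟨M₂, hc₂, he₂⟩ := jl_ray (fun t => J (-t)) (hJ.continuous.comp continuous_neg)
    ((jl_tendsto hJ).2.comp tendsto_neg_atTop_atBot)
  set A₁ : Set ℂ := {z | ∀ t, 0 ≤ t → J t ≠ z} with hA₁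
  set A₂ : Set ℂ := {z | ∀ t, 0 ≤ t → J (-t) ≠ z} with hA₂
  have o₁ : IsOpen A₁ := by
    have : A₁ = (J '' Ici 0)ᶜ := by ext z; simp [hA₁]
    rw [this]; exact (hJ.isClosedMap _ isClosed_Ici).isOpen_compl
  have o₂ : IsOpen A₂ := by
    have : A₂ = (J '' Iic 0)ᶜ := by
      ext z; simp only [hA₂, mem_ofPred_eq, mem_compl_iff, mem_image, mem_Iic, not_exists, not_and]
      exact ⟨fun h t ht => by simpa using h (-t) (by linarith), fun h t ht => h _ (by linarith)⟩
    rw [this]; exact (hJ.isClosedMap _ isClosed_Iic).isOpen_compl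
  have s₁ : (range J)ᶜ ⊆ A₁ := fun z hz t _ h => hz ⟨t, h⟩
  have s₂ : (range J)ᶜ ⊆ A₂ := fun z hz t _ h => hz ⟨-t, h⟩
  have s₁₂ : ∀ z ∈ A₁, z ∈ A₂ → z ∈ (range J)ᶜ := by
    rintro z h1 h2 ⟨t, rfl⟩
    rcases le_total 0 t with h | h
    · exact h1 t h rfl
    · exact h2 (-t) (by linarith) (by simp)
  have su : ∀ z, z ≠ J 0 → z ∉ A₁ → z ∈ A₂ := by
    intro z hz h1 t ht h
    simp only [hA₁, mem_ofPred_eq, not_forall, not_not] at h1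
    obtain ⟨s, hs, hsz⟩ := h1
    have := hJ.injective (hsz.trans h.symm)
    have : s = 0 := by linarith
    subst this
    exact hz hsz.symm
  obtain ⟨n, hn⟩ := jl_int_const hcon (hc₁.mono s₁) (hc₂.mono s₂) (by
    intro z hz
    rw [he₁ z (s₁ hz), he₂ z (s₂ hz)]; simp)
  classical
  set M : ℂ → ℂ := fun z => if z ∈ A₁ then M₁ z else M₂ z + n * (2 * Real.pi * Complex.I) with hM
  have hM1 : ∀ z ∈ A₁, M z = M₁ z := fun z hz => by simp [hM, hz]
  have hM2 : ∀ z ∈ A₂, M z = M₂ z + n * (2 * Real.pi * Complex.I) := fun z hz => by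
    by_cases h : z ∈ A₁
    · rw [hM1 z h, hn z (s₁₂ z h hz)]
    · simp [hM, h]
  have key := jl_no_log 1 (J 0) ‖J 0‖ M (by
      intro z hz
      have hz0 : z ≠ J 0 := by rintro rfl; exact lt_irrefl ‖J 0‖ hz
      apply ContinuousAt.continuousWithinAt
      by_cases h : z ∈ A₁
      · refine (hc₁.continuousAt (o₁.mem_nhds h)).congr ?_
        filter_upwards [o₁.mem_nhds h] with w hw using (hM1 w hw).symm
      · have h2 := su z hz0 h
        refine ((hc₂.continuousAt (o₂.mem_nhds h2)).add
          (continuousAt_const (y := (n : ℂ) * (2 * Real.pi * Complex.I)))).congr ?_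
        filter_upwards [o₂.mem_nhds h2] with w hw using (hM2 w hw).symm) (by
      intro z hz
      have hz0 : z ≠ J 0 := by rintro rfl; exact lt_irrefl _ hz
      rw [zpow_one]
      by_cases h : z ∈ A₁
      · rw [hM1 z h, he₁ z h]
      · have h2 := su z hz0 h
        rw [hM2 z h2, Complex.exp_add, Complex.exp_int_mul_two_pi_mul_I, mul_one, he₂ z h2]
        simp)
  exact one_ne_zero key

lemma jl_keyB {L U : Set ℂ} (hU : IsOpen U) (hfr : frontier U ⊆ L) {p : ℂ} (hp : p ∈ U)
    (hpL : p ∉ L) (α : ℤ) (E : ℂ → ℂ) (hE : ContinuousOn E (U ∪ L)) (hE0 : ∀ z ∈ U ∪ L, E z ≠ 0)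
    (φ : ℂ → ℂ) (hφc : Continuous φ) (hφ : ∀ z ∈ L, Complex.exp (φ z) = (z - p) ^ α * E z)
    (Λ : ℂ → ℂ) (R : ℝ) (hΛc : ContinuousOn Λ {z | R < ‖z‖})
    (hΛ : ∀ z, R < ‖z‖ → z ∈ U → Complex.exp (Λ z) = (z - p) ^ α * E z)
    (hφΛ : ∀ z ∈ L, R < ‖z‖ → φ z = Λ z) (hpR : ‖p‖ ≤ R) : α = 0 := by
  classical
  have hcl : closure U ⊆ U ∪ L := by
    rw [closure_eq_self_union_frontier]; exact union_subset_union_right _ hfr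
  have hclc : closure Uᶜ = Uᶜ := hU.isClosed_compl.closure_eq
  set G : ℂ → ℂ := U.piecewise E (fun z => Complex.exp (φ z) * (z - p) ^ (-α)) with hG
  have hnp : ∀ z, z ∉ U → z - p ≠ 0 := fun z hz => sub_ne_zero.2 (by rintro rfl; exact hz hp)
  have hGc : Continuous G := by
    refine continuous_piecewise ?_ (hE.mono hcl) ?_
    · intro z hz
      have hzL := hfr hz
      have : z - p ≠ 0 := sub_ne_zero.2 (by rintro rfl; exact hpL hzL)
      rw [hφ z hzL, zpow_neg]
      have := zpow_ne_zero α this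
      field_simp
    · rw [hclc]
      refine (hφc.cexp.continuousOn).mul ?_
      exact ContinuousOn.zpow₀ (by fun_prop) _ (fun z hz => Or.inl (hnp z hz))
  have hG0 : ∀ z, G z ≠ 0 := by
    intro z
    by_cases hz : z ∈ U
    · rw [hG, piecewise_eq_of_mem _ _ _ hz]; exact hE0 z (Or.inl hz)
    · rw [hG, piecewise_eq_of_notMem _ _ _ hz]
      exact mul_ne_zero (Complex.exp_ne_zero _) (zpow_ne_zero _ (hnp z hz))
  obtain ⟨M, hMc, hM⟩ := jl_log_ex G hGc hG0
  have := jl_no_log (-α) p R (fun z => M z - U.piecewise Λ φ z) (by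
      refine hMc.continuousOn.sub ?_
      refine ContinuousOn.piecewise ?_ (hΛc.mono inter_subset_left) hφc.continuousOn
      rintro z ⟨hz, hz'⟩
      exact (hφΛ z (hfr hz') hz).symm) (by
      intro z hz
      have hzp : z - p ≠ 0 := sub_ne_zero.2 (by rintro rfl; linarith)
      have hzp' := zpow_ne_zero α hzp
      rw [Complex.exp_sub, hM]
      by_cases h : z ∈ U
      · rw [hG, piecewise_eq_of_mem _ _ _ h, piecewise_eq_of_mem _ _ _ h, hΛ z hz h, zpow_neg]
        have := hE0 z (Or.inl h)
        field_simp
      · rw [hG, piecewise_eq_of_notMem _ _ _ h, piecewise_eq_of_notMem _ _ _ h]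
        have := Complex.exp_ne_zero (φ z)
        field_simp)
  simpa using this

lemma jl_Lam (p r : ℂ) : ∃ Λ : ℂ → ℂ, ContinuousOn Λ {z | ‖p‖ + 2 * ‖r‖ < ‖z‖} ∧
    ∀ z, ‖p‖ + 2 * ‖r‖ < ‖z‖ → Complex.exp (Λ z) = (z - p) / (z - r) := by
  have key : ∀ z, ‖p‖ + 2 * ‖r‖ < ‖z‖ → z - r ≠ 0 ∧ (z - p) / (z - r) ∈ Complex.slitPlane := by
    intro z hz
    have h1 : ‖z‖ ≤ ‖z - r‖ + ‖r‖ := by simpa using norm_add_le (z - r) r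
    have h2 : ‖r - p‖ ≤ ‖r‖ + ‖p‖ := norm_sub_le _ _
    have h3 : 0 < ‖z - r‖ := by linarith [norm_nonneg p, norm_nonneg r]
    have h4 : z - r ≠ 0 := norm_pos_iff.1 h3
    refine ⟨h4, ?_⟩
    have : (z - p) / (z - r) = 1 + (r - p) / (z - r) := by field_simp; ring
    rw [this]
    apply Complex.mem_slitPlane_of_norm_lt_one
    rw [norm_div, div_lt_one h3]
    linarith
  refine ⟨fun z => Complex.log ((z - p) / (z - r)), ?_, ?_⟩
  · refine ContinuousOn.clog ?_ (fun z hz => (key z hz).2)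
    exact ContinuousOn.div (by fun_prop) (by fun_prop) (fun z hz => (key z hz).1)
  · intro z hz
    exact Complex.exp_log (Complex.slitPlane_ne_zero (key z hz).2)

lemma jl_phi {J : ℝ → ℂ} (hJ : IsClosedEmbedding J) (f : ℂ → ℂ) (hf : Continuous (f ∘ J))
    (hf0 : ∀ t, f (J t) ≠ 0) (Λ : ℂ → ℂ) (R : ℝ) (hΛc : ContinuousOn Λ {z | R < ‖z‖})
    (hΛ : ∀ z, R < ‖z‖ → Complex.exp (Λ z) = f z) :
    ∃ (φ : ℂ → ℂ) (k : ℤ) (R' : ℝ), Continuous φ ∧ (∀ z ∈ range J, Complex.exp (φ z) = f z) ∧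
      ∀ t, R' < ‖J t‖ → (0 ≤ t → φ (J t) = Λ (J t) + k * (2 * Real.pi * Complex.I)) ∧
        (t ≤ 0 → φ (J t) = Λ (J t)) := by
  obtain ⟨u, huc, hu⟩ := jl_log_ex (f ∘ J) hf hf0
  have ev : ∀ᶠ z in cocompact ℂ, R < ‖z‖ := tendsto_norm_cocompact_atTop.eventually_gt_atTop R
  obtain ⟨T₁, hT₁⟩ := eventually_atTop.1 ((jl_tendsto hJ).1.eventually ev)
  obtain ⟨T₂, hT₂⟩ := eventually_atBot.1 ((jl_tendsto hJ).2.eventually ev)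
  obtain ⟨n₁, hn₁⟩ := jl_int_const (s := Ici T₁) isPreconnected_Ici huc.continuousOn
    (v := fun t => Λ (J t)) (hΛc.comp hJ.continuous.continuousOn (fun t ht => hT₁ t ht))
    (fun t ht => by rw [hu, hΛ _ (hT₁ t ht)]; rfl)
  obtain ⟨n₂, hn₂⟩ := jl_int_const (s := Iic T₂) isPreconnected_Iic huc.continuousOn
    (v := fun t => Λ (J t)) (hΛc.comp hJ.continuous.continuousOn (fun t ht => hT₂ t ht))
    (fun t ht => by rw [hu, hΛ _ (hT₂ t ht)]; rfl)
  obtain ⟨g, hg⟩ := ContinuousMap.exists_extension' hJ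
    (⟨fun t => u t - n₂ * (2 * Real.pi * Complex.I), by fun_prop⟩ : C(ℝ, ℂ))
  have hg' : ∀ t, g (J t) = u t - n₂ * (2 * Real.pi * Complex.I) := fun t => congrFun hg t
  obtain ⟨R', hR'⟩ := ((isCompact_Icc (a := min 0 T₂) (b := max 0 T₁)).image
    hJ.continuous).isBounded.exists_norm_le
  refine ⟨g, n₁ - n₂, R', g.continuous, ?_, ?_⟩
  · rintro _ ⟨t, rfl⟩
    rw [hg', Complex.exp_sub, Complex.exp_int_mul_two_pi_mul_I, div_one, hu]; rfl
  · intro t ht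
    have hout : ¬ (min 0 T₂ ≤ t ∧ t ≤ max 0 T₁) := fun h =>
      absurd (hR' _ (mem_image_of_mem J h)) (not_le.2 ht)
    constructor
    · intro h0
      have : T₁ ≤ t := by
        by_contra h
        exact hout ⟨(min_le_left _ _).trans h0, (not_le.1 h).le.trans (le_max_right _ _)⟩
      rw [hg', hn₁ t this]; push_cast; ring
    · intro h0
      have : t ≤ T₂ := by
        by_contra h
        exact hout ⟨(min_le_right _ _).trans (not_le.1 h).le, h0.trans (le_max_left _ _)⟩
      rw [hg', hn₂ t this]; ring

lemma jl_comp {L : Set ℂ} (hL : IsClosed L) {p : ℂ} :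
    IsOpen (connectedComponentIn Lᶜ p) ∧ frontier (connectedComponentIn Lᶜ p) ⊆ L := by
  have ho : ∀ p, IsOpen (connectedComponentIn Lᶜ p) := fun p =>
    hL.isOpen_compl.connectedComponentIn
  refine ⟨ho p, ?_⟩
  intro z hz
  by_contra hzL
  have hz' : z ∈ connectedComponentIn Lᶜ z := mem_connectedComponentIn hzL
  rw [(ho p).frontier_eq] at hz
  obtain ⟨w, hw1, hw2⟩ := mem_closure_iff.1 hz.1 _ (ho z) hz'
  have e1 := connectedComponentIn_eq hw1
  have e2 := connectedComponentIn_eq hw2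
  exact hz.2 (by rw [e2, ← e1]; exact hz')

lemma jl_B {J : ℝ → ℂ} (hJ : IsClosedEmbedding J) {p q r : ℂ}
    (hp : p ∉ range J) (hq : q ∉ range J) (hr : r ∉ range J)
    (hpq : connectedComponentIn (range J)ᶜ p ≠ connectedComponentIn (range J)ᶜ q)
    (hpr : connectedComponentIn (range J)ᶜ p ≠ connectedComponentIn (range J)ᶜ r)
    (hqr : connectedComponentIn (range J)ᶜ q ≠ connectedComponentIn (range J)ᶜ r) : False := by
  have hne : ∀ {x : ℂ}, x ∉ range J → ∀ t, J t - x ≠ 0 := fun hx t =>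
    sub_ne_zero.2 (fun h => hx ⟨t, h⟩)
  have hJc := hJ.continuous
  have hfc : ∀ x : ℂ, Continuous ((fun z => (z - x) / (z - r)) ∘ J) := fun x => by
    refine Continuous.div ?_ ?_ (hne hr) <;> fun_prop
  obtain ⟨Λ₁, hΛ₁c, hΛ₁⟩ := jl_Lam p r
  obtain ⟨Λ₂, hΛ₂c, hΛ₂⟩ := jl_Lam q r
  obtain ⟨φ₁, k₁, R₁, hφ₁c, hφ₁, hk₁⟩ := jl_phi hJ (fun z => (z - p) / (z - r)) (hfc p)
    (fun t => div_ne_zero (hne hp t) (hne hr t)) Λ₁ _ hΛ₁c hΛ₁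
  obtain ⟨φ₂, k₂, R₂, hφ₂c, hφ₂, hk₂⟩ := jl_phi hJ (fun z => (z - q) / (z - r)) (hfc q)
    (fun t => div_ne_zero (hne hq t) (hne hr t)) Λ₂ _ hΛ₂c hΛ₂
  obtain ⟨a, b, hab, hab0⟩ : ∃ a b : ℤ, a * k₁ + b * k₂ = 0 ∧ ¬ (a = 0 ∧ b = 0) := by
    by_cases h : k₁ = 0 ∧ k₂ = 0
    · exact ⟨1, 0, by simp [h.1], by simp⟩
    · exact ⟨k₂, -k₁, by ring, fun h' => h ⟨by simpa using h'.2, h'.1⟩⟩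
  have hab' : (a : ℂ) * k₁ + b * k₂ = 0 := by exact_mod_cast hab
  set R : ℝ := max (max R₁ R₂) (‖p‖ + ‖q‖ + 2 * ‖r‖) with hR
  have hR1 : R₁ ≤ R := (le_max_left _ _).trans (le_max_left _ _)
  have hR2 : R₂ ≤ R := (le_max_right _ _).trans (le_max_left _ _)
  have hR3 : ‖p‖ + ‖q‖ + 2 * ‖r‖ ≤ R := le_max_right _ _
  have np := norm_nonneg p
  have nq := norm_nonneg q
  have nr := norm_nonneg r
  set φ : ℂ → ℂ := fun z => a * φ₁ z + b * φ₂ z with hφ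
  set Λ : ℂ → ℂ := fun z => a * Λ₁ z + b * Λ₂ z with hΛ
  have hφc : Continuous φ := by fun_prop
  have hΛc : ContinuousOn Λ {z | R < ‖z‖} := by
    have h1 : ContinuousOn Λ₁ {z | R < ‖z‖} := hΛ₁c.mono (fun z (hz : R < ‖z‖) =>
      show ‖p‖ + 2 * ‖r‖ < ‖z‖ by linarith)
    have h2 : ContinuousOn Λ₂ {z | R < ‖z‖} := hΛ₂c.mono (fun z (hz : R < ‖z‖) =>
      show ‖q‖ + 2 * ‖r‖ < ‖z‖ by linarith)
    fun_prop
  have hφΛ : ∀ z ∈ range J, R < ‖z‖ → φ z = Λ z := by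
    rintro _ ⟨t, rfl⟩ ht
    have h1 := hk₁ t (by linarith)
    have h2 := hk₂ t (by linarith)
    rcases le_total 0 t with h | h
    · simp only [hφ, hΛ, h1.1 h, h2.1 h]
      linear_combination (2 * Real.pi * Complex.I) * hab'
    · simp only [hφ, hΛ, h1.2 h, h2.2 h]
  have hφe : ∀ z ∈ range J, Complex.exp (φ z) =
      ((z - p) / (z - r)) ^ a * ((z - q) / (z - r)) ^ b := fun z hz => by
    simp only [hφ]
    rw [Complex.exp_add, Complex.exp_int_mul, Complex.exp_int_mul, hφ₁ z hz, hφ₂ z hz]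
  have hΛe : ∀ z, R < ‖z‖ → Complex.exp (Λ z) =
      ((z - p) / (z - r)) ^ a * ((z - q) / (z - r)) ^ b := fun z hz => by
    simp only [hΛ]
    rw [Complex.exp_add, Complex.exp_int_mul, Complex.exp_int_mul, hΛ₁ z (by linarith),
      hΛ₂ z (by linarith)]
  have hcl : IsClosed (range J) := hJ.isClosed_range
  have hoff : ∀ x y : ℂ, y ∉ range J →
      connectedComponentIn (range J)ᶜ x ≠ connectedComponentIn (range J)ᶜ y →
      ∀ z ∈ connectedComponentIn (range J)ᶜ x ∪ range J, z - y ≠ 0 := by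
    rintro x y hy hxy z hz h
    rw [sub_eq_zero] at h
    subst h
    rcases hz with hz | hz
    · exact hxy (connectedComponentIn_eq hz)
    · exact hy hz
  have ha : a = 0 := by
    refine jl_keyB (jl_comp hcl).1 (jl_comp hcl).2 (mem_connectedComponentIn (x := p) hp) hp a
      (fun z => ((z - r) ^ a)⁻¹ * ((z - q) / (z - r)) ^ b) ?_ ?_ φ hφc ?_ Λ R hΛc ?_ hφΛ
      (by linarith)
    · have h1 := hoff p r hr hpr
      have h2 := hoff p q hq hpq
      refine ContinuousOn.mul (ContinuousOn.inv₀ (ContinuousOn.zpow₀ (by fun_prop) _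
        fun z hz => Or.inl (h1 z hz)) fun z hz => zpow_ne_zero _ (h1 z hz)) ?_
      refine ContinuousOn.zpow₀ (ContinuousOn.div (by fun_prop) (by fun_prop) h1) _
        fun z hz => Or.inl (div_ne_zero (h2 z hz) (h1 z hz))
    · intro z hz
      have h1 := hoff p r hr hpr z hz
      have h2 := hoff p q hq hpq z hz
      exact mul_ne_zero (inv_ne_zero (zpow_ne_zero _ h1)) (zpow_ne_zero _ (div_ne_zero h2 h1))
    · intro z hz
      rw [hφe z hz, div_zpow (z - p)]; ring
    · intro z hz _
      rw [hΛe z hz, div_zpow (z - p)]; ring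
  have hb : b = 0 := by
    refine jl_keyB (jl_comp hcl).1 (jl_comp hcl).2 (mem_connectedComponentIn (x := q) hq) hq b
      (fun z => ((z - r) ^ b)⁻¹ * ((z - p) / (z - r)) ^ a) ?_ ?_ φ hφc ?_ Λ R hΛc ?_ hφΛ
      (by linarith)
    · have h1 := hoff q r hr hqr
      have h2 := hoff q p hp hpq.symm
      refine ContinuousOn.mul (ContinuousOn.inv₀ (ContinuousOn.zpow₀ (by fun_prop) _
        fun z hz => Or.inl (h1 z hz)) fun z hz => zpow_ne_zero _ (h1 z hz)) ?_
      refine ContinuousOn.zpow₀ (ContinuousOn.div (by fun_prop) (by fun_prop) h1) _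
        fun z hz => Or.inl (div_ne_zero (h2 z hz) (h1 z hz))
    · intro z hz
      have h1 := hoff q r hr hqr z hz
      have h2 := hoff q p hp hpq.symm z hz
      exact mul_ne_zero (inv_ne_zero (zpow_ne_zero _ h1)) (zpow_ne_zero _ (div_ne_zero h2 h1))
    · intro z hz
      rw [hφe z hz, div_zpow (z - q)]; ring
    · intro z hz _
      rw [hΛe z hz, div_zpow (z - q)]; ring
  exact hab0 ⟨ha, hb⟩

lemma jl_two {J : ℝ → ℂ} (hJ : IsClosedEmbedding J) :
    ∃ x y : ℂ, x ∉ range J ∧ y ∉ range J ∧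
      connectedComponentIn (range J)ᶜ x ≠ connectedComponentIn (range J)ᶜ y ∧
      ∀ z, z ∉ range J → connectedComponentIn (range J)ᶜ z = connectedComponentIn (range J)ᶜ x ∨
        connectedComponentIn (range J)ᶜ z = connectedComponentIn (range J)ᶜ y := by
  have h : ∃ x y : ℂ, x ∉ range J ∧ y ∉ range J ∧
      connectedComponentIn (range J)ᶜ x ≠ connectedComponentIn (range J)ᶜ y := by
    by_contra! hall
    refine jl_A hJ ?_
    rcases ((range J)ᶜ).eq_empty_or_nonempty with h0 | ⟨x, hx⟩
    · rw [h0]; exact isPreconnected_empty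
    have : (range J)ᶜ = connectedComponentIn (range J)ᶜ x := by
      refine Subset.antisymm (fun y hy => ?_) (connectedComponentIn_subset _ _)
      rw [hall x y hx hy]
      exact mem_connectedComponentIn hy
    rw [this]
    exact isPreconnected_connectedComponentIn
  obtain ⟨x, y, hx, hy, hxy⟩ := h
  refine ⟨x, y, hx, hy, hxy, fun z hz => ?_⟩
  by_contra! hcon
  exact jl_B hJ hz hx hy hcon.1 hcon.2 hxy

end JordanLine

/-- In a Busemann surface, the complement of any line has exactly two
connected components. -/
theorem busemann_surface_line_separates {S : Type*} [MetricSpace S]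
    (hS : IsBusemannSurface S) (L : Set S) (hL : IsLineSet L) :
    {H : Set S | IsOpenHalfplane L H}.encard = 2 := by
  obtain ⟨-, ⟨h0⟩⟩ := hS
  obtain ⟨ℓ, hℓ, rfl⟩ := hL
  let h : S ≃ₜ ℂ := h0.trans Complex.equivRealProdCLM.symm.toHomeomorph
  have hJ : Topology.IsClosedEmbedding (h ∘ ℓ) :=
    h.isClosedEmbedding.comp hℓ.isClosedEmbedding
  obtain ⟨x, y, hx, hy, hxy, hall⟩ := jl_two hJ
  have hr : (range (h ∘ ℓ))ᶜ = h '' (range ℓ)ᶜ := by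
    rw [range_comp, image_compl_eq h.bijective]
  have hmem : ∀ s, h s ∉ range (h ∘ ℓ) ↔ s ∉ range ℓ := by
    intro s; rw [range_comp, h.injective.mem_set_image]
  have hC : ∀ s, s ∉ range ℓ →
      h '' connectedComponentIn (range ℓ)ᶜ s = connectedComponentIn (range (h ∘ ℓ))ᶜ (h s) := by
    intro s hs
    rw [hr]; exact h.image_connectedComponentIn hs
  obtain ⟨x, rfl⟩ := h.surjective x
  obtain ⟨y, rfl⟩ := h.surjective y
  rw [hmem] at hx hy
  have hset : {H : Set S | IsOpenHalfplane (range ℓ) H} =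
      {connectedComponentIn (range ℓ)ᶜ x, connectedComponentIn (range ℓ)ᶜ y} := by
    ext H
    simp only [IsOpenHalfplane, mem_ofPred_eq, mem_insert_iff, mem_singleton_iff]
    constructor
    · rintro ⟨z, hz, rfl⟩
      have := hall (h z) ((hmem z).2 hz)
      rw [← hC z hz, ← hC x hx, ← hC y hy] at this
      exact this.imp (fun e => h.injective.image_injective e)
        (fun e => h.injective.image_injective e)
    · rintro (rfl | rfl)
      · exact ⟨x, hx, rfl⟩
      · exact ⟨y, hy, rfl⟩
  rw [hset]
  refine Set.encard_pair (fun e => hxy ?_)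
  rw [← hC x hx, ← hC y hy, e]
end

section
/- Let (S,d) be a Busemann surface and let ℓ be a line of S. Then each of the two closed halfplanes determined by ℓ is a convex subset of S. -/
open Metric Set MeasureTheory

lemma aux_uniq {S : Type*} [MetricSpace S] (hS : IsBusemannSpace S) (γ γ' : ℝ → S)
    (a b a' b' : ℝ) (hab : a ≤ b) (hab' : a' ≤ b') (h : IsGeodesicOn γ a b)
    (h' : IsGeodesicOn γ' a' b') (e1 : γ a = γ' a') (e2 : γ b = γ' b')
    (t : ℝ) (ht : t ∈ Set.Icc a b) : ∃ t', γ t = γ' t' := by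
  rcases hab.eq_or_lt with rfl | hlt
  · have : t = a := le_antisymm ht.2 ht.1
    exact ⟨a', by rw [this, e1]⟩
  have hc := hS.2 γ γ' a b a' b' hab hab' h h'
  set u := (t - a) / (b - a) with hu
  have hba : 0 < b - a := by linarith
  have hu0 : 0 ≤ u := div_nonneg (by linarith [ht.1]) hba.le
  have hu1 : u ≤ 1 := by rw [hu, div_le_one hba]; linarith [ht.2]
  have hut : (1 - u) * a + u * b = t := by
    rw [hu]; field_simp; ring
  have := hc.2 (show (0 : ℝ) ∈ Set.Icc (0 : ℝ) 1 by simp)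
    (show (1 : ℝ) ∈ Set.Icc (0 : ℝ) 1 by simp)
    (show 0 ≤ 1 - u by linarith) hu0 (by ring)
  simp [e1, e2] at this
  refine ⟨(1 - u) * a' + u * b', ?_⟩
  rw [← hut]
  exact this

lemma aux_hit {S : Type*} [MetricSpace S] (L : Set S) (x : S) (γ : ℝ → S) (D s t : ℝ)
    (hγ : IsGeodesicOn γ 0 D) (hs : s ∈ Set.Icc 0 D) (ht : t ∈ Set.Icc 0 D)
    (h1 : γ s ∈ connectedComponentIn Lᶜ x ∪ L)
    (h2 : γ t ∉ connectedComponentIn Lᶜ x ∪ L) :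
    ∃ r ∈ Set.uIcc s t, γ r ∈ L := by
  by_contra hcon
  push Not at hcon
  have hsub : Set.uIcc s t ⊆ Set.Icc 0 D := Set.uIcc_subset_Icc hs ht
  have hcont : ContinuousOn γ (Set.uIcc s t) := by
    have : LipschitzOnWith 1 γ (Set.uIcc s t) := by
      apply LipschitzOnWith.of_dist_le_mul
      intro u hu v hv
      rw [hγ u (hsub hu) v (hsub hv), Real.dist_eq]
      simp
    exact this.continuousOn
  have hpre : IsPreconnected (γ '' Set.uIcc s t) := isPreconnected_uIcc.image _ hcont
  have hL : γ '' Set.uIcc s t ⊆ Lᶜ := by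
    rintro _ ⟨u, hu, rfl⟩
    exact hcon u hu
  have hsC : γ s ∈ connectedComponentIn Lᶜ x :=
    h1.resolve_right (hcon s Set.left_mem_uIcc)
  have := hpre.subset_connectedComponentIn (Set.mem_image_of_mem γ Set.left_mem_uIcc) hL
  rw [← connectedComponentIn_eq hsC] at this
  exact h2 (Or.inl (this (Set.mem_image_of_mem γ Set.right_mem_uIcc)))

/-- In a Busemann surface, the closed halfplanes determined by a line are
convex. -/
theorem busemann_surface_closed_halfplane_convex {S : Type*} [MetricSpace S]
    (hS : IsBusemannSurface S)
    (seg : S → S → Set S) (hseg : ∀ x y : S, IsGeodesicSegment x y (seg x y))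
    (L : Set S) (hL : IsLineSet L) (H : Set S) (hH : IsClosedHalfplane L H) :
    SegConvex seg H := by
  obtain ⟨ℓ, hℓ, rfl⟩ := hL
  obtain ⟨_, ⟨x, -, rfl⟩, rfl⟩ := hH
  intro p hp q hq
  obtain ⟨γ, ⟨hγ, h0, h1⟩, hG⟩ := hseg p q
  rw [hG]
  rintro _ ⟨t, ht, rfl⟩
  by_contra hcon
  have hD : (0 : ℝ) ≤ dist p q := dist_nonneg
  obtain ⟨r, hr, a, ha⟩ := aux_hit _ x γ _ 0 t hγ ⟨le_rfl, hD⟩ ht (by rwa [h0]) hcon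
  obtain ⟨r', hr', b, hb⟩ := aux_hit _ x γ _ (dist p q) t hγ ⟨hD, le_rfl⟩ ht (by rwa [h1]) hcon
  rw [Set.uIcc_of_le ht.1] at hr
  rw [Set.uIcc_of_ge ht.2] at hr'
  have hg : IsGeodesicOn γ r r' := fun u hu v hv =>
    hγ u ⟨hr.1.trans hu.1, hu.2.trans hr'.2⟩ v ⟨hr.1.trans hv.1, hv.2.trans hr'.2⟩
  apply hcon
  right
  rcases le_total a b with hab | hab
  · obtain ⟨t', e⟩ := aux_uniq hS.1 γ ℓ r r' a b (hr.2.trans hr'.1) hab hg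
      (fun u _ v _ => by rw [hℓ.dist_eq, Real.dist_eq]) ha.symm hb.symm t ⟨hr.2, hr'.1⟩
    exact ⟨t', e.symm⟩
  · obtain ⟨t', e⟩ := aux_uniq hS.1 γ (fun u => ℓ (-u)) r r' (-a) (-b) (hr.2.trans hr'.1)
      (by linarith) hg
      (fun u _ v _ => by
        rw [hℓ.dist_eq, Real.dist_eq, ← abs_neg]; congr 1; ring)
      (by simp [ha]) (by simp [hb]) t ⟨hr.2, hr'.1⟩
    exact ⟨-t', e.symm⟩
end

section
/- Let (S,d) be a Busemann surface, let ℓ, ℓ' : ℝ → S be geodesic lines such that the image of ℓ' is contained in one of the closed halfplanes determined by the line ℓ(ℝ), and let x = ℓ(s) = ℓ'(s') be a common point. Denote the four rays emanating from x by r₁ = ℓ((−∞,s]), r₄ = ℓ([s,∞)), r₂ = ℓ'((−∞,s']), r₃ = ℓ'([s',∞)). Then, after possibly exchanging the labels of r₂ and r₃, both r₁ ∪ r₃ and r₂ ∪ r₄ are lines of S (i.e., images of geodesic lines). -/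
open Metric Set MeasureTheory

theorem aux_log_ray (ρ : ℝ → ℂ) (hρ : Continuous ρ)
    (hinf : Filter.Tendsto ρ Filter.atTop (Filter.cocompact ℂ)) (h0 : ρ 0 = 0) :
    ∃ f : ℂ → ℂ, ContinuousOn f (ρ '' Ici 0)ᶜ ∧ ∀ w ∉ ρ '' Ici 0, Complex.exp (f w) = w := by
  by_cases hne : ∃ c, c ∉ ρ '' Ici 0
  swap
  · push Not at hne
    exact ⟨id, continuousOn_id, fun w hw => absurd (hne w) hw⟩
  obtain ⟨c, hc⟩ := hne
  have hcρ : ∀ t, 0 ≤ t → c - ρ t ≠ 0 := fun t ht h => hc ⟨t, ht, (sub_eq_zero.1 h).symm⟩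
  have hc0 : c ≠ 0 := by simpa [h0] using hcρ 0 le_rfl
  let κ : ℝ → ℂ := fun u => if u = 0 then 0 else (c - ρ (u⁻¹ - 1))⁻¹
  have hpos : ∀ u ∈ Icc (0:ℝ) 1, u ≠ 0 → 0 ≤ u⁻¹ - 1 := by
    intro u hu h
    have : 0 < u := lt_of_le_of_ne hu.1 (Ne.symm h)
    have := (one_le_inv₀ this).2 hu.2
    linarith
  have hκ : ContinuousOn κ (Icc 0 1) := by
    intro u hu
    by_cases h : u = 0
    · subst h
      have h1 : Filter.Tendsto (fun u : ℝ => (c - ρ (u⁻¹ - 1))⁻¹) (nhdsWithin 0 (Ioi 0)) (nhds 0) := by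
        have a1 : Filter.Tendsto (fun u : ℝ => u⁻¹ - 1) (nhdsWithin 0 (Ioi 0)) Filter.atTop :=
          Filter.tendsto_atTop_add_const_right _ _ tendsto_inv_nhdsGT_zero
        have a2 := hinf.comp a1
        have a3 : Filter.Tendsto (fun z : ℂ => (c - z)⁻¹) (Filter.cocompact ℂ) (nhds 0) := by
          have : Filter.Tendsto (fun z : ℂ => c - z) (Filter.cocompact ℂ) (Filter.cocompact ℂ) :=
            (Homeomorph.subLeft c).isClosedEmbedding.tendsto_cocompact
          exact (Filter.tendsto_inv₀_cobounded (α := ℂ)).comp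
            (by rwa [← Metric.cobounded_eq_cocompact] at this)
            |>.mono_left (by rw [Metric.cobounded_eq_cocompact])
        exact a3.comp a2
      have h2 : ContinuousWithinAt κ (Ioi 0) 0 := by
        have : κ 0 = 0 := by simp [κ]
        unfold ContinuousWithinAt
        rw [this]
        refine h1.congr' ?_
        filter_upwards [self_mem_nhdsWithin] with v hv
        simp [κ, (ne_of_gt hv : v ≠ 0)]
      have h3 : ContinuousWithinAt κ (Ici 0) 0 := continuousWithinAt_Ioi_iff_Ici.1 h2
      exact h3.mono Icc_subset_Ici_self
    · have h1 : ContinuousAt (fun u : ℝ => (c - ρ (u⁻¹ - 1))⁻¹) u := by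
        refine ContinuousAt.inv₀ ?_ (hcρ _ (hpos u hu h))
        refine continuousAt_const.sub (hρ.continuousAt.comp ?_)
        exact (continuousAt_inv₀ h).sub continuousAt_const
      refine (h1.congr ?_).continuousWithinAt
      filter_upwards [isOpen_ne.mem_nhds h] with v hv
      simp [κ, (hv : v ≠ 0)]
  let U := {w : ℂ // w ∉ ρ '' Ici 0}
  have hne0 : ∀ (u : unitInterval) (w : U), 1 + (w.1 - c) * κ u ≠ 0 := by
    intro u w h
    by_cases hu : (u : ℝ) = 0
    · simp [κ, hu] at h
    · have hp := hpos u u.2 hu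
      have := hcρ _ hp
      simp only [κ, hu, if_false] at h
      apply w.2
      refine ⟨_, hp, ?_⟩
      generalize ρ ((u : ℝ)⁻¹ - 1) = r at *
      field_simp at h
      linear_combination -h
  have hHc : Continuous fun p : unitInterval × U => 1 + (p.2.1 - c) * κ p.1 := by
    have : Continuous fun u : unitInterval => κ u := continuousOn_iff_continuous_domRestrict.1 hκ
    have h2 := this.comp (continuous_fst (X := unitInterval) (Y := U))
    have h3 : Continuous fun p : unitInterval × U => p.2.1 :=
      continuous_subtype_val.comp continuous_snd
    exact continuous_const.add ((h3.sub continuous_const).mul h2)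
  let H : C(unitInterval × U, {z : ℂ // z ≠ 0}) :=
    ⟨fun p => ⟨1 + (p.2.1 - c) * κ p.1, hne0 p.1 p.2⟩, hHc.subtype_mk _⟩
  have H0 : ∀ w : U, H (0, w) = (⟨_, Complex.exp_ne_zero ((ContinuousMap.const U (0:ℂ)) w)⟩ : {z : ℂ // z ≠ 0}) := by
    intro w
    apply Subtype.ext
    simp [H, κ]
  let L := Complex.isCoveringMap_exp.liftHomotopy H (ContinuousMap.const U 0) H0
  have hL : ∀ w : U, Complex.exp (L (1, w)) = w.1 / c := by
    intro w
    have := congrFun (Complex.isCoveringMap_exp.liftHomotopy_lifts H (ContinuousMap.const U 0) H0) (1, w)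
    have := congrArg Subtype.val this
    simp only [Function.comp] at this
    rw [show L = Complex.isCoveringMap_exp.liftHomotopy H (ContinuousMap.const U 0) H0 from rfl, this]
    simp only [H, κ, ContinuousMap.coe_mk]
    simp [h0]
    field_simp
    ring
  classical
  refine ⟨fun w => if h : w ∉ ρ '' Ici 0 then L (1, ⟨w, h⟩) + Complex.log c else 0, ?_, ?_⟩
  · rw [continuousOn_iff_continuous_domRestrict]
    have : Continuous fun w : U => L (1, w) + Complex.log c := by fun_prop
    refine this.congr ?_
    rintro ⟨w, hw⟩
    have hw' : w ∉ ρ '' Ici 0 := hw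
    simp only [domRestrict_apply]
    rw [dif_pos hw']
  · intro w hw
    simp only
    rw [dif_pos hw, Complex.exp_add, hL, Complex.exp_log hc0]
    field_simp

theorem aux_const {S : Type*} [TopologicalSpace S] {C : Set S} (hC : IsPreconnected C) (h : S → ℂ)
    (hc : ContinuousOn h C) (he : ∀ p ∈ C, Complex.exp (h p) = 1) {p q : S} (hp : p ∈ C) (hq : q ∈ C) :
    h p = h q := by
  have h1 := hC.image h hc
  have h2 : (range fun n : ℤ => (n : ℂ) * (2 * Real.pi * Complex.I)).Countable := countable_range _
  refine h2.isTotallyDisconnected _ ?_ h1 (mem_image_of_mem h hp) (mem_image_of_mem h hq)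
  rintro _ ⟨r, hr, rfl⟩
  obtain ⟨n, hn⟩ := Complex.exp_eq_one_iff.1 (he r hr)
  exact ⟨n, hn.symm⟩

theorem aux_local {S : Type*} [TopologicalSpace S] {U : Set S} (hU : IsOpen U) (h : S → ℂ)
    (hc : ContinuousOn h U) (he : ∀ p ∈ U, Complex.exp (h p) = 1) {p : S} (hp : p ∈ U) :
    ∀ᶠ q in nhds p, h q = h p := by
  have h1 : ContinuousAt h p := hc.continuousAt (hU.mem_nhds hp)
  filter_upwards [hU.mem_nhds hp, h1.eventually (Metric.ball_mem_nhds (h p) one_pos)] with q hq hb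
  have e : Complex.exp (h q - h p) = 1 := by rw [Complex.exp_sub, he q hq, he p hp, div_one]
  obtain ⟨n, hn⟩ := Complex.exp_eq_one_iff.1 e
  have hb' : ‖h q - h p‖ < 1 := by simpa [dist_eq_norm] using hb
  rw [hn] at hb'
  have h3 : (|(n:ℝ)|) * (2 * Real.pi) < 1 := by
    simpa [abs_of_pos Real.pi_pos] using hb'
  have : n = 0 := by
    by_contra hn0
    have : (1:ℝ) ≤ |(n:ℝ)| := by exact_mod_cast Int.one_le_abs hn0
    nlinarith [Real.pi_gt_three]
  rw [this] at hn
  simpa [sub_eq_zero] using hn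

theorem aux_nolog (g : ℂ → ℂ) (hg : ∀ z ≠ 0, ContinuousAt g z) (he : ∀ z ≠ 0, Complex.exp (g z) = z) :
    False := by
  have hne : ∀ t : ℝ, Complex.exp (t * Complex.I) ≠ 0 := fun t => Complex.exp_ne_zero _
  have hc : Continuous fun t : ℝ => g (Complex.exp (t * Complex.I)) - t * Complex.I := by
    rw [continuous_iff_continuousAt]
    intro t
    refine ContinuousAt.sub ?_ (by fun_prop)
    exact ContinuousAt.comp (f := fun t : ℝ => Complex.exp (t * Complex.I)) (hg _ (hne t)) (by fun_prop)
  have := aux_const isPreconnected_univ _ hc.continuousOn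
    (fun t _ => by rw [Complex.exp_sub, he _ (hne t), div_self (hne t)]) (mem_univ (0:ℝ)) (mem_univ (2 * Real.pi))
  simp [Complex.exp_two_pi_mul_I] at this
  have h2 : (2 * (Real.pi : ℂ) * Complex.I) = 0 := by linear_combination this
  exact Complex.two_pi_I_ne_zero h2

structure RaySys {S : Type*} [TopologicalSpace S] (F : S → ℂ) (x : S)
    (R : Fin 4 → Set S) (f : Fin 4 → S → ℂ) (q : Fin 4 → S) : Prop where
  closed : ∀ i, IsClosed (R i)
  cont : ∀ i, ContinuousOn (f i) (R i)ᶜ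
  ex : ∀ i, ∀ p ∉ R i, Complex.exp (f i p) = F p
  ne : ∀ p, p ≠ x → F p ≠ 0
  xmem : ∀ i, x ∈ R i
  disj : ∀ i j, i ≠ j → ∀ p, p ∈ R i → p ∈ R j → p = x
  conn : ∀ i, IsPreconnected (R i \ {x})
  qmem : ∀ i, q i ∈ R i
  qne : ∀ i, q i ≠ x
  nolog : ∀ g : S → ℂ, (∀ p, p ≠ x → ContinuousAt g p) →
    (∀ p, p ≠ x → Complex.exp (g p) = F p) → False

namespace RaySys
variable {S : Type*} [TopologicalSpace S] {F : S → ℂ} {x : S}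
    {R : Fin 4 → Set S} {f : Fin 4 → S → ℂ} {q : Fin 4 → S}

theorem nex (h : RaySys F x R f q) {i : Fin 4} {p : S} (hp : p ∉ R i) : p ≠ x :=
  fun e => hp (e ▸ h.xmem i)

theorem exD (h : RaySys F x R f q) {i j : Fin 4} {p : S} (hi : p ∉ R i) (hj : p ∉ R j) :
    Complex.exp (f i p - f j p) = 1 := by
  rw [Complex.exp_sub, h.ex i p hi, h.ex j p hj, div_self (h.ne p (h.nex hi))]

theorem connD (h : RaySys F x R f q) (i j : Fin 4) {C : Set S} (hC : IsPreconnected C)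
    (hCi : ∀ p ∈ C, p ∉ R i) (hCj : ∀ p ∈ C, p ∉ R j) {p p' : S} (hp : p ∈ C) (hp' : p' ∈ C) :
    f i p - f j p = f i p' - f j p' :=
  aux_const hC (fun p => f i p - f j p) (((h.cont i).mono hCi).sub ((h.cont j).mono hCj))
    (fun p hp => h.exD (hCi p hp) (hCj p hp)) hp hp'

theorem rayD (h : RaySys F x R f q) {i j m : Fin 4} (hi : m ≠ i) (hj : m ≠ j) {p : S} (hp : p ∈ R m)
    (hpx : p ≠ x) : f i p - f j p = f i (q m) - f j (q m) :=
  h.connD i j (h.conn m) (fun p hp hpi => hp.2 (h.disj m i hi p hp.1 hpi))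
    (fun p hp hpi => hp.2 (h.disj m j hj p hp.1 hpi)) ⟨hp, hpx⟩ ⟨h.qmem m, h.qne m⟩

theorem off (h : RaySys F x R f q) {i j : Fin 4} (hi : i ≠ j) {p : S} (hp : p ∈ R i)
    (hpx : p ≠ x) : p ∉ R j := fun hj => hpx (h.disj i j hi p hp hj)

theorem locD (h : RaySys F x R f q) {i j : Fin 4} {p : S} (hi : p ∉ R i) (hj : p ∉ R j) :
    ∀ᶠ r in nhds p, r ∉ R i ∧ r ∉ R j ∧ f i r - f j r = f i p - f j p := by
  have ho : IsOpen ((R i)ᶜ ∩ (R j)ᶜ) := (h.closed i).isOpen_compl.inter (h.closed j).isOpen_compl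
  have := aux_local ho (fun p => f i p - f j p)
    (((h.cont i).mono inter_subset_left).sub ((h.cont j).mono inter_subset_right))
    (fun p hp => h.exD hp.1 hp.2) (p := p) ⟨hi, hj⟩
  filter_upwards [this, ho.mem_nhds ⟨hi, hj⟩] with r h1 h2
  exact ⟨h2.1, h2.2, h1⟩

theorem glue (h : RaySys F x R f q) (g : S → ℂ)
    (hg : ∀ p, p ≠ x → ∃ i c, p ∉ R i ∧ Complex.exp c = 1 ∧ ∀ᶠ r in nhds p, g r = f i r + c) : False := by
  refine h.nolog g ?_ ?_
  · intro p hp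
    obtain ⟨i, c, hi, -, he⟩ := hg p hp
    have : ContinuousAt (fun r => f i r + c) p :=
      ((h.cont i).continuousAt ((h.closed i).isOpen_compl.mem_nhds hi)).add continuousAt_const
    exact this.congr (he.mono fun r hr => hr.symm)
  · intro p hp
    obtain ⟨i, c, hi, hc, he⟩ := hg p hp
    rw [he.self_of_nhds, Complex.exp_add, hc, mul_one, h.ex i p hi]

theorem kind2 (h : RaySys F x R f q) (i1 i2 i3 i4 : Fin 4) (h12 : i1 ≠ i2) (h13 : i1 ≠ i3)
    (h14 : i1 ≠ i4) (h23 : i2 ≠ i3) (h24 : i2 ≠ i4) (h34 : i3 ≠ i4)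
    (H : f i1 (q i2) - f i4 (q i2) = f i1 (q i3) - f i4 (q i3))
    (A : f i1 (q i3) - f i2 (q i3) = f i1 (q i4) - f i2 (q i4))
    (B : f i2 (q i3) - f i4 (q i3) = f i2 (q i1) - f i4 (q i1)) : False := by
  classical
  obtain ⟨a, ha⟩ : ∃ a, a = f i1 (q i4) - f i2 (q i4) := ⟨_, rfl⟩
  obtain ⟨b, hb⟩ : ∃ b, b = f i2 (q i1) - f i4 (q i1) := ⟨_, rfl⟩
  have hk : f i1 (q i3) - f i4 (q i3) = a + b := by rw [ha, hb, ← A, ← B]; ring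
  have hea : Complex.exp a = 1 := by
    rw [ha]; exact h.exD (h.off h14.symm (h.qmem _) (h.qne _)) (h.off h24.symm (h.qmem _) (h.qne _))
  refine h.glue (fun p => if p ∈ R i4 ∨ (p ∉ R i1 ∧ f i1 p - f i4 p = a + b) then f i1 p
    else f i2 p + a) ?_
  intro p hp
  by_cases p1 : p ∈ R i1
  · have o2 := h.off h12 p1 hp
    have o4 := h.off h14 p1 hp
    refine ⟨i2, a, o2, hea, ?_⟩
    filter_upwards [h.locD o2 o4] with r ⟨r2, r4, hr⟩
    rw [h.rayD h12 h14 p1 hp, ← hb] at hr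
    split_ifs with hif
    · rcases hif with hif | hif
      · exact absurd hif r4
      · linear_combination hif.2 - hr
    · rfl
  by_cases p4 : p ∈ R i4
  · have o2 := h.off h24.symm p4 hp
    refine ⟨i1, 0, p1, Complex.exp_zero, ?_⟩
    filter_upwards [h.locD p1 o2] with r ⟨r1, r2, hr⟩
    rw [h.rayD h14.symm h24.symm p4 hp, ← ha] at hr
    split_ifs with hif
    · simp
    · linear_combination -hr
  by_cases pH : f i1 p - f i4 p = a + b
  · refine ⟨i1, 0, p1, Complex.exp_zero, ?_⟩
    filter_upwards [h.locD p1 p4] with r ⟨r1, r2, hr⟩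
    rw [if_pos (Or.inr ⟨r1, hr.trans pH⟩), add_zero]
  · refine ⟨i2, a, fun p2 => pH ?_, hea, ?_⟩
    · rw [h.rayD h12.symm h24 p2 hp, H, hk]
    · filter_upwards [h.locD p1 p4] with r ⟨r1, r2, hr⟩
      rw [if_neg]
      rintro (hif | hif)
      · exact r2 hif
      · exact pH (hr.symm.trans hif.2)

theorem symm (h : RaySys F x R f q) (i1 i2 i3 i4 : Fin 4) (h12 : i1 ≠ i2) (h13 : i1 ≠ i3)
    (h14 : i1 ≠ i4) (h23 : i2 ≠ i3) (h24 : i2 ≠ i4) (h34 : i3 ≠ i4)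
    (H : f i1 (q i2) - f i4 (q i2) = f i1 (q i3) - f i4 (q i3)) :
    f i2 (q i1) - f i3 (q i1) = f i2 (q i4) - f i3 (q i4) := by
  classical
  by_contra hne
  obtain ⟨k, hk⟩ : ∃ k, k = f i1 (q i2) - f i4 (q i2) := ⟨_, rfl⟩
  obtain ⟨c, hc⟩ : ∃ c, c = f i2 (q i1) - f i4 (q i1) := ⟨_, rfl⟩
  obtain ⟨u, hu⟩ : ∃ u, u = f i1 (q i4) - f i2 (q i4) := ⟨_, rfl⟩
  obtain ⟨e, he⟩ : ∃ e, e = f i2 (q i1) - f i3 (q i1) := ⟨_, rfl⟩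
  have hek : Complex.exp k = 1 := by
    rw [hk]; exact h.exD (h.off h12.symm (h.qmem _) (h.qne _)) (h.off h24 (h.qmem _) (h.qne _))
  have hec : Complex.exp c = 1 := by
    rw [hc]; exact h.exD (h.off h12 (h.qmem _) (h.qne _)) (h.off h14 (h.qmem _) (h.qne _))
  have heu : Complex.exp u = 1 := by
    rw [hu]; exact h.exD (h.off h14.symm (h.qmem _) (h.qne _)) (h.off h24.symm (h.qmem _) (h.qne _))
  have hekc : Complex.exp (k - c) = 1 := by rw [Complex.exp_sub, hek, hec, div_one]
  refine h.glue (fun p => if p ∈ R i4 ∨ (p ∉ R i1 ∧ f i1 p - f i4 p = k) then f i1 p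
    else if f i2 p - f i3 p = e then f i2 p + (k - c) else f i2 p + u) ?_
  intro p hp
  by_cases p1 : p ∈ R i1
  · have o2 := h.off h12 p1 hp
    have o3 := h.off h13 p1 hp
    have o4 := h.off h14 p1 hp
    refine ⟨i2, k - c, o2, hekc, ?_⟩
    filter_upwards [h.locD o2 o4, h.locD o2 o3] with r ⟨r2, r4, hr⟩ ⟨_, r3, hr'⟩
    rw [h.rayD h12 h14 p1 hp, ← hc] at hr
    rw [h.rayD h12 h13 p1 hp, ← he] at hr'
    rw [if_pos hr']
    split_ifs with hif
    · rcases hif with hif | hif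
      · exact absurd hif r4
      · linear_combination hif.2 - hr
    · rfl
  by_cases p4 : p ∈ R i4
  · have o2 := h.off h24.symm p4 hp
    have o3 := h.off h34.symm p4 hp
    refine ⟨i1, 0, p1, Complex.exp_zero, ?_⟩
    filter_upwards [h.locD p1 o2, h.locD o2 o3] with r ⟨r1, r2, hr⟩ ⟨_, r3, hr'⟩
    rw [h.rayD h14.symm h24.symm p4 hp, ← hu] at hr
    rw [h.rayD h24.symm h34.symm p4 hp] at hr'
    have : ¬ (f i2 r - f i3 r = e) := fun e1 => hne (by rw [← hr', e1, he])
    rw [if_neg this]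
    split_ifs with hif
    · simp
    · linear_combination -hr
  by_cases pH : f i1 p - f i4 p = k
  · refine ⟨i1, 0, p1, Complex.exp_zero, ?_⟩
    filter_upwards [h.locD p1 p4] with r ⟨r1, r2, hr⟩
    rw [if_pos (Or.inr ⟨r1, hr.trans pH⟩), add_zero]
  · have o2 : p ∉ R i2 := fun p2 => pH (by rw [h.rayD h12.symm h24 p2 hp, hk])
    have o3 : p ∉ R i3 := fun p2 => pH (by rw [h.rayD h13.symm h34 p2 hp, hk, H])
    have key : ∀ᶠ r in nhds p, ¬ (r ∈ R i4 ∨ (r ∉ R i1 ∧ f i1 r - f i4 r = k)) := by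
      filter_upwards [h.locD p1 p4] with r ⟨r1, r2, hr⟩
      rintro (hif | hif)
      · exact r2 hif
      · exact pH (hr.symm.trans hif.2)
    by_cases pe : f i2 p - f i3 p = e
    · refine ⟨i2, k - c, o2, hekc, ?_⟩
      filter_upwards [key, h.locD o2 o3] with r hr ⟨_, _, hr'⟩
      rw [if_neg hr, if_pos (hr'.trans pe)]
    · refine ⟨i2, u, o2, heu, ?_⟩
      filter_upwards [key, h.locD o2 o3] with r hr ⟨_, _, hr'⟩
      rw [if_neg hr, if_neg (fun e1 => pe (hr'.symm.trans e1))]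

end RaySys

def IsRayFrom {S : Type*} [MetricSpace S] (x : S) (r : ℝ → S) : Prop :=
  r 0 = x ∧ ∀ a b : ℝ, 0 ≤ a → 0 ≤ b → dist (r a) (r b) = |a - b|

def GoodPair {S : Type*} [MetricSpace S] (r r' : ℝ → S) : Prop :=
  ∀ a b : ℝ, 0 ≤ a → 0 ≤ b → dist (r a) (r' b) = a + b

theorem GoodPair.swap {S : Type*} [MetricSpace S] {r r' : ℝ → S} (h : GoodPair r r') :
    GoodPair r' r := fun a b ha hb => by rw [dist_comm, h b a hb ha, add_comm]

theorem good_of_one {S : Type*} [MetricSpace S] (hS : IsBusemannSpace S) {x : S} {r r' : ℝ → S}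
    (hr : IsRayFrom x r) (hr' : IsRayFrom x r') {a b : ℝ} (ha : 0 < a) (hb : 0 < b)
    (hab : dist (r a) (r' b) = a + b) : GoodPair r r' := by
  intro A B hA hB
  obtain ⟨τ, t0, t1, tA, tB⟩ : ∃ τ : ℝ, 0 < τ ∧ τ ≤ 1 ∧ τ * A ≤ a ∧ τ * B ≤ b := by
    refine ⟨min 1 (min (a / (A + 1)) (b / (B + 1))), by positivity, min_le_left _ _, ?_, ?_⟩
    · have h1 : min 1 (min (a / (A + 1)) (b / (B + 1))) ≤ a / (A + 1) :=
        (min_le_right _ _).trans (min_le_left _ _)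
      calc _ ≤ a / (A + 1) * A := by gcongr
        _ ≤ a := by rw [div_mul_eq_mul_div, div_le_iff₀ (by positivity)]; nlinarith
    · have h1 : min 1 (min (a / (A + 1)) (b / (B + 1))) ≤ b / (B + 1) :=
        (min_le_right _ _).trans (min_le_right _ _)
      calc _ ≤ b / (B + 1) * B := by gcongr
        _ ≤ b := by rw [div_mul_eq_mul_div, div_le_iff₀ (by positivity)]; nlinarith
  have hc := hS.2 r r' 0 A 0 B hA hB (fun s hs t ht => hr.2 s t hs.1 ht.1)
    (fun s hs t ht => hr'.2 s t hs.1 ht.1)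
  have h1 := hc.2 (show (0:ℝ) ∈ Icc (0:ℝ) 1 by simp) (show (1:ℝ) ∈ Icc (0:ℝ) 1 by simp)
    (show 0 ≤ 1 - τ by linarith) t0.le (by ring)
  simp only [smul_eq_mul, mul_zero, mul_one, zero_add, sub_self, zero_mul, add_zero, sub_zero, one_mul,
    hr.1, hr'.1, dist_self] at h1
  have hτA : 0 ≤ τ * A := by positivity
  have hτB : 0 ≤ τ * B := by positivity
  have e1 := hr.2 a (τ * A) ha.le hτA
  have e2 := hr'.2 (τ * B) b hτB hb.le
  rw [abs_of_nonneg (by linarith)] at e1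
  rw [abs_of_nonpos (by linarith)] at e2
  have t4 := dist_triangle4 (r a) (r (τ * A)) (r' (τ * B)) (r' b)
  have t5 := dist_triangle (r A) (r 0) (r' B)
  have e3 := hr.2 A 0 hA le_rfl
  have e4 := hr'.2 0 B le_rfl hB
  rw [hr'.1, ← hr.1] at e4
  rw [sub_zero, abs_of_nonneg hA] at e3
  rw [zero_sub, abs_neg, abs_of_nonneg hB] at e4
  have : τ * (A + B) ≤ τ * dist (r A) (r' B) := by linarith
  have := le_of_mul_le_mul_left this t0
  linarith

theorem disj_of_not_good {S : Type*} [MetricSpace S] (hS : IsBusemannSpace S) {x : S} {r r' r'' : ℝ → S}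
    (hr : IsRayFrom x r) (hr' : IsRayFrom x r') (hr'' : IsRayFrom x r'')
    (hg : GoodPair r' r'') (hn : ¬ GoodPair r r'') (p : S) (hp : p ∈ r '' Ici 0)
    (hp' : p ∈ r' '' Ici 0) : p = x := by
  obtain ⟨t, ht, rfl⟩ := hp
  obtain ⟨t', ht', e⟩ := hp'
  by_contra hne
  have ht : 0 ≤ t := ht
  have ht' : 0 ≤ t' := ht'
  have h1 := hr.2 t 0 ht le_rfl
  have h2 := hr'.2 t' 0 ht' le_rfl
  rw [sub_zero, abs_of_nonneg ht, hr.1] at h1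
  rw [sub_zero, abs_of_nonneg ht', hr'.1, e, h1] at h2
  subst h2
  have h0 : t ≠ 0 := fun h => hne (by rw [h, hr.1])
  have h0 : 0 < t := lt_of_le_of_ne ht h0.symm
  exact hn (good_of_one hS hr hr'' h0 one_pos (by rw [← e]; exact hg t 1 ht zero_le_one))

theorem path_of_not_good {S : Type*} [MetricSpace S] (hS : IsBusemannSpace S) {x : S}
    {r r' ro ro' : ℝ → S} (hr : IsRayFrom x r) (hr' : IsRayFrom x r') (hro : IsRayFrom x ro)
    (hro' : IsRayFrom x ro')
    (hg : GoodPair r ro) (hg' : GoodPair r' ro') (hn : ¬ GoodPair r r') :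
    ∃ C : Set S, IsPreconnected C ∧ r 1 ∈ C ∧ r' 1 ∈ C ∧ (∀ p ∈ C, p ∉ ro '' Ici 0) ∧
      (∀ p ∈ C, p ∉ ro' '' Ici 0) := by
  obtain ⟨γ, hγ, g0, g1⟩ := hS.1 (r 1) (r' 1)
  have hd0 : 0 ≤ dist (r 1) (r' 1) := dist_nonneg
  have hx1 : dist (r 1) x = 1 := by rw [← hr.1, hr.2 1 0 zero_le_one le_rfl]; norm_num
  have hx2 : dist x (r' 1) = 1 := by rw [← hr'.1, hr'.2 0 1 le_rfl zero_le_one]; norm_num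
  have hlt : ¬ (2 ≤ dist (r 1) (r' 1)) := by
    intro h
    have := dist_triangle (r 1) x (r' 1)
    exact hn (good_of_one hS hr hr' one_pos one_pos (by linarith))
  have hsum : ∀ t ∈ Icc 0 (dist (r 1) (r' 1)),
      dist (r 1) (r' 1) = dist (r 1) (γ t) + dist (γ t) (r' 1) := by
    intro t ht
    have h1 := hγ 0 ⟨le_rfl, hd0⟩ t ht
    have h2 := hγ t ht _ ⟨hd0, le_rfl⟩
    rw [g0] at h1
    rw [g1] at h2
    rw [h1, h2, abs_of_nonpos (by linarith [ht.1]), abs_of_nonpos (by linarith [ht.2])]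
    ring
  refine ⟨γ '' Icc 0 (dist (r 1) (r' 1)), ?_, ⟨0, ⟨le_rfl, hd0⟩, g0⟩, ⟨_, ⟨hd0, le_rfl⟩, g1⟩, ?_, ?_⟩
  · refine isPreconnected_Icc.image γ ?_
    have : LipschitzOnWith 1 γ (Icc 0 (dist (r 1) (r' 1))) := by
      refine LipschitzOnWith.of_dist_le_mul fun s hs t ht => ?_
      rw [hγ s hs t ht, Real.dist_eq]; simp
    exact this.continuousOn
  · rintro _ ⟨t, ht, rfl⟩ ⟨c, hc, e⟩
    have hc : 0 ≤ c := hc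
    have h1 := hsum t ht
    rw [← e, hg 1 c zero_le_one hc] at h1
    have h2 := dist_triangle x (ro c) (r' 1)
    have h3 : dist x (ro c) = c := by rw [← hro.1, hro.2 0 c le_rfl hc]; simp [abs_of_nonneg hc]
    exact hlt (by linarith)
  · rintro _ ⟨t, ht, rfl⟩ ⟨c, hc, e⟩
    have hc : 0 ≤ c := hc
    have h1 := hsum t ht
    rw [← e, dist_comm (ro' c), hg' 1 c zero_le_one hc] at h1
    have h2 := dist_triangle (r 1) (ro' c) x
    have h3 : dist (ro' c) x = c := by rw [← hro'.1, hro'.2 c 0 hc le_rfl]; simp [abs_of_nonneg hc]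
    exact hlt (by linarith)

theorem ray_continuousOn {S : Type*} [MetricSpace S] {x : S} {r : ℝ → S} (hr : IsRayFrom x r) :
    ContinuousOn r (Ici 0) := by
  have : LipschitzOnWith 1 r (Ici 0) := by
    refine LipschitzOnWith.of_dist_le_mul fun s hs t ht => ?_
    rw [hr.2 s t hs ht, Real.dist_eq]; simp
  exact this.continuousOn

theorem ray_log {S : Type*} [MetricSpace S] {x : S} {r : ℝ → S} (hr : IsRayFrom x r)
    (F : S ≃ₜ ℂ) (hF : F x = 0) :
    ∃ f : S → ℂ, ContinuousOn f (r '' Ici 0)ᶜ ∧ ∀ p ∉ r '' Ici 0, Complex.exp (f p) = F p := by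
  have hc : Continuous fun t : ℝ => r (max t 0) :=
    (ray_continuousOn hr).comp_continuous (by fun_prop) (fun t => mem_Ici.2 (le_max_right _ _))
  have ht : Filter.Tendsto (fun t : ℝ => r (max t 0)) Filter.atTop (Filter.cocompact S) := by
    refine tendsto_cocompact_of_tendsto_dist_comp_atTop x ?_
    refine Filter.tendsto_id.congr' ?_
    filter_upwards [Filter.eventually_ge_atTop (0:ℝ)] with t ht
    rw [max_eq_left ht, ← hr.1, hr.2 t 0 ht le_rfl, sub_zero, abs_of_nonneg ht]; rfl
  obtain ⟨f, h1, h2⟩ := aux_log_ray (fun t => F (r (max t 0))) (F.continuous.comp hc)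
    (F.isClosedEmbedding.tendsto_cocompact.comp ht) (by simp [hr.1, hF])
  have him : ∀ p, F p ∈ (fun t : ℝ => F (r (max t 0))) '' Ici 0 → p ∈ r '' Ici 0 := by
    rintro p ⟨t, ht, e⟩
    exact ⟨max t 0, mem_Ici.2 (le_max_right _ _), F.injective e⟩
  refine ⟨f ∘ F, ?_, ?_⟩
  · exact h1.comp F.continuous.continuousOn (fun p hp hF => hp (him p hF))
  · exact fun p hp => h2 _ (fun hF => hp (him p hF))

theorem exists_raySys {S : Type*} [MetricSpace S] {x : S} (F : S ≃ₜ ℂ) (hF : F x = 0)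
    (r : Fin 4 → ℝ → S) (hr : ∀ i, IsRayFrom x (r i))
    (hd : ∀ i j, i ≠ j → ∀ p, p ∈ r i '' Ici 0 → p ∈ r j '' Ici 0 → p = x) :
    ∃ f, RaySys F x (fun i => r i '' Ici 0) f (fun i => r i 1) := by
  choose f h1 h2 using fun i => ray_log (hr i) F hF
  refine ⟨f, ?_, h1, h2, ?_, ?_, hd, ?_, ?_, ?_, ?_⟩
  · intro i
    have hi : Isometry fun t : Ici (0:ℝ) => r i t :=
      Isometry.of_dist_eq fun s t => by rw [(hr i).2 s t s.2 t.2]; rfl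
    haveI : CompleteSpace (Ici (0:ℝ)) := isClosed_Ici.completeSpace_coe
    have := hi.isClosedEmbedding.isClosed_range
    rwa [show range (fun t : Ici (0:ℝ) => r i t) = r i '' Ici 0 by
      ext p; simp] at this
  · intro p hp h
    exact hp (F.injective (h.trans hF.symm))
  · intro i
    exact ⟨0, by simp, (hr i).1⟩
  · intro i
    have : r i '' Ici 0 \ {x} = r i '' Ioi 0 := by
      ext p
      constructor
      · rintro ⟨⟨t, ht, rfl⟩, hp⟩
        refine ⟨t, mem_Ioi.2 (lt_of_le_of_ne ht ?_), rfl⟩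
        rintro rfl
        exact hp (hr i).1
      · rintro ⟨t, ht, rfl⟩
        refine ⟨⟨t, mem_Ici.2 (le_of_lt ht), rfl⟩, fun h => ?_⟩
        have ht : 0 < t := ht
        have h1 := (hr i).2 t 0 ht.le le_rfl
        rw [(hr i).1, mem_singleton_iff.1 h, dist_self, sub_zero, abs_of_pos ht] at h1
        linarith
    change IsPreconnected (r i '' Ici 0 \ {x})
    rw [this]
    exact isPreconnected_Ioi.image _ ((ray_continuousOn (hr i)).mono Ioi_subset_Ici_self)
  · intro i
    exact ⟨1, by simp, rfl⟩
  · intro i h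
    have h1 := (hr i).2 1 0 zero_le_one le_rfl
    rw [h, (hr i).1, dist_self] at h1
    norm_num at h1
  · intro g hg he
    refine aux_nolog (g ∘ F.symm) ?_ ?_
    · intro z hz
      refine ContinuousAt.comp (hg _ ?_) F.symm.continuous.continuousAt
      intro h
      exact hz (by rw [← hF, ← h]; simp)
    · intro z hz
      have := he (F.symm z) (by
        intro h
        exact hz (by rw [← hF, ← h]; simp))
      simpa using this

theorem core {S : Type*} [MetricSpace S] (hS : IsBusemannSpace S) {x : S} (F : S ≃ₜ ℂ) (hF : F x = 0)
    (r : Fin 4 → ℝ → S) (hr : ∀ i, IsRayFrom x (r i)) (g03 : GoodPair (r 0) (r 3))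
    (g12 : GoodPair (r 1) (r 2)) (C : Set S) (hC : IsPreconnected C)
    (hC0 : ∀ p ∈ C, p ∉ r 0 '' Ici 0) (hC3 : ∀ p ∈ C, p ∉ r 3 '' Ici 0)
    (h1 : r 1 1 ∈ C ∨ r 1 1 ∈ r 0 '' Ici 0 ∨ r 1 1 ∈ r 3 '' Ici 0)
    (h2 : r 2 1 ∈ C ∨ r 2 1 ∈ r 0 '' Ici 0 ∨ r 2 1 ∈ r 3 '' Ici 0) :
    (GoodPair (r 0) (r 2) ∧ GoodPair (r 1) (r 3)) ∨
    (GoodPair (r 0) (r 1) ∧ GoodPair (r 2) (r 3)) := by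
  by_contra hcon
  rw [not_or, not_and_or, not_and_or] at hcon
  obtain ⟨ha, hb⟩ := hcon
  have D := fun i j k => disj_of_not_good hS (hr i) (hr j) (hr k)
  have d01 : ∀ p, p ∈ r 0 '' Ici 0 → p ∈ r 1 '' Ici 0 → p = x := by
    rcases ha with ha | ha
    · exact D 0 1 2 g12 ha
    · exact fun p h h' => D 1 0 3 g03 ha p h' h
  have d23 : ∀ p, p ∈ r 2 '' Ici 0 → p ∈ r 3 '' Ici 0 → p = x := by
    rcases ha with ha | ha
    · exact D 2 3 0 g03.swap (fun h => ha h.swap)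
    · exact fun p h h' => D 3 2 1 g12.swap (fun h => ha h.swap) p h' h
  have d02 : ∀ p, p ∈ r 0 '' Ici 0 → p ∈ r 2 '' Ici 0 → p = x := by
    rcases hb with ha | ha
    · exact D 0 2 1 g12.swap ha
    · exact fun p h h' => D 2 0 3 g03 ha p h' h
  have d13 : ∀ p, p ∈ r 1 '' Ici 0 → p ∈ r 3 '' Ici 0 → p = x := by
    rcases hb with ha | ha
    · exact D 1 3 0 g03.swap (fun h => ha h.swap)
    · exact fun p h h' => D 3 1 2 g12 (fun h => ha h.swap) p h' h
  have G : ∀ i j, GoodPair (r i) (r j) → ∀ p, p ∈ r i '' Ici 0 → p ∈ r j '' Ici 0 → p = x := by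
    rintro i j hg p ⟨a, ha, rfl⟩ ⟨b, hb, e⟩
    have h := hg a b ha hb
    rw [e, dist_self] at h
    have ha : 0 ≤ a := ha
    have hb : 0 ≤ b := hb
    have : a = 0 := by linarith
    rw [this, (hr i).1]
  have d03 := G 0 3 g03
  have d12 := G 1 2 g12
  obtain ⟨f, R⟩ := exists_raySys F hF r hr (by
    intro i j hij p hi hj
    fin_cases i <;> fin_cases j
    · exact absurd rfl hij
    · exact d01 p hi hj
    · exact d02 p hi hj
    · exact d03 p hi hj
    · exact d01 p hj hi
    · exact absurd rfl hij
    · exact d12 p hi hj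
    · exact d13 p hi hj
    · exact d02 p hj hi
    · exact d12 p hj hi
    · exact absurd rfl hij
    · exact d23 p hi hj
    · exact d03 p hj hi
    · exact d13 p hj hi
    · exact d23 p hj hi
    · exact absurd rfl hij)
  have q1 : r 1 1 ∈ C := by
    rcases h1 with h | h | h
    · exact h
    · exact absurd (d01 _ h (R.qmem 1)) (R.qne 1)
    · exact absurd (d13 _ (R.qmem 1) h) (R.qne 1)
  have q2 : r 2 1 ∈ C := by
    rcases h2 with h | h | h
    · exact h
    · exact absurd (d02 _ h (R.qmem 2)) (R.qne 2)
    · exact absurd (d23 _ (R.qmem 2) h) (R.qne 2)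
  have H := R.connD 0 3 hC hC0 hC3 q1 q2
  have H' := R.symm 0 1 2 3 (by decide) (by decide) (by decide) (by decide) (by decide) (by decide) H
  have P : ∀ i j i' j', GoodPair (r i) (r i') → GoodPair (r j) (r j') → ¬ GoodPair (r i) (r j) →
      f i' (r i 1) - f j' (r i 1) = f i' (r j 1) - f j' (r j 1) := by
    intro i j i' j' hi hj hn
    obtain ⟨K, hK, k1, k2, k3, k4⟩ := path_of_not_good hS (hr i) (hr j) (hr i') (hr j') hi hj hn
    exact R.connD i' j' hK k3 k4 k1 k2
  rcases ha with n02 | n13 <;> rcases hb with n01 | n23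
  · have e1 := P 0 2 3 1 g03 g12.swap n02
    have e2 := P 0 1 3 2 g03 g12 n01
    exact R.kind2 1 3 0 2 (by decide) (by decide) (by decide) (by decide) (by decide) (by decide)
      H'.symm (by linear_combination -e1) e2
  · have e1 := P 0 2 3 1 g03 g12.swap n02
    have e2 := P 2 3 1 0 g12.swap g03.swap n23
    exact R.kind2 0 1 2 3 (by decide) (by decide) (by decide) (by decide) (by decide) (by decide)
      H (by linear_combination -e2) (by linear_combination e1)
  · have e1 := P 1 3 2 0 g12 g03.swap n13
    have e2 := P 0 1 3 2 g03 g12 n01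
    exact R.kind2 0 2 1 3 (by decide) (by decide) (by decide) (by decide) (by decide) (by decide)
      H.symm (by linear_combination -e1) (by linear_combination e2)
  · have e1 := P 1 3 2 0 g12 g03.swap n13
    have e2 := P 2 3 1 0 g12.swap g03.swap n23
    exact R.kind2 1 0 3 2 (by decide) (by decide) (by decide) (by decide) (by decide) (by decide)
      H' (by linear_combination -e2) (by linear_combination e1)

theorem line_of_good {S : Type*} [MetricSpace S] {x : S} {r r' : ℝ → S} (hr : IsRayFrom x r)
    (hr' : IsRayFrom x r') (hg : GoodPair r r') : IsLineSet (r '' Ici 0 ∪ r' '' Ici 0) := by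
  refine ⟨fun t => if t ≤ 0 then r (-t) else r' t, Isometry.of_dist_eq fun s t => ?_, ?_⟩
  · rw [Real.dist_eq]
    split_ifs with h1 h2 h2
    · rw [hr.2 _ _ (by linarith) (by linarith), ← abs_neg]; congr 1; ring
    · rw [hg _ _ (by linarith) (by linarith), abs_of_nonpos (by linarith)]; ring
    · rw [dist_comm, hg _ _ (by linarith) (by linarith), abs_of_nonneg (by linarith)]; ring
    · rw [hr'.2 _ _ (by linarith) (by linarith)]
  · ext p
    constructor
    · rintro (⟨t, ht, rfl⟩ | ⟨t, ht, rfl⟩)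
      · have ht : 0 ≤ t := ht
        exact ⟨-t, by simp [ht]⟩
      · have ht : 0 ≤ t := ht
        rcases ht.eq_or_lt with h | h
        · exact ⟨0, by simp [← h, hr.1, hr'.1]⟩
        · exact ⟨t, by simp [h]⟩
    · rintro ⟨t, rfl⟩
      simp only
      split_ifs with h
      · exact Or.inl ⟨-t, by simpa using h, rfl⟩
      · exact Or.inr ⟨t, le_of_lt (not_le.1 h), rfl⟩

/-- If `ℓ'` is a geodesic line contained in a closed halfplane of the line
`ℓ` and `x = ℓ s = ℓ' s'` is a common point, then, denoting the four rays from `x` by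
`r₁ = ℓ((-∞,s])`, `r₄ = ℓ([s,∞))`, `r₂ = ℓ'((-∞,s'])`, `r₃ = ℓ'([s',∞))`, after possibly
exchanging the labels of `r₂` and `r₃`, both `r₁ ∪ r₃` and `r₂ ∪ r₄` are lines. -/
theorem busemann_surface_two_lines {S : Type*} [MetricSpace S]
    (hS : IsBusemannSurface S)
    (ℓ ℓ' : ℝ → S) (hℓ : Isometry ℓ) (hℓ' : Isometry ℓ')
    (hhalf : ∃ H : Set S, IsClosedHalfplane (Set.range ℓ) H ∧ Set.range ℓ' ⊆ H)
    (s s' : ℝ) (hx : ℓ s = ℓ' s') :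
    (IsLineSet (ℓ '' Set.Iic s ∪ ℓ' '' Set.Ici s') ∧
       IsLineSet (ℓ' '' Set.Iic s' ∪ ℓ '' Set.Ici s)) ∨
    (IsLineSet (ℓ '' Set.Iic s ∪ ℓ' '' Set.Iic s') ∧
       IsLineSet (ℓ' '' Set.Ici s' ∪ ℓ '' Set.Ici s)) := by
  obtain ⟨hB, ⟨φ⟩⟩ := hS
  obtain ⟨_, ⟨_, ⟨z, hz, rfl⟩, rfl⟩, hsub⟩ := hhalf
  let F : S ≃ₜ ℂ := (φ.trans Complex.equivRealProdCLM.symm.toHomeomorph).trans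
    (Homeomorph.addRight (-(Complex.equivRealProdCLM.symm (φ (ℓ s)))))
  have hF : F (ℓ s) = 0 := by simp [F]
  let r : Fin 4 → ℝ → S :=
    ![fun t => ℓ (s - t), fun t => ℓ' (s' - t), fun t => ℓ' (s' + t), fun t => ℓ (s + t)]
  have hr : ∀ i, IsRayFrom (ℓ s) (r i) := by
    intro i
    fin_cases i
    · refine ⟨by simp [r], fun a b _ _ => ?_⟩
      change dist (ℓ (s - a)) (ℓ (s - b)) = _
      rw [hℓ.dist_eq, Real.dist_eq, ← abs_neg]; congr 1; ring
    · refine ⟨by simp [r, hx], fun a b _ _ => ?_⟩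
      change dist (ℓ' (s' - a)) (ℓ' (s' - b)) = _
      rw [hℓ'.dist_eq, Real.dist_eq, ← abs_neg]; congr 1; ring
    · refine ⟨by simp [r, hx], fun a b _ _ => ?_⟩
      change dist (ℓ' (s' + a)) (ℓ' (s' + b)) = _
      rw [hℓ'.dist_eq, Real.dist_eq]; congr 1; ring
    · refine ⟨by simp [r], fun a b _ _ => ?_⟩
      change dist (ℓ (s + a)) (ℓ (s + b)) = _
      rw [hℓ.dist_eq, Real.dist_eq]; congr 1; ring
  have g03 : GoodPair (r 0) (r 3) := by
    intro a b ha hb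
    change dist (ℓ (s - a)) (ℓ (s + b)) = _
    rw [hℓ.dist_eq, Real.dist_eq, abs_of_nonpos (by linarith)]; ring
  have g12 : GoodPair (r 1) (r 2) := by
    intro a b ha hb
    change dist (ℓ' (s' - a)) (ℓ' (s' + b)) = _
    rw [hℓ'.dist_eq, Real.dist_eq, abs_of_nonpos (by linarith)]; ring
  have i0 : r 0 '' Ici 0 = ℓ '' Iic s := by
    ext p
    constructor
    · rintro ⟨t, ht, rfl⟩
      exact ⟨s - t, by simpa using ht, rfl⟩
    · rintro ⟨t, ht, rfl⟩
      exact ⟨s - t, by simpa using ht, by simp [r]⟩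
  have i1 : r 1 '' Ici 0 = ℓ' '' Iic s' := by
    ext p
    constructor
    · rintro ⟨t, ht, rfl⟩
      exact ⟨s' - t, by simpa using ht, rfl⟩
    · rintro ⟨t, ht, rfl⟩
      exact ⟨s' - t, by simpa using ht, by simp [r]⟩
  have i2 : r 2 '' Ici 0 = ℓ' '' Ici s' := by
    ext p
    constructor
    · rintro ⟨t, ht, rfl⟩
      exact ⟨s' + t, by simpa using ht, rfl⟩
    · rintro ⟨t, ht, rfl⟩
      exact ⟨t - s', by simpa using ht, by simp [r]⟩
  have i3 : r 3 '' Ici 0 = ℓ '' Ici s := by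
    ext p
    constructor
    · rintro ⟨t, ht, rfl⟩
      exact ⟨s + t, by simpa using ht, rfl⟩
    · rintro ⟨t, ht, rfl⟩
      exact ⟨t - s, by simpa using ht, by simp [r]⟩
  have hcov : ∀ t, ℓ' t ∈ connectedComponentIn (range ℓ)ᶜ z ∨ ℓ' t ∈ r 0 '' Ici 0 ∨
      ℓ' t ∈ r 3 '' Ici 0 := by
    intro t
    rcases hsub ⟨t, rfl⟩ with h | ⟨u, hu⟩
    · exact Or.inl h
    · right
      rw [i0, i3, ← hu]
      rcases le_total u s with h | h
      · exact Or.inl ⟨u, h, rfl⟩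
      · exact Or.inr ⟨u, h, rfl⟩
  have hsubC := connectedComponentIn_subset (range ℓ)ᶜ z
  have key := core hB F hF r hr g03 g12 (connectedComponentIn (range ℓ)ᶜ z)
    isPreconnected_connectedComponentIn
    (fun p hp h => hsubC hp (by rw [i0] at h; exact image_subset_range _ _ h))
    (fun p hp h => hsubC hp (by rw [i3] at h; exact image_subset_range _ _ h))
    (hcov _) (hcov _)
  rw [← i0, ← i1, ← i2, ← i3]
  rcases key with ⟨k1, k2⟩ | ⟨k1, k2⟩
  · exact Or.inl ⟨line_of_good (hr 0) (hr 2) k1, line_of_good (hr 1) (hr 3) k2⟩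
  · exact Or.inr ⟨line_of_good (hr 0) (hr 1) k1, line_of_good (hr 2) (hr 3) k2⟩
end

section
/- (Pasch axiom for Busemann surfaces) Let (S,d) be a Busemann surface and let x, y, z, u, v ∈ S be points with u ∈ [x,y] and z ∈ [x,v]. Then [u,v] ∩ [y,z] ≠ ∅. -/
open Metric Set MeasureTheory

namespace PaschAux

theorem exists_lift {A : Type*} [TopologicalSpace A] [SimplyConnectedSpace A]
    [LocallyPathConnectedSpace A] (a₀ : A) (f : A → ℂ) (hf : Continuous f) (h0 : ∀ a, f a ≠ 0) :
    ∃ L : A → ℂ, Continuous L ∧ ∀ a, Complex.exp (L a) = f a := by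
  rcases Complex.isCoveringMapOn_exp.existsUnique_continuousMap_lifts
    (⟨f, hf⟩ : C(A, ℂ)) (a₀ := a₀) (e₀ := Complex.log (f a₀)) (Complex.exp_log (h0 a₀))
    (fun a => h0 a) with ⟨F, ⟨-, hF⟩, -⟩
  exact ⟨F, F.continuous, fun a => congrFun hF a⟩

open Classical in
/-- change of the logarithm along a path -/
noncomputable def chg (f : ℝ → ℂ) : ℂ :=
  if h : ∃ L : ℝ → ℂ, Continuous L ∧ ∀ t, Complex.exp (L t) = f t then
    h.choose 1 - h.choose 0 else 0

theorem chg_eq {f L : ℝ → ℂ} (hL : Continuous L) (h : ∀ t, Complex.exp (L t) = f t) :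
    chg f = L 1 - L 0 := by
  have hex : ∃ L : ℝ → ℂ, Continuous L ∧ ∀ t, Complex.exp (L t) = f t := ⟨L, hL, h⟩
  unfold chg
  rw [dif_pos hex]
  obtain ⟨hM, hM'⟩ := hex.choose_spec
  set M := hex.choose
  have key : (fun t => L t + (M 0 - L 0)) = M := by
    refine Complex.isCoveringMap_exp.eq_of_comp_eq (by fun_prop) hM ?_ 0 (by ring)
    funext t
    apply Subtype.ext
    simp only [Function.comp]
    rw [Complex.exp_add, Complex.exp_sub, hM', hM', h, h]
    have : f 0 ≠ 0 := by rw [← h]; exact Complex.exp_ne_zero _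
    field_simp
  have := congrFun key 1
  rw [← this]; ring

theorem chg_square (H : ℝ × ℝ → ℂ) (hH : Continuous H) (h0 : ∀ p, H p ≠ 0) :
    chg (fun t => H (0, t)) + chg (fun s => H (s, 1)) =
      chg (fun s => H (s, 0)) + chg (fun t => H (1, t)) := by
  obtain ⟨L, hL, h⟩ := exists_lift (0, 0) H hH h0
  rw [chg_eq (L := fun t => L (0, t)) (by fun_prop) (fun t => h _),
    chg_eq (L := fun t => L (t, 1)) (by fun_prop) (fun t => h _),
    chg_eq (L := fun t => L (t, 0)) (by fun_prop) (fun t => h _),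
    chg_eq (L := fun t => L (1, t)) (by fun_prop) (fun t => h _)]
  ring

theorem exp_chg (f : ℝ → ℂ) (hf : Continuous f) (h0 : ∀ p, f p ≠ 0) :
    Complex.exp (chg f) = f 1 / f 0 := by
  obtain ⟨L, hL, h⟩ := exists_lift 0 f hf h0
  rw [chg_eq hL h, Complex.exp_sub, h, h]

theorem chg_neg (f : ℝ → ℂ) (hf : Continuous f) (h0 : ∀ p, f p ≠ 0) :
    chg (fun t => - f t) = chg f := by
  obtain ⟨L, hL, h⟩ := exists_lift 0 f hf h0
  rw [chg_eq hL h, chg_eq (L := fun t => L t + Real.pi * Complex.I) (by fun_prop)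
    (fun t => by rw [Complex.exp_add, h, Complex.exp_pi_mul_I]; ring)]
  ring

theorem chg_const (c : ℂ) (h0 : c ≠ 0) : chg (fun _ => c) = 0 := by
  rw [chg_eq (L := fun t => Complex.log c) (by fun_prop) (fun t => Complex.exp_log h0)]
  ring

/-- metric betweenness -/
def Bt {S : Type*} [MetricSpace S] (a w b : S) : Prop := dist a w + dist w b = dist a b

section
variable {S : Type*} [MetricSpace S]

theorem Bt.symm {a w b : S} (h : Bt a w b) : Bt b w a := by
  unfold Bt at *
  rw [dist_comm b w, dist_comm w a, dist_comm b a]; linarith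

theorem Bt.left (a b : S) : Bt a a b := by simp [Bt]
theorem Bt.right (a b : S) : Bt a b b := by simp [Bt]

theorem Bt.eq {a b : S} (h : Bt a b a) : b = a := by
  unfold Bt at h
  rw [dist_self, dist_comm b a] at h
  exact (dist_le_zero.1 (by linarith)).symm

theorem bt1 {a b c d : S} (h : Bt a b d) (h' : Bt b c d) : Bt a c d ∧ Bt a b c := by
  unfold Bt at *
  have := dist_triangle a b c
  have := dist_triangle a c d
  constructor <;> linarith

theorem bt2 {a b c d : S} (h : Bt a c d) (h' : Bt a b c) : Bt a b d ∧ Bt b c d := by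
  have := bt1 h.symm h'.symm
  exact ⟨this.1.symm, this.2.symm⟩

theorem bt_antisymm {a b c : S} (h : Bt a b c) (h' : Bt a c b) : b = c := by
  unfold Bt at *
  rw [dist_comm c b] at h'
  exact dist_le_zero.1 (by linarith [dist_nonneg (x := b) (y := c)])

variable (G : S → S → ℝ → S) (φ : S → ℂ)

/-- log change along a segment as seen from `p` -/
noncomputable def E (p a b : S) : ℂ := chg (fun t => φ (G a b t) - φ p)

variable {G φ} (hG0 : ∀ a b, G a b 0 = a) (hG1 : ∀ a b, G a b 1 = b)
  (hGb : ∀ a b t, Bt a (G a b t) b) (hGc : ∀ c, Continuous fun p : S × ℝ => G p.1 c p.2)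
  (hφ : Continuous φ) (hi : Function.Injective φ)

theorem contG (hGc : ∀ c, Continuous fun p : S × ℝ => G p.1 c p.2) (a b : S) :
    Continuous (G a b) :=
  (hGc b).comp (by fun_prop : Continuous fun t : ℝ => (a, t))

include hG0 hG1 hGb hGc hφ hi

theorem Etri (p a b c : S) (h : ∀ a', Bt a a' b → ¬ Bt a' p c) :
    E G φ p a b + E G φ p b c = E G φ p a c := by
  have hc := contG hGc a b
  have hc2 := hGc c
  have := chg_square (fun q => φ (G (G a b q.1) c q.2) - φ p)
    ((hφ.comp (hc2.comp (by fun_prop : Continuous fun q : ℝ × ℝ => (G a b q.1, q.2)))).sub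
      continuous_const)
    (fun q hq => h _ (hGb a b q.1) (by
      have := hi (sub_eq_zero.1 hq)
      have h2 := hGb (G a b q.1) c q.2
      rwa [this] at h2))
  simp only [hG0, hG1] at this
  rw [chg_const] at this
  · unfold E; rw [← this]; ring
  · intro hq
    have := hi (sub_eq_zero.1 hq)
    exact h a (Bt.left _ _) (this ▸ Bt.right _ _)

theorem Esq (a b c d : S) (h : ∀ p, Bt a p b → ¬ Bt c p d) :
    E G φ c a b + E G φ b c d = E G φ a c d + E G φ d a b := by
  have hc := contG hGc a b
  have hc2 := contG hGc c d
  have n1 : ∀ s t, φ (G a b s) - φ (G c d t) ≠ 0 := fun s t hq => by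
    have h1 := hi (sub_eq_zero.1 hq)
    have h2 := hGb a b s
    exact h _ h2 (h1 ▸ hGb c d t)
  have := chg_square (fun q => φ (G a b q.1) - φ (G c d q.2)) (by fun_prop) (fun q => n1 _ _)
  simp only [hG0, hG1] at this
  have e1 := chg_neg (fun t => φ a - φ (G c d t)) (by fun_prop)
    (fun t => by have := n1 0 t; rwa [hG0] at this)
  have e2 := chg_neg (fun t => φ b - φ (G c d t)) (by fun_prop)
    (fun t => by have := n1 1 t; rwa [hG1] at this)
  simp only [neg_sub] at e1 e2
  unfold E
  rw [e1, e2, this]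

theorem Eexp (p a b : S) (h : ¬ Bt a p b) :
    Complex.exp (E G φ p a b) = (φ b - φ p) / (φ a - φ p) := by
  have hc := contG hGc a b
  unfold E
  rw [exp_chg _ (by fun_prop), hG0, hG1]
  intro t hq
  have := hi (sub_eq_zero.1 hq)
  exact h (this ▸ hGb a b t)

theorem Eadd (p a b c : S) (hb : Bt a b c) (h : ¬ Bt a p c) :
    E G φ p a b + E G φ p b c = E G φ p a c :=
  Etri hG0 hG1 hGb hGc hφ hi p a b c (fun _ h1 h2 => h (bt1 (bt2 hb h1).1 h2).1)

theorem Erev (p a b : S) (h : ¬ Bt a p b) :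
    E G φ p a b = - E G φ p b a := by
  have h1 := Etri hG0 hG1 hGb hGc hφ hi p a b a (fun a' h1 h2 => h (bt2 h1 h2.symm).1)
  have h2 := Eadd hG0 hG1 hGb hGc hφ hi p a a a (Bt.left _ _)
    (fun h' => h (by rw [h'.eq]; exact Bt.left _ _))
  linear_combination h1 + h2

theorem core (x y z u v : S) (hu : Bt x u y) (hz : Bt x z v)
    (hX : ∀ p, Bt x p y → Bt x p v → p = x) (hux : u ≠ x) (hzx : z ≠ x)
    (hd : ∀ p, Bt u p v → ¬ Bt y p z) : False := by
  have sq := Esq hG0 hG1 hGb hGc hφ hi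
  have tri := Etri hG0 hG1 hGb hGc hφ hi
  have add := Eadd hG0 hG1 hGb hGc hφ hi
  have rev := Erev hG0 hG1 hGb hGc hφ hi
  have ex := Eexp hG0 hG1 hGb hGc hφ hi
  have nu : ¬ Bt y u z := hd u (Bt.left _ _)
  have nz : ¬ Bt u z v := fun h => hd z h (Bt.right _ _)
  have nyuv : ¬ Bt u y v := fun h => hd y h (Bt.left _ _)
  have nvyz : ¬ Bt y v z := hd v (Bt.right _ _)
  have ny : ¬ Bt x y v := fun h => by
    have := hX y (Bt.right _ _) h
    subst this; exact hux hu.eq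
  have nv : ¬ Bt x v y := fun h => by
    have := hX v h (Bt.right _ _)
    subst this; exact hzx hz.eq
  have nzy : ¬ Bt x z y := fun h => hzx (hX z h hz)
  have nxyv : ¬ Bt y x v := fun h => by
    have h1 := (bt1 h hz).2
    exact nu (bt2 h1 hu.symm).1
  have R1 := sq u v y z hd
  have R2 := sq x u y z (fun p h1 h2 => nu (bt2 h2 (bt2 hu h1).2.symm).1)
  have R3 := tri x z v y (fun z' h1 h2 => by
    have h3 := (bt1 hz h1).2
    have h4 := (bt1 h2.symm h3).2
    exact nu (bt2 h4 hu.symm).1)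
  have R4 := sq u v z x (fun p h1 h2 => nz (bt1 h1 (bt2 hz h2.symm).2).1)
  have R5 := tri x u y v (fun u' h1 h2 => by
    have h3 := (bt1 hu h1).2
    have h4 := (bt1 h2.symm h3).2
    exact nz (bt2 h4 hz.symm).1.symm)
  have R6 := sq u y z x (fun p h1 h2 => by
    have h3 := bt1 hu h1
    have := hX p h3.1 (bt2 hz h2.symm).1
    subst this; exact hux h3.2.eq)
  have R7 := sq x y v z (fun p h1 h2 => by
    have h3 := bt1 hz h2.symm
    have := hX p h1 h3.1
    subst this; exact hzx h3.2.eq)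
  have A1 := add z x u y hu nzy
  have R8 := tri y x u v (fun u' h1 h2 => nyuv (bt2 h2 (bt2 hu h1).2).2)
  have R9 := tri v x z y (fun z' h1 h2 => nvyz (bt2 h2 (bt2 hz h1).2).2.symm)
  have A2 := add y v z x hz.symm (fun h => ny h.symm)
  have V1 := rev v x y nv
  have V2 := rev y x v ny
  have V3 := rev v x z (fun h => by
    have := bt_antisymm h hz
    subst this; exact nvyz (Bt.right _ _))
  have V4 := rev v z y (fun h => nvyz h.symm)
  have V5 := rev x y z (fun h => nu (bt2 h hu.symm).1)
  have V6 := rev x y v nxyv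
  have V7 := rev x v z (fun h => hzx (bt_antisymm hz.symm h))
  have hαβ : E G φ y x v + E G φ v y x = E G φ x y v := by
    clear sq tri add rev ex
    grind
  have hexp := congrArg Complex.exp hαβ
  rw [Complex.exp_add, ex _ _ _ ny, ex _ _ _ (fun h => nv h.symm), ex _ _ _ nxyv] at hexp
  have n1 : φ x - φ y ≠ 0 := fun h => ny (by rw [hi (sub_eq_zero.1 h)]; exact Bt.left _ _)
  have n2 : φ y - φ v ≠ 0 := fun h => ny (by rw [hi (sub_eq_zero.1 h)]; exact Bt.right _ _)
  have n3 : φ x - φ v ≠ 0 := fun h => nv (by rw [hi (sub_eq_zero.1 h)]; exact Bt.left _ _)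
  have n4 : φ y - φ x ≠ 0 := fun h => n1 (by linear_combination -h)
  field_simp at hexp
  have : 2 * ((φ x - φ y) * (φ y - φ v) * (φ x - φ v)) = 0 := by
    linear_combination hexp
  simp [n1, n2, n3] at this
end

section
variable {S : Type*} [MetricSpace S]

theorem geo_unique (hB : IsBusemannSpace S) {γ γ' : ℝ → S} {L : ℝ} (hL : 0 ≤ L)
    (h : IsGeodesicOn γ 0 L) (h' : IsGeodesicOn γ' 0 L) (h0 : γ 0 = γ' 0) (h1 : γ L = γ' L)
    (s : ℝ) (hs : s ∈ Set.Icc 0 L) : γ s = γ' s := by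
  rcases hL.eq_or_lt with rfl | hL
  · have : s = 0 := le_antisymm hs.2 hs.1
    rw [this, h0]
  have hc := (hB.2 γ γ' 0 L 0 L hL.le hL.le h h').2 (show (0 : ℝ) ∈ Set.Icc (0 : ℝ) 1 by simp)
      (show (1 : ℝ) ∈ Set.Icc (0 : ℝ) 1 by simp)
    (show 0 ≤ 1 - s / L by rw [sub_nonneg, div_le_one hL]; exact hs.2)
    (div_nonneg hs.1 hL.le) (by ring)
  simp only [smul_eq_mul, mul_zero, mul_one, zero_add, sub_zero, one_mul, zero_mul, sub_self,
    h0, h1, dist_self, add_zero] at hc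
  rw [div_mul_cancel₀ _ hL.ne'] at hc
  exact dist_le_zero.1 hc

theorem geo_bt {γ : ℝ → S} {a b : S} (h : IsGeodesicFromTo γ a b) {s : ℝ}
    (hs : s ∈ Set.Icc 0 (dist a b)) : dist a (γ s) = s ∧ dist (γ s) b = dist a b - s := by
  obtain ⟨h, h0, h1⟩ := h
  have e1 := h 0 (by simp) s hs
  have e2 := h s hs (dist a b) (by simp)
  rw [h0] at e1
  rw [h1] at e2
  rw [e1, e2]
  constructor
  · rw [zero_sub, abs_neg, abs_of_nonneg hs.1]
  · rw [abs_sub_comm, abs_of_nonneg (by linarith [hs.2])]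

theorem mem_of_bt (hB : IsBusemannSpace S) {γ : ℝ → S} {a b w : S}
    (h : IsGeodesicFromTo γ a b) (hw : Bt a w b) : γ (dist a w) = w := by
  obtain ⟨α, hα⟩ := hB.1 a w
  obtain ⟨β, hβ⟩ := hB.1 w b
  unfold Bt at hw
  set r := dist a w with hr
  set δ : ℝ → S := fun t => if t ≤ r then α t else β (t - r) with hδ
  have hr0 : 0 ≤ r := dist_nonneg
  have hq0 : 0 ≤ dist w b := dist_nonneg
  have key : ∀ s ∈ Set.Icc 0 (dist a b), ∀ t ∈ Set.Icc 0 (dist a b), s ≤ t →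
      dist (δ s) (δ t) = t - s := by
    intro s hs t ht hst
    by_cases h1 : t ≤ r
    · simp only [hδ, if_pos h1, if_pos (hst.trans h1)]
      rw [hα.1 s ⟨hs.1, hst.trans h1⟩ t ⟨ht.1, h1⟩, abs_sub_comm, abs_of_nonneg (by linarith)]
    · push Not at h1
      by_cases h2 : s ≤ r
      · simp only [hδ, if_neg h1.not_ge, if_pos h2]
        have e1 := geo_bt hα (s := s) ⟨hs.1, h2⟩
        have e2 := geo_bt hβ (s := t - r) ⟨by linarith, by linarith [ht.2]⟩
        have t1 := dist_triangle (α s) w (β (t - r))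
        have t2 := dist_triangle4 a (α s) (β (t - r)) b
        apply le_antisymm <;> linarith [e1.1, e1.2, e2.1, e2.2]
      · push Not at h2
        simp only [hδ, if_neg h1.not_ge, if_neg h2.not_ge]
        rw [hβ.1 (s - r) ⟨by linarith, by linarith [hs.2]⟩ (t - r)
          ⟨by linarith, by linarith [ht.2]⟩, abs_sub_comm, abs_of_nonneg (by linarith)]
        ring
  have hgeo : IsGeodesicOn δ 0 (dist a b) := by
    intro s hs t ht
    rcases le_total s t with hst | hst
    · rw [key s hs t ht hst, abs_sub_comm, abs_of_nonneg (by linarith)]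
    · rw [dist_comm, key t ht s hs hst, abs_of_nonneg (by linarith)]
  have hδr : δ r = w := by simp only [hδ, le_refl, if_true]; exact hα.2.2
  have hδ0 : δ 0 = a := by simp only [hδ, hr0, if_true]; exact hα.2.1
  have hδ1 : δ (dist a b) = b := by
    by_cases hc : dist a b ≤ r
    · have : dist w b = 0 := by linarith
      have hwb := dist_eq_zero.1 this
      have : dist a b = r := by linarith
      rw [this, hδr, hwb]
    · simp only [hδ, if_neg hc]
      rw [← hw, add_sub_cancel_left]; exact hβ.2.2
  rw [← hδr]
  exact geo_unique hB dist_nonneg h.1 hgeo (h.2.1.trans hδ0.symm) (h.2.2.trans hδ1.symm) r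
    ⟨hr0, by linarith⟩

theorem bt_order (hB : IsBusemannSpace S) {a b p q : S} (hp : Bt a p b) (hq : Bt a q b) :
    Bt a p q ∨ Bt a q p := by
  obtain ⟨γ, hγ⟩ := hB.1 a b
  have e1 := mem_of_bt hB hγ hp
  have e2 := mem_of_bt hB hγ hq
  have hp' := hp
  have hq' := hq
  unfold Bt at hp' hq'
  have d := hγ.1 (dist a p) ⟨dist_nonneg, by linarith [dist_nonneg (x := p) (y := b)]⟩
    (dist a q) ⟨dist_nonneg, by linarith [dist_nonneg (x := q) (y := b)]⟩
  rw [e1, e2] at d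
  unfold Bt
  rcases le_total (dist a p) (dist a q) with h | h
  · left; rw [d, abs_sub_comm, abs_of_nonneg (by linarith)]; ring
  · right; rw [dist_comm q p, d, abs_of_nonneg (by linarith)]; ring

/-- clamp to the unit interval -/
noncomputable def cl (t : ℝ) : ℝ := max 0 (min 1 t)

theorem cl_mem (t : ℝ) : cl t ∈ Set.Icc (0 : ℝ) 1 :=
  ⟨le_max_left _ _, max_le zero_le_one (min_le_left _ _)⟩

theorem cl_cont : Continuous cl := by unfold cl; fun_prop

theorem main (hS : IsBusemannSurface S) (x y z u v : S) (hu : Bt x u y) (hz : Bt x z v)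
    (hd : ∀ p, Bt u p v → ¬ Bt y p z) : False := by
  obtain ⟨hB, ⟨ψ⟩⟩ := hS
  choose γ hγ using hB.1
  set G : S → S → ℝ → S := fun a b t => γ a b (cl t * dist a b) with hG
  have hmem : ∀ (a b : S) (t : ℝ), cl t * dist a b ∈ Set.Icc 0 (dist a b) := fun a b t =>
    ⟨mul_nonneg (cl_mem t).1 dist_nonneg, mul_le_of_le_one_left dist_nonneg (cl_mem t).2⟩
  have hG0 : ∀ a b, G a b 0 = a := fun a b => by simp [hG, cl, (hγ a b).2.1]
  have hG1 : ∀ a b, G a b 1 = b := fun a b => by simp [hG, cl, (hγ a b).2.2]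
  have hGb : ∀ a b t, Bt a (G a b t) b := fun a b t => by
    have := geo_bt (hγ a b) (hmem a b t)
    unfold Bt
    simp only [hG]
    linarith [this.1, this.2]
  have hGl : ∀ a a' c t, dist (G a c t) (G a' c t) ≤ dist a a' := fun a a' c t => by
    have hm := cl_mem t
    have hc := (hB.2 (γ a c) (γ a' c) 0 (dist a c) 0 (dist a' c) dist_nonneg dist_nonneg
      (hγ a c).1 (hγ a' c).1).2 (show (0 : ℝ) ∈ Set.Icc (0 : ℝ) 1 by simp)
      (show (1 : ℝ) ∈ Set.Icc (0 : ℝ) 1 by simp)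
      (show 0 ≤ 1 - cl t by linarith [hm.2]) hm.1 (by ring)
    simp only [smul_eq_mul, mul_zero, mul_one, zero_add, sub_zero, one_mul, zero_mul, sub_self,
      (hγ _ _).2.1, (hγ _ _).2.2, dist_self, add_zero] at hc
    refine hc.trans (mul_le_of_le_one_left dist_nonneg (by linarith [hm.1]))
  have hGt : ∀ a c t t', dist (G a c t) (G a c t') = |cl t - cl t'| * dist a c :=
    fun a c t t' => by
    rw [(hγ a c).1 _ (hmem a c t) _ (hmem a c t'), ← sub_mul, abs_mul, abs_of_nonneg dist_nonneg]
  have hGc : ∀ c, Continuous fun p : S × ℝ => G p.1 c p.2 := fun c => by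
    rw [continuous_iff_continuousAt]
    rintro ⟨a, t⟩
    unfold ContinuousAt
    rw [tendsto_iff_dist_tendsto_zero]
    have hcl := cl_cont
    have hlim : Continuous fun p : S × ℝ => dist p.1 a + |cl p.2 - cl t| * dist a c := by
      fun_prop
    have hl := hlim.tendsto (a, t)
    simp only [dist_self, sub_self, abs_zero, zero_mul, add_zero] at hl
    refine squeeze_zero (fun _ => dist_nonneg) (fun p => ?_) hl
    calc _ ≤ dist (G p.1 c p.2) (G a c p.2) + dist (G a c p.2) (G a c t) := dist_triangle _ _ _
      _ ≤ _ := by rw [hGt]; gcongr; exact hGl _ _ _ _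
  set φ : S → ℂ := fun s => Complex.equivRealProdCLM.symm (ψ s) with hφd
  have hφ : Continuous φ := by fun_prop
  have hi : Function.Injective φ :=
    Complex.equivRealProdCLM.symm.injective.comp ψ.injective
  have n1 : ¬ Bt x u v := fun h => by
    rcases bt_order hB h hz with h1 | h1
    · exact hd z (bt2 hz h1).2 (Bt.right _ _)
    · exact hd u (Bt.left _ _) (bt2 hu h1).2.symm
  have n2 : ¬ Bt x z y := fun h => by
    rcases bt_order hB h hu with h1 | h1
    · exact hd u (Bt.left _ _) (bt2 hu h1).2.symm
    · exact hd z (bt2 hz h1).2 (Bt.right _ _)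
  have hK : IsCompact {p | Bt x p y ∧ Bt x p v} := by
    have hc : IsCompact (G x y '' Set.Icc 0 1) := isCompact_Icc.image (contG hGc x y)
    refine hc.of_isClosed_subset ?_ ?_
    · exact (isClosed_eq (by fun_prop) (by fun_prop)).inter
        (isClosed_eq (by fun_prop) (by fun_prop))
    · rintro p ⟨hp, -⟩
      have e := mem_of_bt hB (hγ x y) hp
      unfold Bt at hp
      have hle : dist x p ≤ dist x y := by linarith [dist_nonneg (x := p) (y := y)]
      have hm : dist x p / dist x y ∈ Set.Icc (0 : ℝ) 1 :=
        ⟨by positivity, div_le_one_of_le₀ hle dist_nonneg⟩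
      refine ⟨dist x p / dist x y, hm, ?_⟩
      have : cl (dist x p / dist x y) = dist x p / dist x y := by
        unfold cl; rw [min_eq_right hm.2, max_eq_right hm.1]
      simp only [hG, this]
      rw [div_mul_cancel_of_imp, e]
      intro h0
      rw [h0] at hle
      exact le_antisymm hle dist_nonneg
  obtain ⟨w, ⟨hwy, hwv⟩, hmax⟩ := hK.exists_isMaxOn ⟨x, Bt.left _ _, Bt.left _ _⟩
    (f := fun p => dist x p) (by fun_prop)
  have hwu : Bt x w u := (bt_order hB hwy hu).resolve_right fun h => n1 (bt2 hwv h).1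
  have hwz : Bt x w z := (bt_order hB hwv hz).resolve_right fun h => n2 (bt2 hwy h).1
  refine core hG0 hG1 hGb hGc hφ hi w y z u v (bt2 hu hwu).2 (bt2 hz hwz).2 ?_ ?_ ?_ hd
  · intro p h1 h2
    have h3 := bt1 hwy h1
    have h4 := hmax (show p ∈ {p | Bt x p y ∧ Bt x p v} from ⟨h3.1, (bt1 hwv h2).1⟩)
    have h5 := h3.2
    unfold Bt at h5
    simp only [Set.mem_setOf_eq] at h4
    exact (dist_le_zero.1 (by linarith)).symm
  · rintro rfl; exact n1 hwv
  · rintro rfl; exact n2 hwy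

end
end PaschAux

/-- Pasch axiom: if `u ∈ [x,y]` and `z ∈ [x,v]`, then `[u,v] ∩ [y,z] ≠ ∅`. -/
theorem busemann_surface_pasch {S : Type*} [MetricSpace S]
    (hS : IsBusemannSurface S)
    (seg : S → S → Set S) (hseg : ∀ x y : S, IsGeodesicSegment x y (seg x y))
    (x y z u v : S) (hu : u ∈ seg x y) (hz : z ∈ seg x v) :
    (seg u v ∩ seg y z).Nonempty := by
  obtain ⟨hB, -⟩ := id hS
  have hbt : ∀ a b p : S, p ∈ seg a b ↔ PaschAux.Bt a p b := by
    intro a b p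
    obtain ⟨γ, hγ, hs⟩ := hseg a b
    rw [hs]
    constructor
    · rintro ⟨s, hs, rfl⟩
      have := PaschAux.geo_bt hγ hs
      unfold PaschAux.Bt
      linarith [this.1, this.2]
    · intro hp
      refine ⟨dist a p, ⟨dist_nonneg, ?_⟩, PaschAux.mem_of_bt hB hγ hp⟩
      unfold PaschAux.Bt at hp
      linarith [dist_nonneg (x := p) (y := b)]
  by_contra hne
  refine PaschAux.main hS x y z u v ((hbt _ _ _).1 hu) ((hbt _ _ _).1 hz) fun p h1 h2 => ?_
  exact hne ⟨p, (hbt _ _ _).2 h1, (hbt _ _ _).2 h2⟩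
end
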